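/- arXiv:2512.19324 — 5 statements merged into one kernel-verified Lean document; each statement's English description precedes it below -/
import Mathlib

section
/- Let q be a prime power and let n, d be integers with 1 ≤ d ≤ n. Let C be a set of symmetric n×n matrices over F_q with at least two elements such that rank(A − B) ≥ d for all distinct A, B ∈ C (a d-code in S_n(q)); when d is even, assume additionally that C is closed under matrix addition (i.e., C is a subgroup of the additive group of S_n(q)). Then |C| ≤ q^{n(n−d+2)/2} if n − d is even, and |C| ≤ q^{(n+1)(n−d+1)/2} if n − d is odd. -/
/-!
The proof uses the Fourier transform on the group `G` of symmetric matrices. A character of `G` has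
the form `X ↦ χ (tr (X Yᵀ))` for a fixed primitive character `χ` of `F` and some matrix `Y`
(`exists_chr`), and it depends on `Y` only through the quadratic form `v ↦ vᵀ Y v`. Let `FT χ h Y`
be the transform of the rank function `X ↦ h (rank X)`.

**Recursion.** For `n ≥ 3` the quadratic form has an isotropic vector by Chevalley–Warning. Moving
it to the last basis vector and summing out the last row and column of `X` turns `FT χ h Y` into a
transform in size `n - 1` of `extOp q n h` (isotropic vector in the radical of the polar form), or,
after removing a hyperbolic plane, into a transform in size `n - 2` of `hypOp q h`
(`FT_recursion`).

**Weights.** Group the ranks in pairs, `{2i-1, 2i}` or `{2i, 2i+1}`, and let `wt ε q n j` be the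
Gaussian binomial `[N - i choose j]` with base `q²` on the `i`-th pair, where `N = ⌊(n + ε) / 2⌋`.
By the two Pascal rules, both operators send such a weight to a combination of such weights whose
coefficients are powers of `q`. Hence, by induction on `n`, for `ε = 1` all transforms are
non-negative and the trivial one is explicit (`FT_wt_one_nat`, `FT_wt_one_zero`), and for `ε = 0`
all transforms are divisible by an explicit power `q ^ e` (`FT_wt_zero_dvd`).

**Bounds.** Choose `j` so that the weight vanishes on all ranks `≥ d`. For odd `d`, the weight with
`ε = 1` is an optimal certificate for Delsarte's linear programming bound (`lp_bound`). For even
`d`, the code is a subgroup `H`, and Poisson summation (`subgroup_dvd`) shows that `|H| q ^ e`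
divides `|G| f(0)`, where `f(0)`, the value of the weight at rank `0`, is `≡ 1` modulo `q`; as `|H|`
is composed of prime factors of `q`, it follows that `|H| q ^ e` divides `|G|`.
-/

open Matrix Module
set_option linter.unusedSectionVars false

/-! ### Rank of a bordered symmetric matrix -/

section RankLemmas
variable {F : Type*} [Field F] {m κ : Type*} [Fintype m] [Fintype κ]

open Classical in
/-- Appending a column raises the rank exactly when the column is outside the column space. -/
lemma rank_fromCols_replicateCol (A : Matrix m κ F) (x : m → F) :
    (fromCols A (replicateCol Unit x)).rank
      = A.rank + if ∃ w, A *ᵥ w = x then 0 else 1 := by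
  have hr : Set.range (fromCols A (replicateCol Unit x)).col = Set.range A.col ∪ {x} := by
    ext y
    constructor
    · rintro ⟨k | k, rfl⟩
      · exact Or.inl ⟨k, rfl⟩
      · exact Or.inr rfl
    · rintro (⟨k, rfl⟩ | rfl)
      · exact ⟨Sum.inl k, rfl⟩
      · exact ⟨Sum.inr (), rfl⟩
  have hmem : (∃ w, A *ᵥ w = x) ↔ x ∈ Submodule.span F (Set.range A.col) := by
    rw [← Matrix.range_mulVecLin]; rfl
  rw [rank_eq_finrank_span_cols, rank_eq_finrank_span_cols, hr, Submodule.span_union]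
  split_ifs with h
  · rw [hmem] at h
    rw [sup_eq_left.mpr]
    · rfl
    · rwa [Submodule.span_singleton_le_iff_mem]
  · rw [hmem] at h
    exact Submodule.finrank_sup_span_singleton h

/-- The matrix obtained from `X₀` by appending `x` both as a row and as a column, and the
diagonal entry `z`; it is symmetric when `X₀` is. -/
def bord (X₀ : Matrix κ κ F) (x : κ → F) (z : F) : Matrix (κ ⊕ Unit) (κ ⊕ Unit) F :=
  fromBlocks X₀ (replicateCol Unit x) (replicateRow Unit x) (of fun _ _ => z)

lemma bord_eq_fromCols (X₀ : Matrix κ κ F) (x : κ → F) (z : F) :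
    bord X₀ x z = fromCols (fromRows X₀ (replicateRow Unit x))
      (replicateCol Unit (Sum.elim x fun _ => z)) := by
  ext (i | i) (j | j) <;> rfl

open Classical in
lemma rank_bord (X₀ : Matrix κ κ F) (hX : X₀.IsSymm) (x : κ → F) (z : F) :
    (bord X₀ x z).rank = X₀.rank + (if ∃ w, X₀ *ᵥ w = x then 0 else 1)
      + if ∃ w, X₀ *ᵥ w = x ∧ x ⬝ᵥ w = z then 0 else 1 := by
  have h1 : (fromRows X₀ (replicateRow Unit x)).rank
      = X₀.rank + (if ∃ w, X₀ *ᵥ w = x then 0 else 1) := by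
    rw [← rank_transpose, transpose_fromRows, hX.eq, transpose_replicateRow,
      rank_fromCols_replicateCol]
  have h2 : ∀ w, fromRows X₀ (replicateRow Unit x) *ᵥ w = Sum.elim x (fun _ => z)
      ↔ X₀ *ᵥ w = x ∧ x ⬝ᵥ w = z := by
    intro w
    rw [fromRows_mulVec]
    constructor
    · intro h
      exact ⟨funext fun i => congrFun h (Sum.inl i), congrFun h (Sum.inr ())⟩
    · rintro ⟨ha, hb⟩
      ext (i | i)
      · exact congrFun ha i
      · exact hb
  rw [bord_eq_fromCols, rank_fromCols_replicateCol, h1]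
  simp only [h2]

lemma rank_bord_of_not_mem (X₀ : Matrix κ κ F) (hX : X₀.IsSymm) (x : κ → F) (z : F)
    (h : ¬ ∃ w, X₀ *ᵥ w = x) : (bord X₀ x z).rank = X₀.rank + 2 := by
  classical
  have h' : ¬ ∃ w, X₀ *ᵥ w = x ∧ x ⬝ᵥ w = z := fun ⟨w, hw, _⟩ => h ⟨w, hw⟩
  rw [rank_bord X₀ hX, if_neg h, if_neg h']

open Classical in
lemma rank_bord_of_mem (X₀ : Matrix κ κ F) (hX : X₀.IsSymm) (x : κ → F) (z : F) (w : κ → F)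
    (h : X₀ *ᵥ w = x) :
    (bord X₀ x z).rank = X₀.rank + if z = x ⬝ᵥ w then 0 else 1 := by
  have h' : (∃ w, X₀ *ᵥ w = x ∧ x ⬝ᵥ w = z) ↔ z = x ⬝ᵥ w := by
    constructor
    · rintro ⟨w', hwx, rfl⟩
      -- symmetry makes `x ⬝ᵥ w` independent of the preimage `w` of `x`
      nth_rw 1 [← h]
      nth_rw 1 [← hwx]
      rw [dotProduct_comm, dotProduct_mulVec, ← mulVec_transpose, hX.eq]
    · rintro rfl
      exact ⟨w, h, rfl⟩
  rw [rank_bord X₀ hX, if_pos ⟨w, h⟩]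
  simp only [h', add_zero]

end RankLemmas

/-! ### Fourier transforms of rank functions -/

section Fourier
variable {F : Type} [Field F] [Fintype F] {ι κ : Type} [Fintype ι] [Fintype κ]
  [DecidableEq ι] [DecidableEq κ]

/-- The additive group of symmetric matrices. -/
def symG (ι F : Type) [Field F] : AddSubgroup (Matrix ι ι F) where
  carrier := {X | X.IsSymm}
  add_mem' := fun ha hb => IsSymm.add ha hb
  zero_mem' := isSymm_zero
  neg_mem' := fun ha => IsSymm.neg ha

noncomputable instance : Fintype (symG ι F) := Fintype.ofFinite _

/-- Unnormalised Fourier transform of the function `X ↦ h (rank X)` on symmetric matrices.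
The frequency is an arbitrary matrix `Y`, acting through `X ↦ χ (tr (X Yᵀ))`; this only depends
on the quadratic form `v ↦ vᵀ Y v`, so all characters are covered in every characteristic. -/
noncomputable def FT (χ : AddChar F ℂ) (h : ℕ → ℤ) (Y : Matrix ι ι F) : ℂ :=
  ∑ X : symG ι F, (h (X : Matrix ι ι F).rank : ℂ) * χ (((X : Matrix ι ι F) * Yᵀ).trace)

lemma FT_congr (χ : AddChar F ℂ) {h h' : ℕ → ℤ} (Y : Matrix ι ι F)
    (hh : ∀ s ≤ Fintype.card ι, h s = h' s) : FT χ h Y = FT χ h' Y := by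
  unfold FT
  refine Finset.sum_congr rfl fun X _ => ?_
  rw [hh _ (rank_le_card_width _)]

/-- The congruence `X ↦ P X Pᵀ` for an invertible `P` with inverse `Q`. -/
def congrEquiv (P : Matrix κ ι F) (Q : Matrix ι κ F) (hPQ : P * Q = 1) (hQP : Q * P = 1) :
    symG ι F ≃ symG κ F where
  toFun X := ⟨P * X.1 * Pᵀ, by
    have hX : X.1ᵀ = X.1 := X.2
    change (P * X.1 * Pᵀ)ᵀ = _
    simp [transpose_mul, hX, Matrix.mul_assoc]⟩
  invFun X := ⟨Q * X.1 * Qᵀ, by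
    have hX : X.1ᵀ = X.1 := X.2
    change (Q * X.1 * Qᵀ)ᵀ = _
    simp [transpose_mul, hX, Matrix.mul_assoc]⟩
  left_inv X := by
    apply Subtype.ext
    change Q * (P * X.1 * Pᵀ) * Qᵀ = X.1
    have hQP' : Pᵀ * Qᵀ = 1 := by rw [← transpose_mul, hQP, transpose_one]
    calc _ = (Q * P) * X.1 * (Pᵀ * Qᵀ) := by simp only [Matrix.mul_assoc]
      _ = X.1 := by rw [hQP, hQP', Matrix.one_mul, Matrix.mul_one]
  right_inv X := by
    apply Subtype.ext
    change P * (Q * X.1 * Qᵀ) * Pᵀ = X.1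
    have hPQ' : Qᵀ * Pᵀ = 1 := by rw [← transpose_mul, hPQ, transpose_one]
    calc _ = (P * Q) * X.1 * (Qᵀ * Pᵀ) := by simp only [Matrix.mul_assoc]
      _ = X.1 := by rw [hPQ, hPQ', Matrix.one_mul, Matrix.mul_one]

section congrEquiv
variable (P : Matrix κ ι F) (Q : Matrix ι κ F) (hPQ : P * Q = 1) (hQP : Q * P = 1)

lemma congrEquiv_spec (X : symG ι F) : X.1 = Q * (congrEquiv P Q hPQ hQP X).1 * Qᵀ :=
  (congrArg Subtype.val ((congrEquiv P Q hPQ hQP).left_inv X)).symm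

lemma rank_congrEquiv (X : symG ι F) : (congrEquiv P Q hPQ hQP X).1.rank = X.1.rank := by
  apply le_antisymm
  · exact (rank_mul_le_left _ _).trans (rank_mul_le_right _ _)
  · conv_lhs => rw [congrEquiv_spec P Q hPQ hQP X]
    exact (rank_mul_le_left _ _).trans (rank_mul_le_right _ _)

lemma trace_congrEquiv (X : symG ι F) (Y : Matrix ι ι F) :
    (X.1 * Yᵀ).trace = ((congrEquiv P Q hPQ hQP X).1 * (Qᵀ * Y * Q)ᵀ).trace := by
  conv_lhs => rw [congrEquiv_spec P Q hPQ hQP X]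
  rw [Matrix.mul_assoc, Matrix.mul_assoc, trace_mul_comm]
  simp only [transpose_mul, transpose_transpose, Matrix.mul_assoc]

end congrEquiv

lemma FT_congruence (χ : AddChar F ℂ) (h : ℕ → ℤ) (Y : Matrix ι ι F)
    (P : Matrix κ ι F) (Q : Matrix ι κ F) (hPQ : P * Q = 1) (hQP : Q * P = 1) :
    FT χ h Y = FT χ h (Qᵀ * Y * Q) := by
  unfold FT
  refine Fintype.sum_equiv (congrEquiv P Q hPQ hQP) _ _ fun X => ?_
  rw [rank_congrEquiv, trace_congrEquiv P Q hPQ hQP]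

/-- The decomposition of a symmetric matrix into a principal block, a column and a diagonal
entry. -/
def bordEquiv : symG κ F × (κ → F) × F ≃ symG (κ ⊕ Unit) F where
  toFun t := ⟨bord t.1 t.2.1 t.2.2, by
    have hX : (t.1 : Matrix κ κ F)ᵀ = t.1 := t.1.2
    change (bord _ _ _)ᵀ = _
    simp only [bord, fromBlocks_transpose, hX]
    rfl⟩
  invFun X := (⟨X.1.toBlocks₁₁, by
      ext i j; exact congrFun (congrFun X.2 (Sum.inl i)) (Sum.inl j)⟩,
    fun k => X.1 (Sum.inl k) (Sum.inr ()),
    X.1 (Sum.inr ()) (Sum.inr ()))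
  left_inv t := rfl
  right_inv X := by
    apply Subtype.ext
    ext (i | i) (j | j)
    · rfl
    · rfl
    · exact congrFun (congrFun X.2 (Sum.inr i)) (Sum.inl j)
    · rfl

lemma trace_bord (X₀ : Matrix κ κ F) (x : κ → F) (z : F) (Y : Matrix (κ ⊕ Unit) (κ ⊕ Unit) F) :
    (bord X₀ x z * Yᵀ).trace = (X₀ * (Y.toBlocks₁₁)ᵀ).trace
      + (x ⬝ᵥ fun k => Y (Sum.inl k) (Sum.inr ()) + Y (Sum.inr ()) (Sum.inl k))
      + z * Y (Sum.inr ()) (Sum.inr ()) := by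
  simp only [bord, trace, diag, mul_apply, Fintype.sum_sum_type, transpose_apply, dotProduct,
    toBlocks₁₁, fromBlocks_apply₁₁, fromBlocks_apply₁₂, fromBlocks_apply₂₁, fromBlocks_apply₂₂,
    replicateCol_apply, replicateRow_apply, of_apply, Finset.univ_unique, Finset.sum_singleton,
    mul_add, Finset.sum_add_distrib]
  simp only [PUnit.default_eq_unit]
  ring
end Fourier

/-! ### Summing out the last row and column -/

section Step
variable {F : Type} [Field F] [Fintype F] {κ : Type} [Fintype κ] [DecidableEq κ]

open Classical in
lemma sum_submodule (χ : AddChar F ℂ) (hχ : χ.IsPrimitive) (W : Submodule F (κ → F)) (u : κ → F) :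
    ∑ x : κ → F, (if x ∈ W then χ (x ⬝ᵥ u) else 0)
      = if ∀ x ∈ W, x ⬝ᵥ u = 0 then (Fintype.card F : ℂ) ^ finrank F W else 0 := by
  let φ : W →+ F :=
    { toFun := fun x => x.1 ⬝ᵥ u
      map_zero' := zero_dotProduct _
      map_add' := fun x y => add_dotProduct _ _ _ }
  have h0 : χ.compAddMonoidHom φ = 0 ↔ ∀ x ∈ W, x ⬝ᵥ u = 0 := by
    constructor
    · intro h x hx
      by_contra hne
      apply hχ hne
      ext t
      have := DFunLike.congr_fun h (⟨t • x, W.smul_mem t hx⟩ : W)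
      simpa [φ, AddChar.mulShift_apply, smul_dotProduct, mul_comm] using this
    · intro h
      ext x
      simp [φ, h x.1 x.2]
  have h1 : ∑ x : κ → F, (if x ∈ W then χ (x ⬝ᵥ u) else 0)
      = ∑ x : W, χ.compAddMonoidHom φ x := by
    rw [← Finset.sum_filter]
    exact (Finset.sum_subtype _ (by simp) _)
  rw [h1, AddChar.sum_eq_ite]
  simp only [h0]
  congr 1
  rw [Module.card_eq_pow_finrank (K := F) (V := W)]
  push_cast
  rfl

open Classical in
lemma sum_char_dotProduct (χ : AddChar F ℂ) (hχ : χ.IsPrimitive) (u : κ → F) :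
    ∑ x : κ → F, χ (x ⬝ᵥ u)
      = if u = 0 then (Fintype.card F : ℂ) ^ Fintype.card κ else 0 := by
  have := sum_submodule χ hχ ⊤ u
  simp only [Submodule.mem_top, if_true, forall_const, finrank_top, finrank_fintype_fun_eq_card]
    at this
  rw [this]
  have : (∀ x : κ → F, x ⬝ᵥ u = 0) ↔ u = 0 := by
    constructor
    · intro h
      exact dotProduct_eq_zero u fun w => by rw [dotProduct_comm]; exact h w
    · rintro rfl x
      exact dotProduct_zero x
  simp only [this]

open Classical in
/-- Character sum over the column space of a symmetric matrix, whose orthogonal complement is the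
kernel. -/
lemma sum_range (χ : AddChar F ℂ) (hχ : χ.IsPrimitive) (A : Matrix κ κ F) (hA : A.IsSymm)
    (u : κ → F) :
    ∑ x : κ → F, (if ∃ w, A *ᵥ w = x then χ (x ⬝ᵥ u) else 0)
      = if A *ᵥ u = 0 then (Fintype.card F : ℂ) ^ A.rank else 0 := by
  have := sum_submodule χ hχ (LinearMap.range A.mulVecLin) u
  have h2 : (∀ x ∈ LinearMap.range A.mulVecLin, x ⬝ᵥ u = 0) ↔ A *ᵥ u = 0 := by
    constructor
    · intro h
      refine dotProduct_eq_zero _ fun w => ?_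
      have := h _ ⟨w, rfl⟩
      rw [mulVecLin_apply] at this
      rw [dotProduct_comm, dotProduct_mulVec, ← mulVec_transpose, hA.eq, this]
    · rintro h x ⟨w, rfl⟩
      rw [mulVecLin_apply, dotProduct_comm, dotProduct_mulVec, ← mulVec_transpose, hA.eq, h,
        zero_dotProduct]
  rw [if_congr h2 rfl rfl] at this
  convert this using 3
  · rfl
  · rfl

open Classical in
/-- Summing out the new diagonal entry. -/
lemma sum_diag_entry (h : ℕ → ℤ) (X₀ : Matrix κ κ F) (hX : X₀.IsSymm) (x : κ → F) :
    ∑ z : F, (h (bord X₀ x z).rank : ℂ)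
      = (Fintype.card F : ℂ) * h (X₀.rank + 2)
        + if ∃ w, X₀ *ᵥ w = x then (h X₀.rank + ((Fintype.card F : ℂ) - 1) * h (X₀.rank + 1)
          - (Fintype.card F : ℂ) * h (X₀.rank + 2)) else 0 := by
  split_ifs with hw
  · obtain ⟨w, hw⟩ := hw
    have : ∀ z : F, (h (bord X₀ x z).rank : ℂ)
        = h (X₀.rank + 1) + if z = x ⬝ᵥ w then (h X₀.rank - h (X₀.rank + 1) : ℂ) else 0 := by
      intro z
      rw [rank_bord_of_mem X₀ hX x z w hw]
      split_ifs <;> simp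
    simp only [this, Finset.sum_add_distrib, Finset.sum_ite_eq', Finset.mem_univ, if_true,
      Finset.sum_const, Finset.card_univ, nsmul_eq_mul]
    ring
  · simp only [rank_bord_of_not_mem X₀ hX x _ hw, Finset.sum_const, Finset.card_univ,
      nsmul_eq_mul, add_zero]

open Classical in
/-- Summing out the last row and column of `X` when the last basis vector is isotropic for the
quadratic form `Y`. -/
lemma FT_block (χ : AddChar F ℂ) (hχ : χ.IsPrimitive) (h : ℕ → ℤ)
    (Y : Matrix (κ ⊕ Unit) (κ ⊕ Unit) F) (hc : Y (Sum.inr ()) (Sum.inr ()) = 0) (u : κ → F)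
    (hu : u = fun k => Y (Sum.inl k) (Sum.inr ()) + Y (Sum.inr ()) (Sum.inl k)) :
    FT χ h Y = ∑ X₀ : symG κ F, χ ((X₀.1 * (Y.toBlocks₁₁)ᵀ).trace) *
      ((h X₀.1.rank + ((Fintype.card F : ℂ) - 1) * h (X₀.1.rank + 1)
          - (Fintype.card F : ℂ) * h (X₀.1.rank + 2))
          * (if X₀.1 *ᵥ u = 0 then (Fintype.card F : ℂ) ^ X₀.1.rank else 0)
        + (Fintype.card F : ℂ) * h (X₀.1.rank + 2)
          * (if u = 0 then (Fintype.card F : ℂ) ^ Fintype.card κ else 0)) := by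
  unfold FT
  rw [← (bordEquiv (κ := κ) (F := F)).sum_comp, Fintype.sum_prod_type]
  refine Finset.sum_congr rfl fun X₀ _ => ?_
  rw [Fintype.sum_prod_type]
  have key : ∀ x : κ → F, ∑ z : F, (h (bordEquiv (X₀, x, z)).1.rank : ℂ)
        * χ (((bordEquiv (X₀, x, z)).1 * Yᵀ).trace)
      = χ ((X₀.1 * (Y.toBlocks₁₁)ᵀ).trace) * (χ (x ⬝ᵥ u) * ∑ z : F, (h (bord X₀.1 x z).rank : ℂ)) := by
    intro x
    rw [Finset.mul_sum, Finset.mul_sum]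
    refine Finset.sum_congr rfl fun z _ => ?_
    change (h (bord X₀.1 x z).rank : ℂ) * χ ((bord X₀.1 x z * Yᵀ).trace) = _
    rw [trace_bord, hc, mul_zero, add_zero, ← hu, AddChar.map_add_eq_mul]
    ring
  simp only [key]
  rw [← Finset.mul_sum]
  congr 1
  simp only [sum_diag_entry h X₀.1 X₀.2]
  rw [← sum_range χ hχ X₀.1 X₀.2, ← sum_char_dotProduct χ hχ, Finset.mul_sum, Finset.mul_sum,
    ← Finset.sum_add_distrib]
  refine Finset.sum_congr rfl fun x _ => ?_
  split_ifs <;> ring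
end Step

/-! ### The recursion along an isotropic vector -/

section Recursion
variable {F : Type} [Field F] [Fintype F]

lemma exists_invertible_lastCol {n : ℕ} (v : Fin (n + 1) → F) (hv : v ≠ 0) :
    ∃ (P : Matrix (Fin n ⊕ Unit) (Fin (n + 1)) F) (Q : Matrix (Fin (n + 1)) (Fin n ⊕ Unit) F),
      P * Q = 1 ∧ Q * P = 1 ∧ ∀ i, Q i (Sum.inr ()) = v i := by
  obtain ⟨i₀, hi₀⟩ := Function.ne_iff.mp hv
  let σ : Fin n ⊕ Unit ≃ Fin (n + 1) :=
    ((finSuccEquiv' i₀).trans (Equiv.optionEquivSumPUnit (Fin n))).symm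
  have hσ : σ (Sum.inr ()) = i₀ := by simp [σ]
  let R : Matrix (Fin (n + 1)) (Fin (n + 1)) F := (1 : Matrix _ _ F).updateCol i₀ v
  have hdet : R.det = v i₀ := by
    have := cramer_apply (1 : Matrix (Fin (n + 1)) (Fin (n + 1)) F) v i₀
    rw [cramer_one] at this
    exact this.symm
  have hu : IsUnit R.det := by rw [hdet]; exact isUnit_iff_ne_zero.mpr hi₀
  refine ⟨R⁻¹.submatrix σ id, R.submatrix id σ, ?_, ?_, fun i => ?_⟩
  · have := submatrix_mul R⁻¹ R σ id σ Function.bijective_id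
    rw [← this, nonsing_inv_mul _ hu, submatrix_one_equiv]
  · have := submatrix_mul R R⁻¹ id σ id σ.bijective
    rw [← this, mul_nonsing_inv _ hu, submatrix_id_id]
  · simp [R, hσ]

/-- The operator on rank functions induced by summing over all one-step extensions
of a symmetric matrix to size `n`. -/
def extOp (q : ℤ) (n : ℕ) (h : ℕ → ℤ) (s : ℕ) : ℤ :=
  q ^ s * h s + q ^ s * (q - 1) * h (s + 1) + (q ^ n - q ^ (s + 1)) * h (s + 2)

/-- The operator on rank functions induced by splitting off a hyperbolic plane from the
frequency. -/
def hypOp (q : ℤ) (h : ℕ → ℤ) (s : ℕ) : ℤ :=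
  q ^ s * (h s + (q - 1) * h (s + 1) - q * h (s + 2))

/-- The last basis vector is isotropic and lies in the radical of the polar form of `Y`. -/
lemma FT_step_a (χ : AddChar F ℂ) (hχ : χ.IsPrimitive) (h : ℕ → ℤ) {n : ℕ}
    (Y : Matrix (Fin n ⊕ Unit) (Fin n ⊕ Unit) F) (hc : Y (Sum.inr ()) (Sum.inr ()) = 0)
    (hu : ∀ k, Y (Sum.inl k) (Sum.inr ()) + Y (Sum.inr ()) (Sum.inl k) = 0) :
    FT χ h Y = FT χ (extOp (Fintype.card F) (n + 1) h) Y.toBlocks₁₁ := by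
  classical
  rw [FT_block χ hχ h Y hc 0 (funext fun k => (hu k).symm)]
  unfold FT
  refine Finset.sum_congr rfl fun X _ => ?_
  simp only [mulVec_zero, if_true, Fintype.card_fin, extOp]
  push_cast
  ring

/-- The last basis vector is isotropic but pairs non-trivially under the polar form of `Y`: only
those principal blocks survive which kill the pairing vector `u`, and these are symmetric matrices of
size smaller by two. -/
lemma FT_step_b (χ : AddChar F ℂ) (hχ : χ.IsPrimitive) (h : ℕ → ℤ) {n : ℕ}
    (Y : Matrix (Fin (n + 1) ⊕ Unit) (Fin (n + 1) ⊕ Unit) F)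
    (hc : Y (Sum.inr ()) (Sum.inr ()) = 0)
    (hu : ¬ ∀ k, Y (Sum.inl k) (Sum.inr ()) + Y (Sum.inr ()) (Sum.inl k) = 0) :
    ∃ Y₁ : Matrix (Fin n) (Fin n) F, FT χ h Y = FT χ (hypOp (Fintype.card F) h) Y₁ := by
  classical
  set u : Fin (n + 1) → F := fun k => Y (Sum.inl k) (Sum.inr ()) + Y (Sum.inr ()) (Sum.inl k)
    with hudef
  have hu0 : u ≠ 0 := fun h0 => hu fun k => congrFun h0 k
  obtain ⟨P, Q, hPQ, hQP, hQu⟩ := exists_invertible_lastCol u hu0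
  have hPQ' : Qᵀ * Pᵀ = 1 := by rw [← transpose_mul, hPQ, transpose_one]
  have hQP' : Pᵀ * Qᵀ = 1 := by rw [← transpose_mul, hQP, transpose_one]
  let e := congrEquiv Qᵀ Pᵀ hPQ' hQP'
  set Y' := Pᵀᵀ * Y.toBlocks₁₁ * Pᵀ
  -- the radical condition `X u = 0` says that the last column of `Qᵀ X Q` vanishes
  have hker : ∀ X : symG (Fin (n + 1)) F, X.1 *ᵥ u = 0 ↔ ∀ i, (e X).1 i (Sum.inr ()) = 0 := by
    intro X
    have h1 : ∀ i, (e X).1 i (Sum.inr ()) = (Qᵀ *ᵥ (X.1 *ᵥ u)) i := by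
      intro i
      change (Qᵀ * X.1 * Qᵀᵀ) i (Sum.inr ()) = _
      rw [transpose_transpose, mulVec_mulVec]
      rw [Matrix.mul_apply]
      simp only [mulVec, dotProduct, hQu]
    constructor
    · intro h0 i
      rw [h1, h0, mulVec_zero]; rfl
    · intro h0
      have h2 : Qᵀ *ᵥ (X.1 *ᵥ u) = 0 := funext fun i => (h1 i).symm.trans (h0 i)
      calc X.1 *ᵥ u = (Pᵀ * Qᵀ) *ᵥ (X.1 *ᵥ u) := by rw [hQP', one_mulVec]
        _ = 0 := by rw [← mulVec_mulVec, h2, mulVec_zero]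
  refine ⟨Y'.toBlocks₁₁, ?_⟩
  rw [FT_block χ hχ h Y hc u hudef]
  let Φ : symG (Fin n ⊕ Unit) F → ℂ := fun X => χ ((X.1 * Y'ᵀ).trace) *
    if ∀ i, X.1 i (Sum.inr ()) = 0 then (hypOp (Fintype.card F) h X.1.rank : ℂ) else 0
  have hΦ : ∀ X : symG (Fin (n + 1)) F, χ ((X.1 * (Y.toBlocks₁₁)ᵀ).trace) *
      ((h X.1.rank + ((Fintype.card F : ℂ) - 1) * h (X.1.rank + 1)
          - (Fintype.card F : ℂ) * h (X.1.rank + 2))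
          * (if X.1 *ᵥ u = 0 then (Fintype.card F : ℂ) ^ X.1.rank else 0)
        + (Fintype.card F : ℂ) * h (X.1.rank + 2)
          * (if u = 0 then (Fintype.card F : ℂ) ^ Fintype.card (Fin (n + 1)) else 0)) = Φ (e X) := by
    intro X
    simp only [Φ]
    rw [if_neg hu0, trace_congrEquiv Qᵀ Pᵀ hPQ' hQP' X, if_congr (hker X) rfl rfl,
      rank_congrEquiv Qᵀ Pᵀ hPQ' hQP' X]
    congr 1
    unfold hypOp
    split_ifs
    · push_cast; ring
    · ring
  rw [Finset.sum_congr rfl fun X _ => hΦ X, e.sum_comp Φ, ← (bordEquiv (κ := Fin n) (F := F)).sum_comp,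
    Fintype.sum_prod_type]
  unfold FT
  refine Finset.sum_congr rfl fun X _ => ?_
  rw [Finset.sum_eq_single ((0 : Fin n → F), (0 : F))]
  · have hz : ∀ i, (bordEquiv (X, (0 : Fin n → F), (0 : F))).1 i (Sum.inr ()) = 0 := by
      rintro (i | i) <;> rfl
    have hr : (bordEquiv (X, (0 : Fin n → F), (0 : F))).1.rank = X.1.rank := by
      have := rank_bord_of_mem X.1 X.2 0 0 0 (mulVec_zero _)
      rw [if_pos (by simp)] at this
      exact this
    have ht : ((bordEquiv (X, (0 : Fin n → F), (0 : F))).1 * Y'ᵀ).trace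
        = (X.1 * (Y'.toBlocks₁₁)ᵀ).trace := by
      have := trace_bord X.1 0 0 Y'
      rw [zero_dotProduct, zero_mul, add_zero, add_zero] at this
      exact this
    simp only [Φ]
    rw [if_pos hz, hr, ht, mul_comm]
  · rintro ⟨x, z⟩ - hne
    simp only [Φ]
    rw [if_neg, mul_zero]
    intro hz
    apply hne
    refine Prod.ext (funext fun k => hz (Sum.inl k)) (hz (Sum.inr ()))
  · simp

/-- Chevalley–Warning for one quadratic form in at least three variables. -/
lemma exists_isotropic {n : ℕ} (hn : 3 ≤ n) (Y : Matrix (Fin n) (Fin n) F) :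
    ∃ v : Fin n → F, v ≠ 0 ∧ v ⬝ᵥ (Y *ᵥ v) = 0 := by
  classical
  obtain ⟨p, hp⟩ := CharP.exists F
  have := hp
  have : Fact p.Prime := ⟨(CharP.char_is_prime_or_zero F p).resolve_right
    (CharP.char_ne_zero_of_finite F p)⟩
  let f : MvPolynomial (Fin n) F :=
    ∑ i, ∑ j, MvPolynomial.C (Y i j) * (MvPolynomial.X i * MvPolynomial.X j)
  have hev : ∀ v : Fin n → F, MvPolynomial.eval v f = v ⬝ᵥ (Y *ᵥ v) := by
    intro v
    simp only [f, map_sum, map_mul, MvPolynomial.eval_C, MvPolynomial.eval_X, dotProduct, mulVec,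
      Finset.mul_sum]
    refine Finset.sum_congr rfl fun i _ => Finset.sum_congr rfl fun j _ => by ring
  have hdeg : f.totalDegree ≤ 2 := by
    refine MvPolynomial.totalDegree_finsetSum_le fun i _ =>
      MvPolynomial.totalDegree_finsetSum_le fun j _ => ?_
    refine (MvPolynomial.totalDegree_mul _ _).trans ?_
    rw [MvPolynomial.totalDegree_C, zero_add]
    refine (MvPolynomial.totalDegree_mul _ _).trans ?_
    rw [MvPolynomial.totalDegree_X, MvPolynomial.totalDegree_X]
  have hdvd := char_dvd_card_solutions p (f := f) (by rw [Fintype.card_fin]; omega)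
  have h0 : MvPolynomial.eval (0 : Fin n → F) f = 0 := by rw [hev, zero_dotProduct]
  have hpos : 0 < Fintype.card {x : Fin n → F // MvPolynomial.eval x f = 0} :=
    Fintype.card_pos_iff.mpr ⟨⟨0, h0⟩⟩
  have h2 : 1 < Fintype.card {x : Fin n → F // MvPolynomial.eval x f = 0} :=
    (Fact.out : p.Prime).one_lt.trans_le (Nat.le_of_dvd hpos hdvd)
  obtain ⟨w, hw⟩ := Fintype.exists_ne_of_one_lt_card h2 ⟨0, h0⟩
  exact ⟨w.1, fun h => hw (Subtype.ext h), by rw [← hev, w.2]⟩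

/-- Lowering the size by one or two along an isotropic vector. -/
lemma FT_recursion (χ : AddChar F ℂ) (hχ : χ.IsPrimitive) (h : ℕ → ℤ) {n : ℕ} (hn : 1 ≤ n)
    (Y : Matrix (Fin (n + 2)) (Fin (n + 2)) F) :
    (∃ Y₀ : Matrix (Fin (n + 1)) (Fin (n + 1)) F,
      FT χ h Y = FT χ (extOp (Fintype.card F) (n + 2) h) Y₀) ∨
    ∃ Y₁ : Matrix (Fin n) (Fin n) F, FT χ h Y = FT χ (hypOp (Fintype.card F) h) Y₁ := by
  obtain ⟨v, hv, hiso⟩ := exists_isotropic (by omega) Y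
  obtain ⟨P, Q, hPQ, hQP, hQv⟩ := exists_invertible_lastCol v hv
  have hc : (Qᵀ * Y * Q) (Sum.inr ()) (Sum.inr ()) = 0 := by
    rw [← hiso]
    simp only [mul_apply, Finset.sum_mul, transpose_apply, hQv, dotProduct, mulVec, Finset.mul_sum]
    rw [Finset.sum_comm]
    refine Finset.sum_congr rfl fun i _ => Finset.sum_congr rfl fun j _ => by ring
  rw [FT_congruence χ h Y P Q hPQ hQP]
  by_cases hu : ∀ k, (Qᵀ * Y * Q) (Sum.inl k) (Sum.inr ()) + (Qᵀ * Y * Q) (Sum.inr ()) (Sum.inl k) = 0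
  · exact Or.inl ⟨_, FT_step_a χ hχ h _ hc hu⟩
  · exact Or.inr (FT_step_b χ hχ h _ hc hu)

/-- At the zero frequency every vector is isotropic and radical, so the size drops by one for all
`n`. -/
lemma FT_zero_recursion (χ : AddChar F ℂ) (hχ : χ.IsPrimitive) (h : ℕ → ℤ) (n : ℕ) :
    FT χ h (0 : Matrix (Fin (n + 1)) (Fin (n + 1)) F)
      = FT χ (extOp (Fintype.card F) (n + 1) h) (0 : Matrix (Fin n) (Fin n) F) := by
  obtain ⟨P, Q, hPQ, hQP, -⟩ := exists_invertible_lastCol (fun _ : Fin (n + 1) => (1 : F))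
    (fun h0 => one_ne_zero (congrFun h0 0))
  rw [FT_congruence χ h 0 P Q hPQ hQP, FT_step_a χ hχ h _ (by simp) (by simp)]
  congr 1
  ext i j
  simp [toBlocks₁₁]
end Recursion

/-! ### Gaussian binomials and the weights -/

section Gaussian

/-- Gaussian binomial coefficients with base `b`, defined by the first Pascal rule. -/
def gb (b : ℤ) : ℕ → ℕ → ℤ
  | _, 0 => 1
  | 0, _ + 1 => 0
  | M + 1, j + 1 => b ^ (j + 1) * gb b M (j + 1) + gb b M j

@[simp] lemma gb_zero_right (b : ℤ) (M : ℕ) : gb b M 0 = 1 := by cases M <;> rfl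

lemma gb_succ (b : ℤ) (M j : ℕ) :
    gb b (M + 1) (j + 1) = b ^ (j + 1) * gb b M (j + 1) + gb b M j := rfl

lemma gb_eq_zero (b : ℤ) : ∀ {M j : ℕ}, M < j → gb b M j = 0
  | _, 0, h => absurd h (Nat.not_lt_zero _)
  | 0, _ + 1, _ => rfl
  | M + 1, j + 1, h => by
    rw [gb_succ, gb_eq_zero b (by omega : M < j + 1), gb_eq_zero b (by omega : M < j)]; ring

/-- The second Pascal rule. -/
lemma gb_succ' (b : ℤ) (M j : ℕ) :
    gb b (M + 1) (j + 1) = gb b M (j + 1) + b ^ (M - j) * gb b M j := by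
  induction M generalizing j with
  | zero => cases j <;> simp [gb]
  | succ M ih =>
    rw [gb_succ b (M + 1)]
    cases j with
    | zero =>
      have h1 := gb_succ b M 0
      have h2 := ih 0
      simp only [gb_zero_right, Nat.sub_zero] at h1 h2 ⊢
      linear_combination b * h2 - h1
    | succ j =>
      rcases Nat.lt_or_ge M (j + 1) with h | h
      · rw [gb_eq_zero b (by omega : M + 1 < j + 1 + 1), show M + 1 - (j + 1) = 0 by omega]
        ring
      · obtain ⟨k, rfl⟩ := Nat.exists_eq_add_of_le h
        have hA1 := gb_succ b (j + 1 + k) (j + 1)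
        have hA2 := ih (j + 1)
        have hB1 := gb_succ b (j + 1 + k) j
        have hB2 := ih j
        rw [show j + 1 + k - (j + 1) = k by omega] at hA2
        rw [show j + 1 + k - j = k + 1 by omega] at hB2
        rw [show j + 1 + k + 1 - (j + 1) = k + 1 by omega]
        linear_combination b ^ (j + 2) * hA2 - hA1 - b ^ (k + 1) * hB1 + hB2

lemma gb_pos (b : ℤ) (hb : 0 < b) : ∀ {M j : ℕ}, j ≤ M → 0 < gb b M j
  | _, 0, _ => by simp
  | 0, _ + 1, h => by omega
  | M + 1, j + 1, h => by
    rw [gb_succ']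
    have h1 := gb_pos b hb (by omega : j ≤ M)
    have h2 : 0 ≤ gb b M (j + 1) := by
      rcases Nat.lt_or_ge M (j + 1) with h | h
      · rw [gb_eq_zero b h]
      · exact (gb_pos b hb h).le
    positivity

lemma gb_mod (b : ℤ) : ∀ {M j : ℕ}, j ≤ M → b ∣ gb b M j - 1
  | _, 0, _ => by simp
  | 0, _ + 1, h => by omega
  | M + 1, j + 1, h => by
    obtain ⟨k, hk⟩ := gb_mod b (by omega : j ≤ M)
    refine ⟨b ^ j * gb b M (j + 1) + k, ?_⟩
    rw [gb_succ, pow_succ]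
    linear_combination hk

/-- The weight functions of the argument. Ranks are grouped in pairs, `{2i-1, 2i}` for `ε = 1`
and `{2i, 2i+1}` for `ε = 0`; on the `i`-th class the weight is a Gaussian binomial coefficient
with base `q²`. -/
def wt (ε : ℕ) (q : ℤ) (n j s : ℕ) : ℤ := gb (q ^ 2) ((n + ε) / 2 - (s + ε) / 2) j

/-- Action of `extOp` on functions that are constant on the rank pairs. -/
lemma extOp_class (ε : ℕ) (hε : ε ≤ 1) (q : ℤ) (n : ℕ) (φ : ℕ → ℤ) (s : ℕ) :
    extOp q n (fun s => φ ((s + ε) / 2)) s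
      = q ^ (1 - ε) * q ^ (2 * ((s + ε) / 2)) * φ ((s + ε) / 2)
        + (q ^ n - q ^ (1 - ε) * q ^ (2 * ((s + ε) / 2))) * φ ((s + ε) / 2 + 1) := by
  unfold extOp
  beta_reduce
  interval_cases ε <;> obtain ⟨i, rfl | rfl⟩ := Nat.even_or_odd' s
  · rw [show (2 * i + 0) / 2 = i by omega, show (2 * i + 1 + 0) / 2 = i by omega,
      show (2 * i + 2 + 0) / 2 = i + 1 by omega]
    ring
  · rw [show (2 * i + 1 + 0) / 2 = i by omega, show (2 * i + 1 + 1 + 0) / 2 = i + 1 by omega,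
      show (2 * i + 1 + 2 + 0) / 2 = i + 1 by omega]
    ring
  · rw [show (2 * i + 1) / 2 = i by omega, show (2 * i + 1 + 1) / 2 = i + 1 by omega,
      show (2 * i + 2 + 1) / 2 = i + 1 by omega]
    ring
  · rw [show (2 * i + 1 + 1) / 2 = i + 1 by omega, show (2 * i + 1 + 1 + 1) / 2 = i + 1 by omega,
      show (2 * i + 1 + 2 + 1) / 2 = i + 1 + 1 by omega]
    ring

/-- Action of `hypOp` on functions that are constant on the rank pairs. -/
lemma hypOp_class (ε : ℕ) (hε : ε ≤ 1) (q : ℤ) (φ : ℕ → ℤ) (s : ℕ) :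
    hypOp q (fun s => φ ((s + ε) / 2)) s
      = q ^ (1 - ε) * q ^ (2 * ((s + ε) / 2)) * (φ ((s + ε) / 2) - φ ((s + ε) / 2 + 1)) := by
  unfold hypOp
  beta_reduce
  interval_cases ε <;> obtain ⟨i, rfl | rfl⟩ := Nat.even_or_odd' s
  · rw [show (2 * i + 0) / 2 = i by omega, show (2 * i + 1 + 0) / 2 = i by omega,
      show (2 * i + 2 + 0) / 2 = i + 1 by omega]
    ring
  · rw [show (2 * i + 1 + 0) / 2 = i by omega, show (2 * i + 1 + 1 + 0) / 2 = i + 1 by omega,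
      show (2 * i + 1 + 2 + 0) / 2 = i + 1 by omega]
    ring
  · rw [show (2 * i + 1) / 2 = i by omega, show (2 * i + 1 + 1) / 2 = i + 1 by omega,
      show (2 * i + 2 + 1) / 2 = i + 1 by omega]
    ring
  · rw [show (2 * i + 1 + 1) / 2 = i + 1 by omega, show (2 * i + 1 + 1 + 1) / 2 = i + 1 by omega,
      show (2 * i + 1 + 2 + 1) / 2 = i + 1 + 1 by omega]
    ring

lemma hypOp_wt (ε : ℕ) (hε : ε ≤ 1) (q : ℤ) (n j s : ℕ) (hs : s ≤ n) :
    hypOp q (wt ε q (n + 2) (j + 1)) s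
      = q ^ (1 - ε) * q ^ (2 * ((n + ε) / 2 - j)) * wt ε q n j s := by
  have := hypOp_class ε hε q (fun i => gb (q ^ 2) ((n + 2 + ε) / 2 - i) (j + 1)) s
  change hypOp q (fun s => gb (q ^ 2) ((n + 2 + ε) / 2 - (s + ε) / 2) (j + 1)) s = _
  rw [this]
  unfold wt
  obtain ⟨M, hM⟩ := Nat.exists_eq_add_of_le (show (s + ε) / 2 ≤ (n + ε) / 2 by omega)
  rw [show (n + 2 + ε) / 2 = (n + ε) / 2 + 1 by omega, hM]
  generalize (s + ε) / 2 = i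
  rw [show i + M + 1 - i = M + 1 by omega, show i + M + 1 - (i + 1) = M by omega,
    show i + M - i = M by omega, gb_succ']
  rcases Nat.lt_or_ge M j with h | h
  · rw [gb_eq_zero _ h]; ring
  · rw [show 2 * (i + M - j) = 2 * i + 2 * (M - j) by omega, pow_add, ← pow_mul]
    ring

lemma hypOp_wt_zero (ε : ℕ) (q : ℤ) (n s : ℕ) : hypOp q (wt ε q n 0) s = 0 := by
  simp only [hypOp, wt, gb_zero_right]; ring

lemma extOp_wt_zero (ε : ℕ) (q : ℤ) (n s : ℕ) : extOp q (n + 1) (wt ε q (n + 1) 0) s = q ^ (n + 1) * wt ε q n 0 s := by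
  simp only [extOp, wt, gb_zero_right]; ring

lemma extOp_wt_even (ε : ℕ) (hε : ε ≤ 1) (q : ℤ) (n j s : ℕ) (hs : s ≤ n) (hn : Even (n + ε)) :
    extOp q (n + 1) (wt ε q (n + 1) j) s
      = q ^ (1 - ε) * q ^ (2 * ((n + ε) / 2 - j)) * wt ε q n j s := by
  have := extOp_class ε hε q (n + 1) (fun i => gb (q ^ 2) ((n + 1 + ε) / 2 - i) j) s
  change extOp q (n + 1) (fun s => gb (q ^ 2) ((n + 1 + ε) / 2 - (s + ε) / 2) j) s = _
  rw [this]
  unfold wt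
  obtain ⟨N, hN⟩ := hn
  obtain ⟨M, hM⟩ := Nat.exists_eq_add_of_le (show (s + ε) / 2 ≤ N by omega)
  rw [show (n + 1 + ε) / 2 = N by omega, show (n + ε) / 2 = N by omega,
    show n + 1 = (1 - ε) + 2 * N by omega, hM]
  generalize (s + ε) / 2 = i
  rw [show i + M - i = M by omega]
  rcases Nat.lt_or_ge M j with h | h
  · rw [gb_eq_zero _ h, gb_eq_zero _ (show i + M - (i + 1) < j by omega)]; ring
  · rw [show 2 * (i + M - j) = 2 * i + 2 * (M - j) by omega]
    cases M with
    | zero =>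
      obtain rfl : j = 0 := by omega
      simp only [gb_zero_right]; ring
    | succ M =>
      rw [show i + (M + 1) - (i + 1) = M by omega]
      cases j with
      | zero => simp only [gb_zero_right, Nat.sub_zero]; ring
      | succ j =>
        have h1 := gb_succ (q ^ 2) M j
        have h2 := gb_succ' (q ^ 2) M j
        have h3 : 2 * (M + 1) = 2 * (M - j) + 2 * (j + 1) := by omega
        rw [show M + 1 - (j + 1) = M - j by omega, pow_add q (1 - ε), mul_add 2 i, h3]
        simp only [← pow_mul, pow_add] at h1 h2 ⊢
        linear_combination q ^ (1 - ε) * q ^ (2 * i) * (h2 - q ^ (2 * (M - j)) * h1)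

lemma extOp_wt_odd (ε : ℕ) (hε : ε ≤ 1) (q : ℤ) (n j s : ℕ) (hs : s ≤ n) (hn : Odd (n + ε)) :
    extOp q (n + 1) (wt ε q (n + 1) (j + 1)) s
      = q ^ (n + 1) * wt ε q n (j + 1) s
        + q ^ (1 - ε) * q ^ (2 * ((n + ε) / 2 - j)) * wt ε q n j s := by
  have := extOp_class ε hε q (n + 1) (fun i => gb (q ^ 2) ((n + 1 + ε) / 2 - i) (j + 1)) s
  change extOp q (n + 1) (fun s => gb (q ^ 2) ((n + 1 + ε) / 2 - (s + ε) / 2) (j + 1)) s = _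
  rw [this]
  unfold wt
  obtain ⟨N, hN⟩ := hn
  obtain ⟨M, hM⟩ := Nat.exists_eq_add_of_le (show (s + ε) / 2 ≤ N by omega)
  rw [show (n + 1 + ε) / 2 = N + 1 by omega, show (n + ε) / 2 = N by omega, hM]
  generalize (s + ε) / 2 = i
  rw [show i + M + 1 - i = M + 1 by omega, show i + M + 1 - (i + 1) = M by omega,
    show i + M - i = M by omega, gb_succ']
  rcases Nat.lt_or_ge M j with h | h
  · rw [gb_eq_zero _ h]; ring
  · rw [show 2 * (i + M - j) = 2 * i + 2 * (M - j) by omega, pow_add, ← pow_mul]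
    ring

end Gaussian

/-! ### Transforms of the weights: non-negativity -/

section Transform
variable {F : Type} [Field F] [Fintype F] {ι : Type} [Fintype ι] [DecidableEq ι]

lemma FT_lin (χ : AddChar F ℂ) (a b : ℤ) (h h' : ℕ → ℤ) (Y : Matrix ι ι F) :
    FT χ (fun s => a * h s + b * h' s) Y = a * FT χ h Y + b * FT χ h' Y := by
  unfold FT
  rw [Finset.mul_sum, Finset.mul_sum, ← Finset.sum_add_distrib]
  refine Finset.sum_congr rfl fun X _ => ?_
  push_cast
  ring

lemma FT_smul (χ : AddChar F ℂ) (a : ℤ) (h : ℕ → ℤ) (Y : Matrix ι ι F) :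
    FT χ (fun s => a * h s) Y = a * FT χ h Y := by
  have := FT_lin χ a 0 h h Y
  simpa using this

/-- The character `X ↦ χ (tr (X Yᵀ))` of the group of symmetric matrices. -/
noncomputable def chr (χ : AddChar F ℂ) (Y : Matrix ι ι F) : AddChar (symG ι F) ℂ where
  toFun X := χ ((X.1 * Yᵀ).trace)
  map_zero_eq_one' := by simp
  map_add_eq_mul' A B := by
    simp [Matrix.add_mul, Matrix.trace_add, AddChar.map_add_eq_mul]

lemma chr_apply (χ : AddChar F ℂ) (Y : Matrix ι ι F) (X : symG ι F) :
    chr χ Y X = χ ((X.1 * Yᵀ).trace) := rfl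

lemma FT_const (χ : AddChar F ℂ) (h : ℕ → ℤ) (Y : Matrix ι ι F) (hh : ∀ s, h s = 1) :
    FT χ h Y = 0 ∨ FT χ h Y = (Fintype.card (symG ι F) : ℂ) := by
  classical
  have h1 : FT χ h Y = ∑ X, chr χ Y X := by
    unfold FT
    refine Finset.sum_congr rfl fun X _ => ?_
    rw [hh, chr_apply]; simp
  rw [h1, AddChar.sum_eq_ite]
  split_ifs
  · exact Or.inr rfl
  · exact Or.inl rfl

lemma FT_zero_fun (χ : AddChar F ℂ) (h : ℕ → ℤ) (Y : Matrix ι ι F)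
    (hh : ∀ s ≤ Fintype.card ι, h s = 0) : FT χ h Y = 0 := by
  rw [FT_congr χ Y (h' := fun _ => 0) hh]
  simp [FT]

lemma FT_delta (χ : AddChar F ℂ) (h : ℕ → ℤ) (Y : Matrix ι ι F) (h0 : h 0 = 1)
    (hh : ∀ s ≤ Fintype.card ι, 1 ≤ s → h s = 0) : FT χ h Y = 1 := by
  unfold FT
  rw [Finset.sum_eq_single 0]
  · simp [h0]
  · intro X _ hX
    rw [hh _ (rank_le_card_width _)]
    · simp
    · rw [Nat.one_le_iff_ne_zero]
      intro hr
      have hr' : LinearMap.range X.1.mulVecLin = ⊥ := Submodule.finrank_eq_zero.1 hr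
      rw [LinearMap.range_eq_bot] at hr'
      refine hX (Subtype.ext ?_)
      ext a b
      have := congrFun (LinearMap.congr_fun hr' (Pi.single b 1)) a
      simpa using this
  · simp

end Transform

section Evaluation
variable {F : Type} [Field F] [Fintype F]

/-- The transform of the weights with `ε = 1` at the trivial character. -/
lemma FT_wt_one_zero (χ : AddChar F ℂ) (hχ : χ.IsPrimitive) (n j : ℕ) :
    FT χ (wt 1 (Fintype.card F) n j) (0 : Matrix (Fin n) (Fin n) F)
      = ((gb ((Fintype.card F : ℤ) ^ 2) ((n + 1) / 2) j
        * ((Fintype.card F : ℤ) ^ (2 * (n / 2) + 1)) ^ ((n + 1) / 2 - j) : ℤ) : ℂ) := by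
  set q : ℤ := ((Fintype.card F : ℕ) : ℤ) with hq
  induction n generalizing j with
  | zero =>
    cases j with
    | zero => rw [FT_delta] <;> simp [wt]
    | succ j =>
      rw [FT_zero_fun] <;> simp [wt, gb]
  | succ n ih =>
    rw [FT_zero_recursion χ hχ]
    rw [← hq]
    rcases Nat.even_or_odd (n + 1) with hn | hn
    · rw [FT_congr χ _ (h' := fun s => q ^ (2 * ((n + 1) / 2 - j)) * wt 1 q n j s), FT_smul, ih]
      · obtain ⟨M, hM⟩ := hn
        rw [show (n + 1 + 1) / 2 = M by omega, show (n + 1) / 2 = M by omega,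
          show n / 2 = M - 1 by omega, show 2 * M + 1 = 2 * (M - 1) + 1 + 2 by omega,
          pow_add q (2 * (M - 1) + 1) 2, mul_pow, ← pow_mul q 2]
        push_cast
        ring
      · intro s hs
        rw [extOp_wt_even 1 le_rfl q n j s (by simpa using hs) hn]
        simp
    · obtain ⟨M, hM⟩ := id hn
      cases j with
      | zero =>
        rw [FT_congr χ _ (h' := fun s => q ^ (n + 1) * wt 1 q n 0 s), FT_smul, ih]
        · rw [show (n + 1 + 1) / 2 = M + 1 by omega, show (n + 1) / 2 = M by omega,
            show n / 2 = M by omega, show n + 1 = 2 * M + 1 by omega]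
          simp only [gb_zero_right, Nat.sub_zero]
          push_cast
          ring
        · intro s hs
          exact extOp_wt_zero 1 q n s
      | succ j =>
        rw [FT_congr χ _ (h' := fun s => q ^ (n + 1) * wt 1 q n (j + 1) s
          + q ^ (2 * ((n + 1) / 2 - j)) * wt 1 q n j s), FT_lin, ih, ih]
        · rw [show (n + 1 + 1) / 2 = M + 1 by omega, show (n + 1) / 2 = M by omega,
            show n / 2 = M by omega, show n + 1 = 2 * M + 1 by omega, gb_succ',
            show M + 1 - (j + 1) = M - j by omega]
          norm_cast
          rw [pow_mul q 2 (M - j)]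
          rcases Nat.lt_or_ge M (j + 1) with h | h
          · rw [gb_eq_zero _ h]; ring
          · rw [show M - j = M - (j + 1) + 1 by omega]
            ring
        · intro s hs
          rw [extOp_wt_odd 1 le_rfl q n j s (by simpa using hs) hn]
          simp

/-- The exponent is `n (n + 1) / 2`, in the factored form in which it arises at `j = 0`. -/
lemma card_symG (n : ℕ) : Fintype.card (symG (Fin n) F)
    = (Fintype.card F ^ (2 * (n / 2) + 1)) ^ ((n + 1) / 2) := by
  have hχ := AddChar.FiniteField.primitiveChar_to_Complex_isPrimitive F
  have h := FT_wt_one_zero _ hχ n 0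
  have h2 : FT (AddChar.FiniteField.primitiveChar_to_Complex F) (wt 1 (Fintype.card F) n 0)
      (0 : Matrix (Fin n) (Fin n) F) = (Fintype.card (symG (Fin n) F) : ℂ) := by
    simp [FT, wt]
  rw [h2] at h
  simp only [gb_zero_right, Nat.sub_zero, one_mul] at h
  exact_mod_cast h

/-- The transforms of the weights with `ε = 1` are non-negative integers. -/
lemma FT_wt_one_nat (χ : AddChar F ℂ) (hχ : χ.IsPrimitive) (n : ℕ) : ∀ (j : ℕ)
    (Y : Matrix (Fin n) (Fin n) F), ∃ k : ℕ, FT χ (wt 1 (Fintype.card F) n j) Y = k := by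
  induction n using Nat.strong_induction_on with
  | _ n ih =>
  intro j Y
  rcases Nat.eq_zero_or_pos j with rfl | hj
  · rcases FT_const χ (wt 1 (Fintype.card F) n 0) Y (by simp [wt]) with h | h
    · exact ⟨0, by simpa using h⟩
    · exact ⟨_, h⟩
  obtain ⟨j, rfl⟩ := Nat.exists_eq_add_of_le' hj
  rcases Nat.lt_or_ge n 3 with hn | hn
  · by_cases h : j = 0 ∧ n ≠ 0
    · obtain ⟨rfl, h⟩ := h
      refine ⟨1, ?_⟩
      rw [FT_delta]
      · simp
      · rw [wt, show (n + 1) / 2 - (0 + 1) / 2 = 1 by omega]; simp [gb]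
      · intro s hs hs1
        exact gb_eq_zero _ (by omega)
    · refine ⟨0, ?_⟩
      rw [FT_zero_fun]
      · simp
      · intro s hs
        exact gb_eq_zero _ (by omega)
  · obtain ⟨m, rfl⟩ := Nat.exists_eq_add_of_le' (show 2 ≤ n by omega)
    rcases FT_recursion χ hχ (wt 1 (Fintype.card F) (m + 2) (j + 1)) (by omega) Y with
      ⟨Y₀, h⟩ | ⟨Y₁, h⟩
    · rw [h]
      rcases Nat.even_or_odd (m + 1 + 1) with hm | hm
      · rw [FT_congr χ _ fun s hs => extOp_wt_even 1 le_rfl _ (m + 1) (j + 1) s (by simpa using hs) hm,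
          FT_smul]
        obtain ⟨k, hk⟩ := ih (m + 1) (by omega) (j + 1) Y₀
        rw [hk]
        exact ⟨Fintype.card F ^ (1 - 1) * Fintype.card F ^ (2 * ((m + 1 + 1) / 2 - (j + 1))) * k,
          by push_cast; ring⟩
      · rw [FT_congr χ _ fun s hs => extOp_wt_odd 1 le_rfl _ (m + 1) j s (by simpa using hs) hm,
          FT_lin]
        obtain ⟨k, hk⟩ := ih (m + 1) (by omega) (j + 1) Y₀
        obtain ⟨l, hl⟩ := ih (m + 1) (by omega) j Y₀
        rw [hk, hl]
        exact ⟨Fintype.card F ^ (m + 1 + 1) * k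
          + Fintype.card F ^ (1 - 1) * Fintype.card F ^ (2 * ((m + 1 + 1) / 2 - j)) * l,
          by push_cast; ring⟩
    · rw [h, FT_congr χ _ fun s hs => hypOp_wt 1 le_rfl _ m j s (by simpa using hs), FT_smul]
      obtain ⟨k, hk⟩ := ih m (by omega) j Y₁
      rw [hk]
      exact ⟨Fintype.card F ^ (1 - 1) * Fintype.card F ^ (2 * ((m + 1) / 2 - j)) * k,
        by push_cast; ring⟩

end Evaluation

/-! ### Transforms of the weights: divisibility -/

section Divisibility
variable {F : Type} [Field F] [Fintype F]

/-- Coordinates on symmetric `2 × 2` matrices. -/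
def symTwoEquiv : F × F × F ≃ symG (Fin 2) F where
  toFun p := ⟨!![p.1, p.2.1; p.2.1, p.2.2], by
    change (_)ᵀ = _
    ext i j
    fin_cases i <;> fin_cases j <;> rfl⟩
  invFun X := (X.1 0 0, X.1 0 1, X.1 1 1)
  left_inv p := rfl
  right_inv X := by
    apply Subtype.ext
    have h : X.1 1 0 = X.1 0 1 := IsSymm.apply X.2 0 1
    ext i j
    fin_cases i <;> fin_cases j <;> simp [h]

/-- In size two, the weight with `ε = 0`, `j = 1` is the indicator of the singular matrices. -/
lemma wt_zero_two (q : ℤ) (a x z : F) [Decidable (a * z = x * x)] :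
    wt 0 q 2 1 (!![a, x; x, z] : Matrix (Fin 2) (Fin 2) F).rank = if a * z = x * x then 1 else 0 := by
  have hle : (!![a, x; x, z] : Matrix (Fin 2) (Fin 2) F).rank ≤ 2 := by
    simpa using rank_le_card_width (!![a, x; x, z] : Matrix (Fin 2) (Fin 2) F)
  have hdet : (!![a, x; x, z] : Matrix (Fin 2) (Fin 2) F).det = a * z - x * x := det_fin_two_of _ _ _ _
  have key : (!![a, x; x, z] : Matrix (Fin 2) (Fin 2) F).rank < 2 ↔ a * z = x * x := by
    rw [← sub_eq_zero, ← hdet, ← exists_mulVec_eq_zero_iff]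
    set A := (!![a, x; x, z] : Matrix (Fin 2) (Fin 2) F)
    have hrn := LinearMap.finrank_range_add_finrank_ker A.mulVecLin
    rw [finrank_fintype_fun_eq_card, Fintype.card_fin] at hrn
    change A.rank + _ = 2 at hrn
    constructor
    · intro h
      have hk : LinearMap.ker A.mulVecLin ≠ ⊥ := fun hk => by
        rw [hk, finrank_bot] at hrn; omega
      obtain ⟨v, hv, hv0⟩ := Submodule.exists_mem_ne_zero_of_ne_bot hk
      exact ⟨v, hv0, by simpa using hv⟩
    · rintro ⟨v, hv0, hv⟩
      by_contra h
      have hk : finrank F (LinearMap.ker A.mulVecLin) = 0 := by omega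
      rw [Submodule.finrank_eq_zero] at hk
      have : v ∈ LinearMap.ker A.mulVecLin := by simpa using hv
      rw [hk] at this
      exact hv0 (by simpa using this)
  rw [← if_congr key rfl rfl]
  generalize (!![a, x; x, z] : Matrix (Fin 2) (Fin 2) F).rank = s at hle
  interval_cases s <;> simp [wt, gb]

/-- The base case of the divisibility. A singular symmetric matrix with first row `(a, a t)`,
`a ≠ 0`, has last entry `a t²`, so the sum over such matrices counts the zeros `t` of a quadratic
polynomial. -/
lemma FT_wt_zero_two (χ : AddChar F ℂ) (hχ : χ.IsPrimitive) (Y : Matrix (Fin 2) (Fin 2) F) :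
    ∃ k : ℤ, FT χ (wt 0 (Fintype.card F) 2 1) Y = (Fintype.card F : ℂ) * k := by
  classical
  set α := Y 0 0
  set β := Y 0 1 + Y 1 0
  set γ := Y 1 1
  have h1 : FT χ (wt 0 (Fintype.card F) 2 1) Y
      = ∑ a : F, ∑ x : F, ∑ z : F, if a * z = x * x then χ (a * α + x * β + z * γ) else 0 := by
    unfold FT
    rw [← Equiv.sum_comp (symTwoEquiv (F := F)), Fintype.sum_prod_type]
    refine Finset.sum_congr rfl fun a _ => ?_
    rw [Fintype.sum_prod_type]
    refine Finset.sum_congr rfl fun x _ => Finset.sum_congr rfl fun z _ => ?_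
    change ((wt 0 (Fintype.card F) 2 1 (!![a, x; x, z] : Matrix (Fin 2) (Fin 2) F).rank : ℤ) : ℂ)
      * χ ((!![a, x; x, z] * Yᵀ).trace) = _
    rw [wt_zero_two, show (!![a, x; x, z] * Yᵀ).trace = a * α + x * β + z * γ by
      rw [trace_fin_two, mul_apply, mul_apply, Fin.sum_univ_two, Fin.sum_univ_two]
      simp [α, β, γ]; ring]
    split_ifs <;> simp
  -- The `t`-sum at `a = 0` is a spurious `q`, corrected by the second summand.
  have h2 : ∀ a : F, (∑ x : F, ∑ z : F, if a * z = x * x then χ (a * α + x * β + z * γ) else 0)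
      = (∑ t : F, χ (a * (α + t * β + t * t * γ)))
        + if a = 0 then ((if γ = 0 then (Fintype.card F : ℂ) else 0) - Fintype.card F) else 0 := by
    intro a
    split_ifs with ha hγ
    · subst ha
      rw [Finset.sum_eq_single 0]
      · simp [hγ]
      · intro x _ hx
        refine Finset.sum_eq_zero fun z _ => if_neg ?_
        simpa [eq_comm] using hx
      · simp
    · subst ha
      rw [Finset.sum_eq_single 0]
      · have := AddChar.sum_mulShift γ hχ
        simpa [hγ] using this
      · intro x _ hx
        refine Finset.sum_eq_zero fun z _ => if_neg ?_
        simpa [eq_comm] using hx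
      · simp
    · rw [add_zero, ← Equiv.sum_comp (Equiv.mulLeft₀ a ha)]
      refine Finset.sum_congr rfl fun t _ => ?_
      rw [Finset.sum_eq_single (a * t * t)]
      · simp only [Equiv.mulLeft₀_apply]
        rw [if_pos (by ring)]
        congr 1; ring
      · intro z _ hz
        refine if_neg fun h => hz ?_
        simp only [Equiv.mulLeft₀_apply] at h
        exact mul_left_cancel₀ ha (by rw [h]; ring)
      · simp
  rw [h1, Finset.sum_congr rfl fun a _ => h2 a, Finset.sum_add_distrib, Finset.sum_comm,
    Finset.sum_congr rfl fun t _ => AddChar.sum_mulShift (α + t * β + t * t * γ) hχ,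
    Finset.sum_ite_eq' Finset.univ (0 : F)]
  refine ⟨(∑ t : F, if α + t * β + t * t * γ = 0 then 1 else 0) + (if γ = 0 then 1 else 0) - 1, ?_⟩
  push_cast
  rw [mul_sub, mul_add, Finset.mul_sum]
  simp only [Finset.mem_univ, if_true, mul_ite, mul_one, mul_zero]
  ring

/-- The transforms of the weights with `ε = 0` are divisible by a large power of `q`. -/
lemma FT_wt_zero_dvd (χ : AddChar F ℂ) (hχ : χ.IsPrimitive) (n : ℕ) : ∀ (j : ℕ)
    (Y : Matrix (Fin n) (Fin n) F), ∃ k : ℤ, FT χ (wt 0 (Fintype.card F) n j) Y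
      = (Fintype.card F : ℂ) ^ ((n + 1) / 2 * (2 * (n / 2 - j) + 1)) * k := by
  induction n using Nat.strong_induction_on with
  | _ n ih =>
  intro j Y
  rcases Nat.lt_or_ge (n / 2) j with hjn | hjn
  · refine ⟨0, ?_⟩
    rw [FT_zero_fun]
    · simp
    · intro s hs
      exact gb_eq_zero _ (by omega)
  rcases Nat.eq_zero_or_pos j with rfl | hj
  · rcases FT_const χ (wt 0 (Fintype.card F) n 0) Y (by simp [wt]) with h | h
    · exact ⟨0, by simpa using h⟩
    · refine ⟨1, ?_⟩
      rw [h, card_symG, ← pow_mul, Nat.sub_zero, mul_comm]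
      simp
  obtain ⟨j, rfl⟩ := Nat.exists_eq_add_of_le' (show 1 ≤ j from hj)
  rcases Nat.lt_or_ge n 3 with hn | hn
  · obtain rfl : n = 2 := by omega
    obtain rfl : j = 0 := by omega
    obtain ⟨k, hk⟩ := FT_wt_zero_two χ hχ Y
    exact ⟨k, by simpa using hk⟩
  · obtain ⟨m, rfl⟩ := Nat.exists_eq_add_of_le' (show 2 ≤ n by omega)
    rcases FT_recursion χ hχ (wt 0 (Fintype.card F) (m + 2) (j + 1)) (by omega) Y with
      ⟨Y₀, h⟩ | ⟨Y₁, h⟩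
    · rw [h]
      obtain ⟨k, hk⟩ := ih (m + 1) (by omega) (j + 1) Y₀
      rcases Nat.even_or_odd (m + 1 + 0) with hm | hm
      · rw [FT_congr χ _ fun s hs => extOp_wt_even 0 zero_le_one _ (m + 1) (j + 1) s
          (by simpa using hs) hm, FT_smul, hk]
        obtain ⟨M, hM⟩ := hm
        refine ⟨k, ?_⟩
        rw [show (m + 1 + 0) / 2 = M by omega, show (m + 1 + 1) / 2 = M by omega,
          show (m + 2 + 1) / 2 = M + 1 by omega]
        push_cast
        ring
      · rw [FT_congr χ _ fun s hs => extOp_wt_odd 0 zero_le_one _ (m + 1) j s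
          (by simpa using hs) hm, FT_lin, hk]
        obtain ⟨l, hl⟩ := ih (m + 1) (by omega) j Y₀
        rw [hl]
        obtain ⟨M, hM⟩ := hm
        rw [show (m + 1 + 0) / 2 = M by omega, show (m + 1 + 1) / 2 = M + 1 by omega,
          show (m + 2 + 1) / 2 = M + 1 by omega,
          show m + 1 + 1 = 2 * M + 2 by omega,
          show M + 1 - (j + 1) = M - j by omega]
        -- For `j < M` this is an equality of exponents; for `j = M` the left side is larger.
        obtain ⟨t, ht⟩ := Nat.exists_eq_add_of_le
          (show (M + 1) * (2 * (M - j) + 1) ≤ 2 * M + 2 + (M + 1) * (2 * (M - (j + 1)) + 1) by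
            have : 2 * (M - j) + 1 ≤ 2 + (2 * (M - (j + 1)) + 1) := by omega
            nlinarith [Nat.mul_le_mul_left (M + 1) this])
        refine ⟨(Fintype.card F : ℤ) ^ t * k
          + (Fintype.card F : ℤ) ^ (1 + 2 * (M - j)) * l, ?_⟩
        push_cast
        rw [← mul_assoc, ← pow_add, ht]
        ring
    · rw [h, FT_congr χ _ fun s hs => hypOp_wt 0 zero_le_one _ m j s (by simpa using hs), FT_smul]
      obtain ⟨k, hk⟩ := ih m (by omega) j Y₁
      rw [hk]
      refine ⟨k, ?_⟩
      rw [show (m + 0) / 2 = m / 2 by omega, show (m + 2 + 1) / 2 = (m + 1) / 2 + 1 by omega,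
          show (m + 2) / 2 - (j + 1) = m / 2 - j by omega]
      push_cast
      ring

end Divisibility

/-! ### Characters of the group of symmetric matrices -/

section Characters
variable {F : Type} [Field F] [Fintype F] {n : ℕ}

/-- Symmetrisation of the upper triangular part; a retraction of all matrices onto the symmetric
ones which is additive in every characteristic. -/
def upperSym : Matrix (Fin n) (Fin n) F →+ symG (Fin n) F where
  toFun M := ⟨of fun i j => M (min i j) (max i j), by
    change (_)ᵀ = _
    ext i j
    simp [min_comm, max_comm]⟩
  map_zero' := rfl
  map_add' _ _ := rfl

lemma upperSym_coe (X : symG (Fin n) F) : upperSym X.1 = X := by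
  apply Subtype.ext
  ext i j
  change X.1 (min i j) (max i j) = X.1 i j
  rcases le_total i j with h | h
  · rw [min_eq_left h, max_eq_right h]
  · rw [min_eq_right h, max_eq_left h]
    exact IsSymm.apply X.2 i j

lemma exists_mulShift (χ : AddChar F ℂ) (hχ : χ.IsPrimitive) (θ : AddChar F ℂ) :
    ∃ a : F, χ.mulShift a = θ := by
  have hb := (Fintype.bijective_iff_injective_and_card χ.mulShift).2
    ⟨AddChar.to_mulShift_inj_of_isPrimitive hχ, AddChar.card_eq.symm⟩
  exact hb.2 θ

lemma addChar_sum {A κ : Type*} [AddCommMonoid A] (ψ : AddChar A ℂ) (s : Finset κ) (f : κ → A) :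
    ψ (∑ i ∈ s, f i) = ∏ i ∈ s, ψ (f i) := by
  classical
  induction s using Finset.induction_on with
  | empty => simp
  | insert a s ha ih => rw [Finset.sum_insert ha, Finset.prod_insert ha, AddChar.map_add_eq_mul, ih]

lemma exists_chr (χ : AddChar F ℂ) (hχ : χ.IsPrimitive) (ψ : AddChar (symG (Fin n) F) ℂ) :
    ∃ Y, ψ = chr χ Y := by
  choose a ha using fun i j => exists_mulShift χ hχ
    (ψ.compAddMonoidHom (upperSym.comp (singleAddMonoidHom i j)))
  refine ⟨of a, ?_⟩
  ext X
  conv_lhs => rw [← upperSym_coe X, matrix_eq_sum_single X.1]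
  simp only [map_sum, addChar_sum]
  rw [chr_apply, show (X.1 * (of a)ᵀ).trace = ∑ i, ∑ j, a i j * X.1 i j by
    simp [trace, mul_apply, mul_comm]]
  simp only [addChar_sum]
  refine Finset.prod_congr rfl fun i _ => Finset.prod_congr rfl fun j _ => ?_
  exact (DFunLike.congr_fun (ha i j) (X.1 i j)).symm

end Characters

/-! ### Linear programming and divisibility bounds -/

section Bounds
variable {G : Type} [AddCommGroup G] [Fintype G]

lemma fourier_inversion (f : G → ℂ) (a : G) :
    ∑ ψ : AddChar G ℂ, (∑ X, f X * ψ X) * ψ (-a) = Fintype.card G * f a := by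
  classical
  simp only [Finset.sum_mul]
  rw [Finset.sum_comm, Finset.sum_eq_single a]
  · simp only [mul_assoc, ← AddChar.map_add_eq_mul, add_neg_cancel]
    simp [mul_comm]
  · intro X _ hX
    simp only [mul_assoc, ← AddChar.map_add_eq_mul]
    rw [← Finset.mul_sum, AddChar.sum_apply_eq_ite, if_neg (fun h => hX (by
      rwa [← sub_eq_add_neg, sub_eq_zero] at h)), mul_zero]
  · simp

/-- Delsarte's linear programming bound for a function with non-negative transform. -/
lemma lp_bound (f : G → ℤ) (hf : ∀ ψ : AddChar G ℂ, ∃ k : ℕ, ∑ X, (f X : ℂ) * ψ X = k)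
    (C : Finset G) (hC : C.Nonempty) (h0 : ∀ A ∈ C, ∀ B ∈ C, A ≠ B → f (A - B) = 0) :
    (∑ X, f X) * C.card ≤ Fintype.card G * f 0 := by
  classical
  choose k hk using hf
  have h1 : ∑ ψ : AddChar G ℂ, (k ψ : ℂ) * (Complex.normSq (∑ A ∈ C, ψ A) : ℂ)
      = Fintype.card G * (C.card * f 0) := by
    have h2 : ∀ ψ : AddChar G ℂ, (Complex.normSq (∑ A ∈ C, ψ A) : ℂ)
        = ∑ A ∈ C, ∑ B ∈ C, ψ (-(A - B)) := by
      intro ψ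
      rw [← Complex.mul_conj, map_sum, Finset.sum_mul_sum, Finset.sum_comm]
      refine Finset.sum_congr rfl fun A _ => Finset.sum_congr rfl fun B _ => ?_
      rw [← AddChar.map_neg_eq_conj, ← AddChar.map_add_eq_mul]
      congr 1; abel
    simp only [h2, Finset.mul_sum]
    rw [Finset.sum_comm]
    have h3 : ∀ A ∈ C, ∑ ψ : AddChar G ℂ, ∑ B ∈ C, (k ψ : ℂ) * ψ (-(A - B))
        = Fintype.card G * f 0 := by
      intro A hA
      rw [Finset.sum_comm, Finset.sum_eq_single_of_mem A hA]
      · simp only [← hk]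
        rw [fourier_inversion (fun X => (f X : ℂ)), sub_self]
      · intro B hB hBA
        simp only [← hk]
        rw [fourier_inversion (fun X => (f X : ℂ)), h0 A hA B hB hBA.symm]
        simp
    rw [Finset.sum_congr rfl h3, Finset.sum_const]
    simp; ring
  have h4 : ∑ ψ : AddChar G ℂ, (k ψ : ℝ) * Complex.normSq (∑ A ∈ C, ψ A)
      = Fintype.card G * (C.card * f 0) := by exact_mod_cast h1
  have h5 : (k 0 : ℝ) * Complex.normSq (∑ A ∈ C, (0 : AddChar G ℂ) A)
      ≤ Fintype.card G * (C.card * f 0) := by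
    rw [← h4]
    exact Finset.single_le_sum (f := fun ψ : AddChar G ℂ =>
      (k ψ : ℝ) * Complex.normSq (∑ A ∈ C, ψ A))
      (fun ψ _ => mul_nonneg (Nat.cast_nonneg _) (Complex.normSq_nonneg _)) (Finset.mem_univ 0)
  have h6 : ((∑ X, f X : ℤ) : ℂ) = ((k 0 : ℤ) : ℂ) := by
    have := hk 0
    simp only [AddChar.zero_apply, mul_one] at this
    push_cast
    exact this
  have h7 : ∑ X, f X = (k 0 : ℤ) := by exact_mod_cast h6
  have h8 : (∑ A ∈ C, (0 : AddChar G ℂ) A) = ((C.card : ℝ) : ℂ) := by simp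
  rw [h8, Complex.normSq_ofReal] at h5
  have h9 : (k 0 : ℤ) * ((C.card : ℤ) * C.card) ≤ Fintype.card G * (C.card * f 0) := by
    exact_mod_cast h5
  rw [h7]
  have hpos : (0 : ℤ) < C.card := by exact_mod_cast hC.card_pos
  nlinarith

/-- Poisson summation over a subgroup on which `f` is supported at `0`. -/
lemma subgroup_dvd (f : G → ℤ) (D : ℕ)
    (hf : ∀ ψ : AddChar G ℂ, ∃ k : ℤ, ∑ X, (f X : ℂ) * ψ X = D * k)
    (H : AddSubgroup G) [Fintype H] (h0 : ∀ A ∈ H, A ≠ 0 → f A = 0) :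
    ((Fintype.card H * D : ℕ) : ℤ) ∣ Fintype.card G * f 0 := by
  classical
  choose k hk using hf
  have h1 : ∑ A : H, (Fintype.card G * f A.1 : ℂ) = Fintype.card G * f 0 := by
    rw [Finset.sum_eq_single 0]
    · simp
    · intro A _ hA
      rw [h0 A.1 A.2 (fun h => hA (Subtype.ext h))]; simp
    · simp
  have h2 : ∀ ψ : AddChar G ℂ, ∑ A : H, ψ (-A.1)
      = ((if ψ.compAddMonoidHom H.subtype = 0 then Fintype.card H else 0 : ℕ) : ℂ) := by
    intro ψ
    rw [← Equiv.sum_comp (Equiv.neg H)]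
    have := AddChar.sum_eq_ite (ψ.compAddMonoidHom H.subtype)
    simp only [Equiv.neg_apply, NegMemClass.coe_neg, neg_neg]
    push_cast
    rw [← this]
    rfl
  refine ⟨∑ ψ : AddChar G ℂ, k ψ * if ψ.compAddMonoidHom H.subtype = 0 then 1 else 0, ?_⟩
  have h3 : (Fintype.card G * f 0 : ℂ) = ((Fintype.card H * D : ℕ) : ℂ)
      * ∑ ψ : AddChar G ℂ, (k ψ : ℂ) * if ψ.compAddMonoidHom H.subtype = 0 then 1 else 0 := by
    rw [← h1]
    simp only [← fourier_inversion (fun X => (f X : ℂ)), hk]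
    rw [Finset.sum_comm, Finset.mul_sum]
    refine Finset.sum_congr rfl fun ψ _ => ?_
    rw [← Finset.mul_sum, h2]
    split_ifs <;> push_cast <;> ring
  exact_mod_cast h3

end Bounds

/-! ### Application to codes -/

section Codes
variable {F : Type} [Field F] [Fintype F]

/-- The case of odd `d`, with both parities of `n` in one formula. -/
lemma odd_bound (n d : ℕ) (hd : Odd d) (hdn : d ≤ n) (C : Finset (symG (Fin n) F))
    (hC : C.Nonempty) (hcode : ∀ A ∈ C, ∀ B ∈ C, A ≠ B → d ≤ (A.1 - B.1).rank) :
    C.card ≤ Fintype.card F ^ ((2 * (n / 2) + 1) * ((n + 1) / 2 - (d + 1) / 2 + 1)) := by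
  classical
  set χ := AddChar.FiniteField.primitiveChar_to_Complex F
  have hχ : χ.IsPrimitive := AddChar.FiniteField.primitiveChar_to_Complex_isPrimitive F
  obtain ⟨t, ht⟩ := hd
  set N := (n + 1) / 2 with hN
  set j := N - (d + 1) / 2 + 1 with hj
  have hjN : j ≤ N := by omega
  set f : symG (Fin n) F → ℤ := fun X => wt 1 (Fintype.card F) n j X.1.rank with hf
  have h1 := lp_bound f (fun ψ => by
    obtain ⟨Y, rfl⟩ := exists_chr χ hχ ψ
    exact FT_wt_one_nat χ hχ n j Y) C hC (fun A hA B hB hAB => by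
      have := hcode A hA B hB hAB
      refine gb_eq_zero _ ?_
      change (n + 1) / 2 - ((A.1 - B.1).rank + 1) / 2 < j
      omega)
  have h2 : ((∑ X, f X : ℤ) : ℂ) = FT χ (wt 1 (Fintype.card F) n j) (0 : Matrix (Fin n) (Fin n) F) := by
    simp [FT, hf]
  rw [FT_wt_one_zero χ hχ] at h2
  have h3 := Int.cast_injective h2
  have h4 : f 0 = gb ((Fintype.card F : ℤ) ^ 2) N j := by
    simp [hf, wt, hN]
  have hq : (0 : ℤ) < Fintype.card F := by exact_mod_cast (Fintype.card_pos : 0 < Fintype.card F)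
  have hg := gb_pos ((Fintype.card F : ℤ) ^ 2) (by positivity) hjN
  rw [h3, h4, card_symG, ← hN] at h1
  set c : ℤ := (Fintype.card F : ℤ) ^ (2 * (n / 2) + 1) with hc
  have hcpos : 0 < c := by positivity
  have h5 : c ^ N = c ^ (N - j) * c ^ j := by rw [← pow_add]; congr 1; omega
  push_cast at h1
  rw [h5] at h1
  have h6 : (C.card : ℤ) ≤ c ^ j := by
    refine le_of_mul_le_mul_left ?_ (show 0 < gb ((Fintype.card F : ℤ) ^ 2) N j * c ^ (N - j) by
      positivity)
    linarith
  rw [hc] at h6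
  rw [pow_mul]
  exact_mod_cast h6

/-- The case of even `d`, with both parities of `n` in one formula. -/
lemma even_bound (n d : ℕ) (hd : Even d)
    (hd1 : 1 ≤ d) (hdn : d ≤ n) (H : AddSubgroup (symG (Fin n) F)) [Fintype H]
    (hcode : ∀ A ∈ H, A ≠ 0 → d ≤ A.1.rank) :
    Fintype.card H ≤ Fintype.card F ^ ((n + 1) / 2 * (2 * (n / 2) + 2 - d)) := by
  classical
  set χ := AddChar.FiniteField.primitiveChar_to_Complex F
  have hχ : χ.IsPrimitive := AddChar.FiniteField.primitiveChar_to_Complex_isPrimitive F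
  obtain ⟨t, ht⟩ := hd
  set j := n / 2 - t + 1 with hj
  set e := (n + 1) / 2 * (2 * (n / 2 - j) + 1) with he
  set f : symG (Fin n) F → ℤ := fun X => wt 0 (Fintype.card F) n j X.1.rank with hf
  have h1 := subgroup_dvd f (Fintype.card F ^ e) (fun ψ => by
    obtain ⟨Y, rfl⟩ := exists_chr χ hχ ψ
    push_cast
    exact FT_wt_zero_dvd χ hχ n j Y) H (fun A hA hA0 => by
      have := hcode A hA hA0
      refine gb_eq_zero _ ?_
      omega)
  have h4 : f 0 = gb ((Fintype.card F : ℤ) ^ 2) (n / 2) j := by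
    simp [hf, wt]
  have hcop : IsCoprime ((Fintype.card H * Fintype.card F ^ e : ℕ) : ℤ) (f 0) := by
    have hpc : IsCoprime (Fintype.card F : ℤ) (f 0) := by
      obtain ⟨k, hk⟩ := gb_mod ((Fintype.card F : ℤ) ^ 2) (show j ≤ n / 2 by omega)
      rw [h4]
      exact ⟨-(Fintype.card F * k), 1, by linear_combination hk⟩
    have hHd : Fintype.card H ∣ Fintype.card (symG (Fin n) F) := by
      simpa only [Nat.card_eq_fintype_card] using AddSubgroup.card_addSubgroup_dvd_card H
    rw [card_symG, ← pow_mul] at hHd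
    have hH : IsCoprime (Fintype.card H : ℤ) (f 0) := by
      refine IsCoprime.of_isCoprime_of_dvd_left (hpc.pow_left (m := (2 * (n / 2) + 1) * ((n + 1) / 2))) ?_
      exact_mod_cast hHd
    push_cast
    exact hH.mul_left hpc.pow_left
  have h5 := hcop.dvd_of_dvd_mul_right h1
  have h6 : Fintype.card H * Fintype.card F ^ e ≤ Fintype.card (symG (Fin n) F) :=
    Nat.le_of_dvd Fintype.card_pos (by exact_mod_cast h5)
  have hE : (2 * (n / 2) + 1) * ((n + 1) / 2) = (n + 1) / 2 * (2 * (n / 2) + 2 - d) + e := by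
    rw [he, ← mul_add, mul_comm]
    congr 1
    omega
  rw [card_symG, ← pow_mul, hE, pow_add] at h6
  exact Nat.le_of_mul_le_mul_right h6 (pow_pos Fintype.card_pos _)

end Codes

/-- Upper bound on the size of (additive, when `d` is even) `d`-codes in the
space of symmetric `n × n` matrices over the finite field with `q` elements. -/
theorem stmt_0 (p m q n d : ℕ) (hp : p.Prime) (hm : 0 < m) (hq : q = p ^ m)
    (hd1 : 1 ≤ d) (hdn : d ≤ n)
    (F : Type) [Field F] [Fintype F] (hF : Fintype.card F = q)
    (C : Finset (Matrix (Fin n) (Fin n) F))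
    (hsymm : ∀ A ∈ C, A.IsSymm)
    (hcard : 2 ≤ C.card)
    (hcode : ∀ A ∈ C, ∀ B ∈ C, A ≠ B → d ≤ (A - B).rank)
    (hadd : Even d → ∀ A ∈ C, ∀ B ∈ C, A + B ∈ C) :
    (Even (n - d) → C.card ≤ q ^ (n * (n - d + 2) / 2)) ∧
    (Odd (n - d) → C.card ≤ q ^ ((n + 1) * (n - d + 1) / 2)) := by
  classical
  obtain ⟨A₀, hA₀⟩ : C.Nonempty := Finset.card_pos.1 (by omega)
  rcases Nat.even_or_odd d with hd | hd
  -- A finite set of matrices over `F` closed under addition is a subgroup, as `q A = 0`.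
  · have hnsmul : ∀ A ∈ C, ∀ k : ℕ, (k + 1) • A ∈ C := by
      intro A hA k
      induction k with
      | zero => simpa using hA
      | succ k ih => rw [succ_nsmul]; exact hadd hd _ ih _ hA
    have hcardF : 2 ≤ Fintype.card F := Fintype.one_lt_card
    have hzero : ∀ A : Matrix (Fin n) (Fin n) F, Fintype.card F • A = 0 := by
      intro A
      ext i j
      simp [nsmul_eq_mul]
    let H : AddSubgroup (symG (Fin n) F) :=
      { carrier := {X | X.1 ∈ C}
        add_mem' := fun {A B} hA hB => hadd hd A.1 hA B.1 hB
        zero_mem' := by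
          have := hnsmul A₀ hA₀ (Fintype.card F - 1)
          rw [show Fintype.card F - 1 + 1 = Fintype.card F by omega, hzero] at this
          exact this
        neg_mem' := by
          intro A hA
          have h1 := hnsmul A.1 hA (Fintype.card F - 2)
          have h2 := hzero A.1
          rw [show Fintype.card F = Fintype.card F - 2 + 1 + 1 by omega, succ_nsmul] at h2
          rw [eq_neg_of_add_eq_zero_left h2] at h1
          exact h1 }
    have hHC : Fintype.card H = C.card := by
      rw [← Fintype.card_coe]
      exact Fintype.card_congr
        { toFun := fun X => ⟨X.1.1, X.2⟩
          invFun := fun A => ⟨⟨A.1, hsymm _ A.2⟩, A.2⟩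
          left_inv := fun _ => rfl
          right_inv := fun _ => rfl }
    have h := even_bound n d hd hd1 hdn H (fun A hA hA0 => by
      have := hcode A.1 hA 0 H.zero_mem (fun h => hA0 (Subtype.ext h))
      simpa using this)
    rw [hHC, hF] at h
    obtain ⟨t, ht⟩ := hd
    constructor
    · rintro ⟨r, hr⟩
      convert h using 2
      rw [show n * (n - d + 2) = 2 * (n * (r + 1)) by rw [hr]; ring]
      rw [Nat.mul_div_cancel_left _ two_pos, show 2 * (n / 2) + 2 - d = 2 * (r + 1) by omega,
        ← mul_assoc]
      congr 1
      omega
    · rintro ⟨r, hr⟩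
      convert h using 2
      rw [show 2 * (n / 2) + 2 - d = n - d + 1 by omega,
        show n + 1 = 2 * ((n + 1) / 2) by omega, mul_assoc, Nat.mul_div_cancel_left _ two_pos]
      congr 1
      omega
  · set C' : Finset (symG (Fin n) F) := Finset.univ.filter (fun X => X.1 ∈ C) with hC'
    have hCC : C'.card = C.card := by
      refine Finset.card_bij (fun X _ => X.1) (fun X hX => by simpa [hC'] using hX)
        (fun X _ Y _ h => Subtype.ext h) (fun A hA => ⟨⟨A, hsymm A hA⟩, by simpa [hC'] using hA, rfl⟩)
    have h := odd_bound n d hd hdn C' (Finset.card_pos.1 (by omega)) (fun A hA B hB hAB => by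
      simp only [hC', Finset.mem_filter, Finset.mem_univ, true_and] at hA hB
      exact hcode _ hA _ hB (fun h => hAB (Subtype.ext h)))
    rw [hCC, hF] at h
    obtain ⟨t, ht⟩ := hd
    constructor
    · rintro ⟨r, hr⟩
      convert h using 2
      rw [show n * (n - d + 2) = 2 * (n * (r + 1)) by rw [hr]; ring]
      rw [Nat.mul_div_cancel_left _ two_pos]
      congr 1 <;> omega
    · rintro ⟨r, hr⟩
      convert h using 2
      rw [show (n + 1) * (n - d + 1) = 2 * ((n + 1) * (r + 1)) by rw [hr]; ring]
      rw [Nat.mul_div_cancel_left _ two_pos]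
      congr 1 <;> omega
end

section
/- Let q be an odd prime power, k = 3, n = 6, and let s be an integer with 0 < s < 6 and gcd(s, 6) = 1. Let η be a nonsquare in F_{q^6}. Then for all b0, b2 in the subfield F_{q^3} of F_{q^6} and all b1 ∈ F_{q^6} with (b0, b1, b2) ≠ (0, 0, 0), the F_q-linear map g : F_{q^6} → F_{q^6} given by g(x) = b0·x^{q^{3s}} + b1·x^{q^{2s}} + (b1 x)^{q^{4s}} + η b2·x^{q^{s}} + (η b2 x)^{q^{5s}} (exponents of q read modulo 6) has rank at least 4, i.e., its kernel has F_q-dimension at most 2. Consequently, the set T_{6,s,η} of symmetric bilinear forms (x, y) ↦ Tr(y·g(x)) on F_{q^6}, with b0, b2 ∈ F_{q^3} and b1 ∈ F_{q^6}, is a maximum F_q-linear 4-code in S_6(q) of size q^{12}. -/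
/-!
Let `φ` be the `q`-power Frobenius of the field `K` of order `q ^ 6`. For `s = 1` write
`g x = a φ³x + b φ²x + φ⁴(b x) + c φ x + φ⁵(c x)` with `a = b0`, `b = b1`, `c = η b2`; the case
`s = 5` has the same shape with `b`, `c` replaced by conjugates. Since `b2` lies in the subfield
of order `q ^ 3`, it is a square in `K`, so `c` is zero or a nonsquare.

In the coordinates `x, φ x, …, φ⁵ x` the form `Tr (y * g x)` has a symmetric Gram matrix with zero
diagonal (`gram`). If `g` has more than `q ^ 2` zeros, this matrix has rank at most `3`
(`gram_rank_le`), so its principal `4 × 4` minors vanish. Such a minor is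
`(A - B - C) ^ 2 - 4 B C`, where `A, B, C` are the products of complementary entries
(`det_hollow`). Two of these minors suffice (`coeffs_eq_zero`):

* On the indices `{0, 1, 3, 4}` the products are `c φ³c`, `a φ a` and `φ b φ⁴b`, all fixed by
  `φ³`. If `a, c ≠ 0`, then `c φ³c * a φ a` is a square in the subfield of order `q ^ 3`. There
  `a φ a = a ^ (q + 1)` is a square as `q` is odd, so the norm `c φ³c` is a square in the subfield
  and `c` is a square in `K`, a contradiction.
* If `c ≠ 0` and `a = 0`, the minors on `{0, 1, 3, 4}` and `{0, 1, 2, 3}` give `c φ³c = φ b φ⁴b`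
  and `c φ²c = b φ b`. With `u = c / φ b` this means `u φ³u = 1` and `c = φ³c * u φ u`, and
  Euler's criterion again makes `c` a square.
* If `c = 0`, the minor on `{0, 1, 2, 3}` gives `b = 0`, and then the other one gives `a = 0`.

The remaining claims follow from the nondegeneracy of the trace form (`eq_zero_of_trace`): the
radical of a difference of two forms is the kernel of the difference of the maps, and distinct
parameters give distinct forms, so the code has `q ^ 3 * q ^ 6 * q ^ 3` elements.
-/

/-! ### The Gram matrix and its rank -/

open Polynomial in
/-- A linearized polynomial of degree at most `q ^ 2` with more than `q ^ 2` roots is zero. -/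
lemma lin_coeff_eq_zero {K : Type*} [Field K] [Fintype K] {q : ℕ} (hq : 1 < q) (W : Set K)
    (hW : q ^ 2 < Nat.card W) (l0 l1 l2 : K)
    (h : ∀ x ∈ W, l0 * x + l1 * x ^ q + l2 * x ^ q ^ 2 = 0) : l0 = 0 ∧ l1 = 0 ∧ l2 = 0 := by
  classical
  set P : K[X] := C l0 * X + C l1 * X ^ q + C l2 * X ^ q ^ 2 with hP
  have hqq : q < q ^ 2 := by nlinarith
  have hdeg : P.natDegree ≤ q ^ 2 := by
    rw [hP]
    refine natDegree_add_le_of_degree_le (natDegree_add_le_of_degree_le ?_ ?_) ?_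
    · exact (natDegree_C_mul_le _ _).trans (by rw [natDegree_X]; omega)
    · exact (natDegree_C_mul_X_pow_le _ _).trans hqq.le
    · exact natDegree_C_mul_X_pow_le _ _
  have hP0 : P = 0 := by
    by_contra hne
    have hsub : W.toFinset.val ⊆ P.roots := by
      intro x hx
      have hx' : x ∈ W := by simpa using hx
      rw [mem_roots hne, IsRoot.def, hP]
      simpa using h x hx'
    have := card_le_degree_of_subset_roots hsub
    rw [Nat.card_eq_card_toFinset] at hW
    omega
  have h0 := congrArg (fun R : K[X] => R.coeff 1) hP0
  have h1 := congrArg (fun R : K[X] => R.coeff q) hP0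
  have h2 := congrArg (fun R : K[X] => R.coeff (q ^ 2)) hP0
  have e1 : (1 : ℕ) ≠ q := by omega
  have e2 : (1 : ℕ) ≠ q ^ 2 := by omega
  have e3 : q ≠ q ^ 2 := by omega
  simp only [hP, coeff_add, coeff_C_mul, coeff_X_pow, coeff_X, coeff_zero] at h0 h1 h2
  simp only [e1, e2, e3, e3.symm, if_true, if_false, mul_one, mul_zero,
    add_zero, zero_add] at h0 h1 h2
  exact ⟨h0, h1, h2⟩

/-- The Gram matrix, in the basis of conjugates `x, φ x, …, φ⁵ x`, of the form
`(x, y) ↦ Tr (y * g x)` with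
`g x = a φ³x + b φ²x + φ⁴(b x) + c φ x + φ⁵(c x)`, written for `φ⁶ = 1` and `φ³ a = a`. -/
def gram {K : Type*} [Field K] (φ : K →+* K) (a b c : K) : Matrix (Fin 6) (Fin 6) K :=
  !![0, c, b, a, φ (φ (φ (φ b))), φ (φ (φ (φ (φ c))));
     c, 0, φ c, φ b, φ a, φ (φ (φ (φ (φ b))));
     b, φ c, 0, φ (φ c), φ (φ b), φ (φ a);
     a, φ b, φ (φ c), 0, φ (φ (φ c)), φ (φ (φ b));
     φ (φ (φ (φ b))), φ a, φ (φ b), φ (φ (φ c)), 0, φ (φ (φ (φ c)));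
     φ (φ (φ (φ (φ c)))), φ (φ (φ (φ (φ b)))), φ (φ a), φ (φ (φ b)), φ (φ (φ (φ c))), 0]

/-- The vector of conjugates of `x`. -/
def conjVec {K : Type*} [Field K] (φ : K →+* K) (x : K) : Fin 6 → K :=
  ![x, φ x, φ (φ x), φ (φ (φ x)), φ (φ (φ (φ x))), φ (φ (φ (φ (φ x))))]

/-- The coordinates of `gram *ᵥ conjVec x` are the conjugates of `g x`. -/
lemma gram_mulVec_conjVec {K : Type*} [Field K] (φ : K →+* K)
    (h6 : ∀ x, φ (φ (φ (φ (φ (φ x))))) = x) {a b c : K} (ha : φ (φ (φ a)) = a) {x : K}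
    (hx : a * φ (φ (φ x)) + b * φ (φ x) + φ (φ (φ (φ (b * x)))) + c * φ x
      + φ (φ (φ (φ (φ (c * x))))) = 0) :
    (gram φ a b c).mulVec (conjVec φ x) = 0 := by
  have e1 := congrArg φ hx
  have e2 := congrArg φ e1
  have e3 := congrArg φ e2
  have e4 := congrArg φ e3
  have e5 := congrArg φ e4
  simp only [map_add, map_mul, h6, ha, map_zero] at hx e1 e2 e3 e4 e5
  funext i
  fin_cases i <;>
    simp only [gram, conjVec, Matrix.mulVec, dotProduct, Fin.sum_univ_six] <;> simp
  · linear_combination hx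
  · linear_combination e1
  · linear_combination e2
  · linear_combination e3
  · linear_combination e4
  · linear_combination e5

/-- More than `q ^ 2` zeros of `g` force the Gram matrix to have rank at most `3`: the vectors
of conjugates of these zeros already span three dimensions on the first three coordinates. -/
lemma gram_rank_le {K : Type*} [Field K] [Fintype K] {q : ℕ} (hq : 1 < q) (φ : K →+* K)
    (hφ : ∀ x, φ x = x ^ q) (M : Matrix (Fin 6) (Fin 6) K) (W : Set K)
    (hW : q ^ 2 < Nat.card W) (hM : ∀ x ∈ W, M.mulVec (conjVec φ x) = 0) : M.rank ≤ 3 := by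
  set π : (Fin 6 → K) →ₗ[K] (Fin 3 → K) := LinearMap.funLeft K K ![0, 1, 2] with hπ
  have htop : (LinearMap.ker M.mulVecLin).map π = ⊤ := by
    by_contra hne
    obtain ⟨f, hf0, hf⟩ := Submodule.exists_le_ker_of_lt_top _ (lt_top_iff_ne_top.2 hne)
    apply hf0
    have hfv : ∀ v, f v = f (Pi.single 0 1) * v 0 + f (Pi.single 1 1) * v 1
        + f (Pi.single 2 1) * v 2 := by
      intro v
      rw [LinearMap.pi_apply_eq_sum_univ f v, Fin.sum_univ_three]
      simp only [smul_eq_mul]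
      have hs : ∀ i : Fin 3, (fun j => if i = j then (1 : K) else 0) = Pi.single i 1 := by
        intro i; funext j; simp [Pi.single_apply, eq_comm]
      simp only [hs]; ring
    obtain ⟨z0, z1, z2⟩ := lin_coeff_eq_zero hq W hW (f (Pi.single 0 1)) (f (Pi.single 1 1))
      (f (Pi.single 2 1)) (by
        intro x hx
        have hmem : π (conjVec φ x) ∈ LinearMap.ker f :=
          hf (Submodule.mem_map_of_mem (by simpa using hM x hx))
        rw [LinearMap.mem_ker, hfv] at hmem
        simpa [hπ, LinearMap.funLeft_apply, conjVec, hφ, ← pow_mul, ← pow_two] using hmem)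
    refine LinearMap.ext fun v => ?_
    rw [hfv, z0, z1, z2]
    simp
  have h1 : 3 ≤ Module.finrank K (LinearMap.ker M.mulVecLin) := by
    have := Submodule.finrank_map_le π (LinearMap.ker M.mulVecLin)
    rw [htop, finrank_top] at this
    simpa using this
  have h2 := LinearMap.finrank_range_add_finrank_ker M.mulVecLin
  rw [Module.finrank_fin_fun] at h2
  unfold Matrix.rank
  omega

lemma minor_eq_zero {K : Type*} [Field K] (M : Matrix (Fin 6) (Fin 6) K) (hM : M.rank ≤ 3)
    (e : Fin 4 → Fin 6) : (M.submatrix e e).det = 0 := by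
  by_contra h
  have h1 := Matrix.rank_of_isUnit (M.submatrix e e)
    ((Matrix.isUnit_iff_isUnit_det _).2 (isUnit_iff_ne_zero.2 h))
  have h2 := M.rank_submatrix_le e e
  simp at h1
  omega

/-- For a symmetric `4 × 4` matrix with zero diagonal, the determinant depends only on the three
products `A, B, C` of complementary entries: it is `(A - B - C) ^ 2 - 4 B C`. -/
lemma det_hollow {K : Type*} [Field K] (x y z u v w : K) :
    !![0, x, y, z; x, 0, u, v; y, u, 0, w; z, v, w, 0].det =
      (x * w) ^ 2 + (y * v) ^ 2 + (z * u) ^ 2 - 2 * (x * w) * (y * v) - 2 * (y * v) * (z * u)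
        - 2 * (x * w) * (z * u) := by
  simp [Matrix.det_succ_row_zero, Fin.sum_univ_succ, Fin.succAbove]
  ring

/-- Vanishing of the principal minors on `{0, 1, 3, 4}` and `{0, 1, 2, 3}`. -/
lemma gram_minors {K : Type*} [Field K] (φ : K →+* K) (a b c : K)
    (h : (gram φ a b c).rank ≤ 3) :
    ((c * φ (φ (φ c))) ^ 2 + (a * φ a) ^ 2 + (φ b * φ (φ (φ (φ b)))) ^ 2
      - 2 * (c * φ (φ (φ c))) * (a * φ a) - 2 * (a * φ a) * (φ b * φ (φ (φ (φ b))))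
      - 2 * (c * φ (φ (φ c))) * (φ b * φ (φ (φ (φ b)))) = 0) ∧
    ((c * φ (φ c)) ^ 2 + (b * φ b) ^ 2 + (a * φ c) ^ 2
      - 2 * (c * φ (φ c)) * (b * φ b) - 2 * (b * φ b) * (a * φ c)
      - 2 * (c * φ (φ c)) * (a * φ c) = 0) := by
  constructor
  · have h1 := minor_eq_zero _ h ![0, 1, 3, 4]
    have h2 : (gram φ a b c).submatrix ![0, 1, 3, 4] ![0, 1, 3, 4] =
        !![0, c, a, φ (φ (φ (φ b))); c, 0, φ b, φ a; a, φ b, 0, φ (φ (φ c));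
          φ (φ (φ (φ b))), φ a, φ (φ (φ c)), 0] := by
      ext i j; fin_cases i <;> fin_cases j <;> rfl
    rw [h2, det_hollow] at h1
    linear_combination h1
  · have h1 := minor_eq_zero _ h ![0, 1, 2, 3]
    have h2 : (gram φ a b c).submatrix ![0, 1, 2, 3] ![0, 1, 2, 3] =
        !![0, c, b, a; c, 0, φ c, φ b; b, φ c, 0, φ (φ c); a, φ b, φ (φ c), 0] := by
      ext i j; fin_cases i <;> fin_cases j <;> rfl
    rw [h2, det_hollow] at h1
    linear_combination h1

/-! ### Principal minors and squares -/

/-- Euler's criterion in a field of order `(2 t + 1) ^ 2`. -/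
lemma isSquare_of_pow {K : Type*} [Field K] [Fintype K] {t : ℕ}
    (hK : Fintype.card K = (2 * t + 1) ^ 2) {c : K} (hc : c ≠ 0)
    (h : c ^ (2 * t * (t + 1)) = 1) : IsSquare c := by
  have hodd : (2 * t + 1) ^ 2 = 2 * (2 * t * (t + 1)) + 1 := by ring
  have h2 : ringChar K ≠ 2 := by
    intro h2
    have := FiniteField.even_card_of_char_two h2
    omega
  rw [FiniteField.isSquare_iff h2 hc, hK]
  rwa [show (2 * t + 1) ^ 2 / 2 = 2 * t * (t + 1) by omega]

/-- When `c` is zero or a nonsquare, the minors on `{0, 1, 3, 4}` and `{0, 1, 2, 3}` vanish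
simultaneously only for `a = b = c = 0`. If `c ≠ 0`, Euler's criterion shows that their
vanishing would make `c` a square, both for `a ≠ 0` and for `a = 0`. -/
lemma coeffs_eq_zero {K : Type*} [Field K] [Fintype K] {q : ℕ} (hodd : Odd q)
    (hK : Fintype.card K = q ^ 6) (φ : K →+* K) (hφ : ∀ x, φ x = x ^ q)
    (h6 : ∀ x, φ (φ (φ (φ (φ (φ x))))) = x) {a b c : K}
    (ha : φ (φ (φ a)) = a) (hc : c = 0 ∨ ¬ IsSquare c)
    (m1 : (c * φ (φ (φ c))) ^ 2 + (a * φ a) ^ 2 + (φ b * φ (φ (φ (φ b)))) ^ 2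
      - 2 * (c * φ (φ (φ c))) * (a * φ a) - 2 * (a * φ a) * (φ b * φ (φ (φ (φ b))))
      - 2 * (c * φ (φ (φ c))) * (φ b * φ (φ (φ (φ b)))) = 0)
    (m2 : (c * φ (φ c)) ^ 2 + (b * φ b) ^ 2 + (a * φ c) ^ 2
      - 2 * (c * φ (φ c)) * (b * φ b) - 2 * (b * φ b) * (a * φ c)
      - 2 * (c * φ (φ c)) * (a * φ c) = 0) : a = 0 ∧ b = 0 ∧ c = 0 := by
  have hz : ∀ x, φ x = 0 ↔ x = 0 := fun x => map_eq_zero φ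
  obtain ⟨r, hr⟩ := hodd
  obtain ⟨t, ht⟩ : Odd (q ^ 3) := Odd.pow ⟨r, hr⟩
  have h3 : ∀ x, φ (φ (φ x)) = x ^ (2 * t + 1) := by
    intro x; rw [← ht]; simp only [hφ, ← pow_mul]; congr 1; ring
  have hK' : Fintype.card K = (2 * t + 1) ^ 2 := by rw [hK, ← ht]; ring
  have h2 : (2 : K) ≠ 0 := by
    apply Ring.two_ne_zero
    intro h2
    have := FiniteField.even_card_of_char_two h2
    have hodd : (2 * t + 1) ^ 2 = 2 * (2 * t * (t + 1)) + 1 := by ring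
    omega
  -- A fixed point of `φ³` is killed by the exponent `q³ - 1 = 2 t`.
  have hfix : ∀ x, x ≠ 0 → φ (φ (φ x)) = x → x ^ (2 * t) = 1 := by
    intro x hx h
    rw [h3, pow_succ] at h
    exact mul_right_cancel₀ hx (by rw [h, one_mul])
  by_cases hc0 : c = 0
  · subst hc0
    have hb : b = 0 := by
      simp only [map_zero, mul_zero, zero_mul] at m2
      have : (b * φ b) ^ 2 = 0 := by linear_combination m2
      simpa [hz] using this
    subst hb
    simp only [map_zero, mul_zero, zero_mul] at m1
    have : (a * φ a) ^ 2 = 0 := by linear_combination m1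
    exact ⟨by simpa [hz] using this, rfl, rfl⟩
  · have hsq : ¬ IsSquare c := hc.resolve_left hc0
    exfalso
    have hc3 : φ (φ (φ c)) ≠ 0 := by simpa [hz] using hc0
    by_cases ha0 : a = 0
    · subst ha0
      simp only [map_zero, mul_zero, zero_mul] at m1 m2
      have e1 : c * φ (φ (φ c)) = φ b * φ (φ (φ (φ b))) := by
        have : (c * φ (φ (φ c)) - φ b * φ (φ (φ (φ b)))) ^ 2 = 0 := by linear_combination m1
        exact sub_eq_zero.1 (by simpa using this)
      have e2 : c * φ (φ c) = b * φ b := by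
        have : (c * φ (φ c) - b * φ b) ^ 2 = 0 := by linear_combination m2
        exact sub_eq_zero.1 (by simpa using this)
      have e3 := congrArg φ e2
      simp only [map_mul] at e3
      have hb1 : φ b ≠ 0 := by
        intro h; rw [h] at e1; simp [hc0, hz] at e1
      have hb2 : φ (φ b) ≠ 0 := by simpa [hz] using hb1
      have hb4 : φ (φ (φ (φ b))) ≠ 0 := by simpa [hz] using hb1
      -- `u = c / φ b` has norm one over the subfield fixed by `φ³`, and `c / φ³ c = u * φ u`.
      obtain ⟨u, hu⟩ : ∃ u, u = c / φ b := ⟨_, rfl⟩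
      have hu3 : u ^ (2 * t + 2) = 1 := by
        have : u * φ (φ (φ u)) = 1 := by
          rw [hu]; simp only [map_div₀]
          rw [div_mul_div_comm, e1, div_self (mul_ne_zero hb1 hb4)]
        rw [h3] at this
        rw [← this]; ring
      have hcu : c ^ (2 * t) * u ^ (2 * (r + 1)) = 1 := by
        have h : φ (φ (φ c)) * (u * φ u) = c := by
          rw [hu]; simp only [map_div₀]
          field_simp
          linear_combination e3
        rw [h3, hφ u, hr] at h
        apply mul_right_cancel₀ hc0
        rw [one_mul]
        nth_rewrite 3 [← h]
        ring
      apply hsq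
      apply isSquare_of_pow hK' hc0
      calc c ^ (2 * t * (t + 1))
          = c ^ (2 * t * (t + 1)) * (u ^ (2 * t + 2)) ^ (r + 1) := by rw [hu3]; simp
        _ = (c ^ (2 * t) * u ^ (2 * (r + 1))) ^ (t + 1) := by ring
        _ = 1 := by rw [hcu, one_pow]
    · -- All three products in the first minor are fixed by `φ³`; the quadratic relation
      -- makes `c φ³c * a φ a` the square of a fixed point `z`.
      obtain ⟨z, hz'⟩ : ∃ z, z = (φ b * φ (φ (φ (φ b))) - c * φ (φ (φ c)) - a * φ a) / 2 :=
        ⟨_, rfl⟩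
      have hzz : c * φ (φ (φ c)) * (a * φ a) = z ^ 2 := by
        rw [hz']; field_simp; linear_combination -m1
      have hzf : φ (φ (φ z)) = z := by
        rw [hz']
        simp only [map_div₀, map_sub, map_mul, h6, ha, map_ofNat]
        ring
      have ha1 : φ a ≠ 0 := by simpa [hz] using ha0
      have hz0 : z ≠ 0 := by
        intro h
        rw [h] at hzz
        simp [hc0, ha0, hz] at hzz
      have hzt := hfix z hz0 hzf
      have hat := hfix a ha0 ha
      rw [h3, hφ a, hr] at hzz
      apply hsq
      apply isSquare_of_pow hK' hc0
      calc c ^ (2 * t * (t + 1))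
          = c ^ (2 * t * (t + 1)) * (a ^ (2 * t)) ^ (r + 1) := by rw [hat]; simp
        _ = (c * c ^ (2 * t + 1) * (a * a ^ (2 * r + 1))) ^ t := by ring
        _ = z ^ (2 * t) := by rw [hzz]; ring
        _ = 1 := hzt

/-- The kernel bound, for `φ` the `q`-power Frobenius of the field of order `q ^ 6`. -/
lemma card_ker_le {K : Type*} [Field K] [Fintype K] {q : ℕ} (hodd : Odd q) (hq : 1 < q)
    (hK : Fintype.card K = q ^ 6) (φ : K →+* K) (hφ : ∀ x, φ x = x ^ q)
    (h6 : ∀ x, φ (φ (φ (φ (φ (φ x))))) = x) {a b c : K}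
    (ha : φ (φ (φ a)) = a) (hc : c = 0 ∨ ¬ IsSquare c) (hne : ¬ (a = 0 ∧ b = 0 ∧ c = 0)) :
    Nat.card {x : K | a * φ (φ (φ x)) + b * φ (φ x) + φ (φ (φ (φ (b * x)))) + c * φ x
      + φ (φ (φ (φ (φ (c * x))))) = 0} ≤ q ^ 2 := by
  by_contra hlt
  obtain ⟨m1, m2⟩ := gram_minors φ a b c (gram_rank_le hq φ hφ _ _ (not_le.1 hlt)
    fun x hx => gram_mulVec_conjVec φ h6 ha hx)
  exact hne (coeffs_eq_zero hodd hK φ hφ h6 ha hc m1 m2)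

/-! ### The trace form and the size of the code -/

open Polynomial in
/-- The trace form is nondegenerate: the trace polynomial has degree `q ^ 5 < q ^ 6`. -/
lemma eq_zero_of_trace {K : Type*} [Field K] [Fintype K] {q : ℕ} (hq : 1 < q)
    (hK : Fintype.card K = q ^ 6) {z : K}
    (h : ∀ y : K, ∑ i ∈ Finset.range 6, (y * z) ^ q ^ i = 0) : z = 0 := by
  by_contra hz
  set P : K[X] := ∑ i ∈ Finset.range 6, X ^ q ^ i with hP
  have hdeg : P.natDegree ≤ q ^ 5 := by
    refine natDegree_sum_le_of_forall_le _ _ fun i hi => ?_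
    rw [natDegree_X_pow]
    exact Nat.pow_le_pow_right (by omega) (by have := Finset.mem_range.1 hi; omega)
  have hcoeff : P.coeff (q ^ 5) = 1 := by
    rw [hP, finsetSum_coeff, Finset.sum_eq_single 5]
    · simp
    · intro i _ hi
      rw [coeff_X_pow, if_neg]
      intro he
      exact hi (Nat.pow_right_injective hq he).symm
    · simp
  have hP0 : P ≠ 0 := by
    intro h0
    simp [h0] at hcoeff
  have hsub : (Finset.univ : Finset K).val ⊆ P.roots := by
    intro x _
    rw [mem_roots hP0, IsRoot.def, hP, eval_finsetSum]
    have := h (x / z)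
    rw [div_mul_cancel₀ _ hz] at this
    simpa using this
  have h1 := card_le_degree_of_subset_roots hsub
  rw [Finset.card_univ, hK] at h1
  have : q ^ 5 < q ^ 6 := Nat.pow_lt_pow_right hq (by norm_num)
  omega

/-- The subfield of order `N` of the field of order `N ^ 2` is the fixed set of `x ↦ x ^ N`. -/
lemma ncard_fixed {K : Type*} [Field K] [Fintype K] {N : ℕ} (hN : 1 < N)
    (hK : Fintype.card K = N ^ 2) : {x : K | x ^ N = x}.ncard = N := by
  classical
  obtain ⟨k, rfl⟩ : ∃ k, N = k + 1 := ⟨N - 1, by omega⟩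
  have hset : {x : K | x ^ (k + 1) = x} =
      insert 0 (Units.val '' ((powMonoidHom k : Kˣ →* Kˣ).ker : Set Kˣ)) := by
    ext x
    simp only [Set.mem_ofPred_eq, Set.mem_insert_iff, Set.mem_image, SetLike.mem_coe,
      MonoidHom.mem_ker, powMonoidHom_apply]
    constructor
    · intro h
      by_cases hx : x = 0
      · exact Or.inl hx
      · refine Or.inr ⟨Units.mk0 x hx, ?_, rfl⟩
        ext
        rw [pow_succ] at h
        simpa using mul_right_cancel₀ hx (by rw [h, one_mul] : x ^ k * x = 1 * x)
    · rintro (rfl | ⟨u, hu, rfl⟩)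
      · simp
      · rw [pow_succ, ← Units.val_pow_eq_pow_val, hu]; simp
  rw [hset, Set.ncard_insert_of_notMem, Set.ncard_image_of_injective _ Units.val_injective]
  · have : Nat.card (powMonoidHom k : Kˣ →* Kˣ).ker = k := by
      rw [IsCyclic.card_powMonoidHom_ker, Nat.card_eq_fintype_card, Fintype.card_units, hK]
      refine Nat.gcd_eq_right ⟨k + 2, ?_⟩
      rw [Nat.sub_eq_iff_eq_add (by nlinarith)]
      ring
    rw [← Nat.card_coe_set_eq]
    simpa using this
  · rintro ⟨u, -, hu⟩
    exact u.ne_zero hu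


/-- The family `T_{6,s,η}` of symmetric bilinear forms on `F_{q^6}` is a maximum
`F_q`-linear 4-code in `S_6(q)`: every nonzero `g` in the family has kernel of
`F_q`-dimension at most 2 (i.e. at most `q^2` elements), the code has size `q^12`,
is `F_q`-linear, and differences of distinct forms have radical of size at most `q^2`
(rank at least 4). -/
theorem stmt_1 (p m q : ℕ) (hp : p.Prime) (hpodd : Odd p) (hm : 0 < m) (hq : q = p ^ m)
    (K : Type) [Field K] [Fintype K] (hK : Fintype.card K = q ^ 6)
    (s : ℕ) (hs0 : 0 < s) (hs6 : s < 6) (hgcd : Nat.gcd s 6 = 1)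
    (η : K) (hη : ¬ ∃ z : K, z ^ 2 = η)
    (g : K → K → K → K → K)
    (hg : g = fun b0 b1 b2 x =>
      b0 * x ^ q ^ (3 * s % 6) + b1 * x ^ q ^ (2 * s % 6) + (b1 * x) ^ q ^ (4 * s % 6)
        + η * b2 * x ^ q ^ (s % 6) + (η * b2 * x) ^ q ^ (5 * s % 6))
    (Tr : K → K) (hTr : Tr = fun z => ∑ i ∈ Finset.range 6, z ^ q ^ i)
    (T : Set (K → K → K))
    (hT : T = {B | ∃ b0 b1 b2 : K, b0 ^ q ^ 3 = b0 ∧ b2 ^ q ^ 3 = b2 ∧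
      B = fun x y => Tr (y * g b0 b1 b2 x)}) :
    (∀ b0 b1 b2 : K, b0 ^ q ^ 3 = b0 → b2 ^ q ^ 3 = b2 → ¬ (b0 = 0 ∧ b1 = 0 ∧ b2 = 0) →
      Nat.card {x : K | g b0 b1 b2 x = 0} ≤ q ^ 2) ∧
    Nat.card T = q ^ 12 ∧
    (∀ B1 ∈ T, ∀ B2 ∈ T, (fun x y => B1 x y + B2 x y) ∈ T) ∧
    (∀ c : K, c ^ q = c → ∀ B ∈ T, (fun x y => c * B x y) ∈ T) ∧
    (∀ B1 ∈ T, ∀ B2 ∈ T, B1 ≠ B2 →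
      Nat.card {x : K | ∀ y : K, B1 x y = B2 x y} ≤ q ^ 2) := by
  classical
  have hqodd : Odd q := by rw [hq]; exact hpodd.pow
  have hq1 : 1 < q := by rw [hq]; exact Nat.one_lt_pow hm.ne' hp.one_lt
  have : Fact p.Prime := ⟨hp⟩
  have : CharP K p := by
    refine charP_of_card_eq_prime_pow (f := m * 6) ?_
    rw [hK, hq, ← pow_mul]
  have hqi : ∀ i, q ^ i = p ^ (m * i) := fun i => by rw [hq, ← pow_mul]
  have hadd : ∀ (i : ℕ) (x y : K), (x + y) ^ q ^ i = x ^ q ^ i + y ^ q ^ i := by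
    intro i x y; rw [hqi, add_pow_char_pow]
  have hsub : ∀ (i : ℕ) (x y : K), (x - y) ^ q ^ i = x ^ q ^ i - y ^ q ^ i := by
    intro i x y; rw [hqi, sub_pow_char_pow]
  have h6 : ∀ x : K, x ^ q ^ 6 = x := fun x => by rw [← hK, FiniteField.pow_card]
  obtain ⟨φ, hφ⟩ : ∃ φ : K →+* K, ∀ x, φ x = x ^ q :=
    ⟨iterateFrobenius K p m, fun x => by rw [iterateFrobenius_def, hq]⟩
  have w2 : ∀ x, φ (φ x) = x ^ q ^ 2 := fun x => by simp only [hφ, ← pow_mul]; congr 1; ring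
  have w3 : ∀ x, φ (φ (φ x)) = x ^ q ^ 3 := fun x => by rw [w2, hφ, ← pow_mul]; congr 1; ring
  have w4 : ∀ x, φ (φ (φ (φ x))) = x ^ q ^ 4 := fun x => by
    rw [w3, hφ, ← pow_mul]; congr 1; ring
  have w5 : ∀ x, φ (φ (φ (φ (φ x)))) = x ^ q ^ 5 := fun x => by
    rw [w4, hφ, ← pow_mul]; congr 1; ring
  have w6 : ∀ x, φ (φ (φ (φ (φ (φ x))))) = x := fun x => by
    rw [w5, hφ, ← pow_mul, ← pow_succ', h6]
  have hφ0 : ∀ x, φ x = 0 ↔ x = 0 := fun x => map_eq_zero φ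
  obtain ⟨t, ht⟩ : Odd (q ^ 3) := hqodd.pow
  -- Elements of the subfield of order `q ^ 3` are squares, so `η * b2` is zero or a nonsquare.
  have hns : ∀ b2 : K, b2 ^ q ^ 3 = b2 → b2 ≠ 0 → ¬ IsSquare (η * b2) := by
    rintro b2 hb hb0 ⟨z, hz⟩
    have hb1 : b2 ^ (2 * t) = 1 := by
      rw [ht, pow_succ] at hb
      exact mul_right_cancel₀ hb0 (by rw [hb, one_mul])
    obtain ⟨w, hw⟩ : IsSquare b2 := by
      refine isSquare_of_pow (t := t) ?_ hb0 ?_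
      · rw [hK, ← ht]; ring
      · rw [pow_mul, hb1, one_pow]
    have hw0 : w ≠ 0 := by rintro rfl; simp [hw] at hb0
    refine hη ⟨z / w, ?_⟩
    rw [div_pow, div_eq_iff (pow_ne_zero 2 hw0), pow_two, pow_two, ← hz, hw]
  have hs : s = 1 ∨ s = 5 := by
    interval_cases s <;> simp_all
  have hker : ∀ b0 b1 b2 : K, b0 ^ q ^ 3 = b0 → b2 ^ q ^ 3 = b2 →
      ¬ (b0 = 0 ∧ b1 = 0 ∧ b2 = 0) → Nat.card {x : K | g b0 b1 b2 x = 0} ≤ q ^ 2 := by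
    intro b0 b1 b2 h0 h2 hne
    have hη0 : η ≠ 0 := by rintro rfl; exact hη ⟨0, by simp⟩
    have hcs : η * b2 = 0 ∨ ¬ IsSquare (η * b2) := by
      by_cases hb : b2 = 0
      · left; simp [hb]
      · exact Or.inr (hns b2 h2 hb)
    rcases hs with rfl | rfl
    · convert card_ker_le hqodd hq1 hK φ hφ w6 (a := b0) (b := b1) (c := η * b2)
        (by rw [w3, h0]) hcs (by simpa [hη0] using hne) using 5 with x
      rw [hg, w5, w4, w3, w2, hφ]
      norm_num
    · -- For `s = 5` the exponents are reversed, which amounts to `s = 1` with `b1` and `η * b2`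
      -- replaced by conjugates.
      convert card_ker_le hqodd hq1 hK φ hφ w6 (a := b0) (b := φ (φ b1))
        (c := φ (η * b2)) (by rw [w3, h0]) ?_
        (by simpa [hη0, hφ0] using hne) using 5 with x
      · rw [hg, map_mul φ (φ (η * b2)), map_mul φ (φ (φ b1))]
        simp only [map_mul, w6]
        simp only [hφ]
        norm_num [mul_pow]
        ring_nf
      · rcases hcs with h | h
        · left; simp [h]
        · refine Or.inr ?_
          rintro ⟨z, hz⟩
          exact h ⟨φ (φ (φ (φ (φ z)))), by simp only [← map_mul, ← hz, w6]⟩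
  have hgsub : ∀ a0 a1 a2 b0 b1 b2 x : K, g a0 a1 a2 x - g b0 b1 b2 x =
      g (a0 - b0) (a1 - b1) (a2 - b2) x := by
    intro a0 a1 a2 b0 b1 b2 x
    simp only [hg, mul_pow, hsub]
    ring
  have hTrsub : ∀ x y, Tr x - Tr y = Tr (x - y) := by
    intro x y
    simp only [hTr, hsub, Finset.sum_sub_distrib]
  have hTradd : ∀ x y, Tr x + Tr y = Tr (x + y) := by
    intro x y
    simp only [hTr, hadd, Finset.sum_add_distrib]
  have hTrnd : ∀ z, (∀ y, Tr (y * z) = 0) → z = 0 := by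
    intro z h
    exact eq_zero_of_trace hq1 hK (by simpa only [hTr] using h)
  -- The radical of a difference of two forms lies in the kernel of the difference map.
  have hrad : ∀ (a0 a1 a2 b0 b1 b2 x : K),
      (∀ y, Tr (y * g a0 a1 a2 x) = Tr (y * g b0 b1 b2 x)) →
        g (a0 - b0) (a1 - b1) (a2 - b2) x = 0 := by
    intro a0 a1 a2 b0 b1 b2 x h
    apply hTrnd
    intro y
    rw [← hgsub, mul_sub, ← hTrsub, h, sub_self]
  have hfsub : ∀ x y : K, x ^ q ^ 3 = x → y ^ q ^ 3 = y → (x - y) ^ q ^ 3 = x - y := by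
    intro x y hx hy; rw [hsub, hx, hy]
  refine ⟨hker, ?_, ?_, ?_, ?_⟩
  · set S : Set (K × K × K) := {x : K | x ^ q ^ 3 = x} ×ˢ Set.univ ×ˢ {x : K | x ^ q ^ 3 = x}
      with hS
    set F : K × K × K → K → K → K := fun b x y => Tr (y * g b.1 b.2.1 b.2.2 x) with hF
    have hTS : T = F '' S := by
      rw [hT]
      ext B
      constructor
      · rintro ⟨b0, b1, b2, h0, h2, rfl⟩
        exact ⟨(b0, b1, b2), ⟨h0, trivial, h2⟩, rfl⟩
      · rintro ⟨⟨b0, b1, b2⟩, ⟨h0, -, h2⟩, rfl⟩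
        exact ⟨b0, b1, b2, h0, h2, rfl⟩
    have hinj : Set.InjOn F S := by
      rintro ⟨a0, a1, a2⟩ ⟨ha0, -, ha2⟩ ⟨b0, b1, b2⟩ ⟨hb0, -, hb2⟩ hab
      by_contra hne
      have h1 := hker (a0 - b0) (a1 - b1) (a2 - b2) (hfsub _ _ ha0 hb0) (hfsub _ _ ha2 hb2)
        (by simpa [sub_eq_zero] using hne)
      have h2 : {x : K | g (a0 - b0) (a1 - b1) (a2 - b2) x = 0} = Set.univ := by
        refine Set.eq_univ_of_forall fun x => hrad _ _ _ _ _ _ x fun y => ?_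
        exact congrFun (congrFun hab x) y
      rw [h2, Nat.card_coe_set_eq, Set.ncard_univ, Nat.card_eq_fintype_card, hK] at h1
      have : q ^ 2 < q ^ 6 := Nat.pow_lt_pow_right hq1 (by norm_num)
      omega
    have hfix : {x : K | x ^ q ^ 3 = x}.ncard = q ^ 3 :=
      ncard_fixed (Nat.one_lt_pow (by norm_num) hq1) (by rw [hK]; ring)
    rw [hTS, Nat.card_coe_set_eq, hinj.ncard_image, hS, Set.ncard_prod, Set.ncard_prod, hfix,
      Set.ncard_univ, Nat.card_eq_fintype_card, hK]
    ring
  · rw [hT]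
    rintro _ ⟨a0, a1, a2, ha0, ha2, rfl⟩ _ ⟨b0, b1, b2, hb0, hb2, rfl⟩
    refine ⟨a0 + b0, a1 + b1, a2 + b2, by rw [hadd, ha0, hb0], by rw [hadd, ha2, hb2], ?_⟩
    funext x y
    rw [hTradd]
    congr 1
    simp only [hg, mul_pow, hadd]
    ring
  · rw [hT]
    rintro c hc _ ⟨b0, b1, b2, hb0, hb2, rfl⟩
    have hci : ∀ i, c ^ q ^ i = c := by
      intro i
      induction i with
      | zero => simp
      | succ i ih => rw [pow_succ, pow_mul, ih, hc]
    refine ⟨c * b0, c * b1, c * b2, by rw [mul_pow, hci, hb0], by rw [mul_pow, hci, hb2], ?_⟩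
    funext x y
    have h1 : g (c * b0) (c * b1) (c * b2) x = c * g b0 b1 b2 x := by
      simp only [hg, mul_pow, hci]
      ring
    rw [h1, mul_left_comm]
    simp only [hTr, mul_pow _ _ (_ ^ _), Finset.mul_sum, hci]
  · rw [hT]
    rintro _ ⟨a0, a1, a2, ha0, ha2, rfl⟩ _ ⟨b0, b1, b2, hb0, hb2, rfl⟩ hne
    refine le_trans ?_ (hker (a0 - b0) (a1 - b1) (a2 - b2) (hfsub _ _ ha0 hb0)
      (hfsub _ _ ha2 hb2) ?_)
    · exact Nat.card_mono (Set.toFinite _) fun x hx => hrad _ _ _ _ _ _ x hx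
    · rintro ⟨h0, h1, h2⟩
      rw [sub_eq_zero] at h0 h1 h2
      exact hne (by rw [h0, h1, h2])
end

section
/- Let q be an odd prime power, k = 4, n = 8, and let s be an integer with 0 < s < 8 and gcd(s, 8) = 1. Let η be a nonsquare in F_{q^8}. Then for all b0, b2 in the subfield F_{q^4} of F_{q^8} and all b1 ∈ F_{q^8} with (b0, b1, b2) ≠ (0, 0, 0), the F_q-linear map g : F_{q^8} → F_{q^8} given by g(x) = b0·x^{q^{4s}} + b1·x^{q^{3s}} + (b1 x)^{q^{5s}} + η b2·x^{q^{2s}} + (η b2 x)^{q^{6s}} (exponents of q read modulo 8) has rank at least 6, i.e., its kernel has F_q-dimension at most 2. Consequently, the set T_{8,s,η} of symmetric bilinear forms (x, y) ↦ Tr(y·g(x)) on F_{q^8}, with b0, b2 ∈ F_{q^4} and b1 ∈ F_{q^8}, is a maximum F_q-linear 6-code in S_8(q) of size q^{16}. -/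
/-!
Write `F = F_q`, `K = F_{q^8}`, `σ x = x ^ q ^ s` and `c = η b₂`. The map `g` is self-adjoint for the
trace form. If its kernel has more than `q ^ 2` elements, the symmetric form `Tr (y * g x)` has rank
at most 5; diagonalizing it and comparing coefficients of `σ ^ j` (`exists_gram`) gives `dₖ ∈ F` and
`vₖ ∈ K`, `k < 5`, such that the coefficient of `σ ^ j` in `g` is `∑ dₖ vₖ σ^j(vₖ)`. So for the
quinary form with diagonal `d`, the vector `v` is isotropic and orthogonal to `σ v`, and it pairs
with `σ² v` to `c`.

If `c = 0`, then `g` has nonzero coefficients only at `σ³, σ⁴, σ⁵`, and a triangular Gram matrix of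
size 6 (`gram_triangular`) shows that `b₁ = 0`; then `g = b₀ σ⁴` is injective, a contradiction.

If `c ≠ 0`, it is a nonsquare, because elements of `F_{q^4}` are squares in `K`. On the other hand
a quinary form over `F` is a multiple of the form on the hyperplane section of the Klein quadric
whose points are the lines of the symplectic generalized quadrangle of `P³` (`isSquare_diag`). Thus
`v` becomes a totally isotropic line `w` that meets `σ w`. Let `z` be a vector spanning the common
point, obtained as `z = pl w * pd (σ w) * u` with `u` rational; then `z ∧ σz = k · σw` and
`k · σ²k · σ(w · σ²w) = det (z, σz, σ²z, σ³z) = - e · σe`, with `e = ω(z, σ²z)` since the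
determinant is a Pfaffian in which the other terms vanish. All of `k · σ²k`, `e · σe`, `-1` and the
elements of `F` are squares in `K`, hence so is `c` (`isSquare_core`), a contradiction. That `k ≠ 0`
for some `u` is `bil_eq_zero_of_skew`.

The kernel bound together with nondegeneracy of the trace shows that distinct parameters give
distinct forms, whence the size `q ^ 16`, and bounds the radical of every difference.
-/

section
open Matrix

/-! ### Lines of the symplectic quadrangle and the Klein correspondence -/

/-- The polarization of the Plücker form `p₀₁p₂₃ - p₀₂p₁₃ + p₀₃p₁₂` restricted to the hyperplane
`p₀₁ + p₂₃ = 0`, in the coordinates `w = (p₀₁, p₀₂, p₁₃, p₀₃, p₁₂)`. Isotropic vectors are the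
lines of the symplectic generalized quadrangle, and two of them are orthogonal when the lines
meet. -/
def bil {K : Type*} [Field K] (w w' : Fin 5 → K) : K :=
  -2 * w 0 * w' 0 - w 1 * w' 2 - w 2 * w' 1 + w 3 * w' 4 + w 4 * w' 3

/-- The skew matrix `(p i j)` of Plücker coordinates, see `bil` for the ordering of `w`. -/
def pl {K : Type*} [Field K] (w : Fin 5 → K) : Matrix (Fin 4) (Fin 4) K :=
  !![0, w 0, w 1, w 3; -w 0, 0, w 4, w 2; -w 1, -w 4, 0, -w 0; -w 3, -w 2, w 0, 0]

/-- The dual Plücker matrix, in which `p₀₁, p₀₂, p₀₃` trade places with `p₂₃, -p₁₃, p₁₂`. -/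
def pd {K : Type*} [Field K] (w : Fin 5 → K) : Matrix (Fin 4) (Fin 4) K :=
  !![0, -w 0, -w 2, w 4; w 0, 0, w 3, -w 1; w 2, -w 3, 0, w 0; -w 4, w 1, -w 0, 0]

section
variable {K : Type*} [Field K]

/-- The Clifford relation for the pair `(pl, pd)`; with `pd_mul_pl` it says that the block matrices
`(0, pl w; pd w, 0)` generate a representation of the Clifford algebra of `bil`. -/
theorem pl_mul_pd (w w' : Fin 5 → K) : pl w * pd w' + pl w' * pd w = (-bil w w') • 1 := by
  ext i j
  fin_cases i <;> fin_cases j <;> simp [pl, pd, bil] <;> ring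

theorem pd_mul_pl (w w' : Fin 5 → K) : pd w * pl w' + pd w' * pl w = (-bil w w') • 1 := by
  ext i j
  fin_cases i <;> fin_cases j <;> simp [pl, pd, bil] <;> ring

/-- If `w` is isotropic, then `pl w` has rank at most 2 and its columns are points of the line
`w`; the bivector of two such points is therefore a multiple of `pl w`. -/
theorem wedge_pl (w : Fin 5 → K) (h : w 0 * w 0 + w 1 * w 2 - w 3 * w 4 = 0) (a b : Fin 4 → K)
    (i j : Fin 4) :
    (pl w *ᵥ a) i * (pl w *ᵥ b) j - (pl w *ᵥ a) j * (pl w *ᵥ b) i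
      = (a ⬝ᵥ (pl w *ᵥ b)) * pl w i j := by
  fin_cases i <;> fin_cases j <;>
    simp [pl, dotProduct, Matrix.mulVec, Fin.sum_univ_four] <;> grind

/-- The left side is the Laplace expansion of `det (x, y, z, t)`. Up to sign the determinant is the
Pfaffian of the Gram matrix of the four vectors for the symplectic form `ω`, and two of its three
terms vanish when `ω x y = ω y z = 0`. -/
theorem det_pfaff (x y z t : Fin 4 → K) (P : (Fin 4 → K) → (Fin 4 → K) → Fin 4 → Fin 4 → K)
    (hP : P = fun x y i j => x i * y j - x j * y i) (ω : (Fin 4 → K) → (Fin 4 → K) → K)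
    (hω : ω = fun x y => P x y 0 1 + P x y 2 3)
    (h1 : ω x y = 0) (h2 : ω y z = 0) :
    P x y 0 1 * P z t 2 3 + P x y 2 3 * P z t 0 1 - P x y 0 2 * P z t 1 3 - P x y 1 3 * P z t 0 2
      + P x y 0 3 * P z t 1 2 + P x y 1 2 * P z t 0 3 = - (ω x z * ω y t) := by
  subst hω
  subst hP
  simp only at *
  linear_combination (z 0 * t 1 - z 1 * t 0 + (z 2 * t 3 - z 3 * t 2)) * h1
    + (x 0 * t 1 - x 1 * t 0 + (x 2 * t 3 - x 3 * t 2)) * h2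

theorem pl_transpose (w : Fin 5 → K) : (pl w)ᵀ = - pl w := by
  ext i j
  fin_cases i <;> fin_cases j <;> simp [pl]

theorem pd_transpose (w : Fin 5 → K) : (pd w)ᵀ = - pd w := by
  ext i j
  fin_cases i <;> fin_cases j <;> simp [pd]

/-- For a chain of lines in which `w0, w1` meet and `w1, w2` meet, the matrix `pd w0 * pl w1 * pd w2`
is skew only if `w0` and `w2` meet as well or `w1 = 0`; the latter is expressed by pairing `w1` with
an arbitrary `w3`. -/
theorem bil_eq_zero_of_skew (h2 : (2 : K) ≠ 0) (w0 w1 w2 w3 : Fin 5 → K) (h00 : bil w0 w0 = 0)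
    (h01 : bil w0 w1 = 0) (h12 : bil w1 w2 = 0)
    (hT : pd w0 * pl w1 * pd w2 = pd w2 * pl w1 * pd w0) :
    bil w0 w2 = 0 ∨ bil w1 w3 = 0 := by
  by_contra! hc
  obtain ⟨hc, hc1⟩ := hc
  have a00 : pl w0 * pd w0 = 0 := by
    have h := pl_mul_pd w0 w0
    rw [h00, neg_zero, zero_smul, ← two_smul K] at h
    exact (smul_eq_zero.1 h).resolve_left h2
  have b01 : pd w0 * pl w1 = - (pd w1 * pl w0) := by
    have h := pd_mul_pl w0 w1
    rw [h01, neg_zero, zero_smul] at h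
    exact eq_neg_of_add_eq_zero_left h
  have a12 : pl w1 * pd w2 = - (pl w2 * pd w1) := by
    have h := pl_mul_pd w1 w2
    rw [h12, neg_zero, zero_smul] at h
    exact eq_neg_of_add_eq_zero_left h
  have a02 : pl w0 * pd w2 = (-bil w0 w2) • 1 - pl w2 * pd w0 :=
    eq_sub_of_add_eq (pl_mul_pd w0 w2)
  have b02 : pd w0 * pl w2 = (-bil w0 w2) • 1 - pd w2 * pl w0 :=
    eq_sub_of_add_eq (pd_mul_pl w0 w2)
  have s1 : pl w1 * pd w0 = 0 := by
    have e1 : pl w0 * pd w2 * (pl w1 * pd w0) = 0 := by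
      calc pl w0 * pd w2 * (pl w1 * pd w0) = pl w0 * (pd w2 * pl w1 * pd w0) := by noncomm_ring
        _ = pl w0 * pd w0 * (pl w1 * pd w2) := by rw [← hT]; noncomm_ring
        _ = 0 := by rw [a00, zero_mul]
    have e2 : pl w2 * pd w0 * (pl w1 * pd w0) = 0 := by
      calc pl w2 * pd w0 * (pl w1 * pd w0) = pl w2 * (pd w0 * pl w1) * pd w0 := by noncomm_ring
        _ = - (pl w2 * pd w1 * (pl w0 * pd w0)) := by rw [b01]; noncomm_ring
        _ = 0 := by rw [a00, mul_zero, neg_zero]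
    rw [a02, sub_mul, e2, sub_zero, smul_mul_assoc, one_mul] at e1
    exact (smul_eq_zero.1 e1).resolve_left (neg_ne_zero.2 hc)
  have s1' : pd w0 * pl w1 = 0 := by
    have h := congrArg Matrix.transpose s1
    rwa [Matrix.transpose_mul, pl_transpose, pd_transpose, neg_mul_neg, transpose_zero] at h
  have s2 : pl w1 = 0 := by
    have e1 : pl w1 * (pd w0 * pl w2) = 0 := by rw [← mul_assoc, s1, zero_mul]
    have e2 : pl w1 * (pd w2 * pl w0) = 0 := by
      rw [← mul_assoc, a12, neg_mul, mul_assoc, ← neg_eq_iff_eq_neg.2 b01, s1']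
      simp
    rw [b02, mul_sub, e2, sub_zero, mul_smul_comm, mul_one] at e1
    exact (smul_eq_zero.1 e1).resolve_left (neg_ne_zero.2 hc)
  have q (i j) : pl w1 i j = 0 := by rw [s2]; rfl
  have q0 := q 0 1
  have q1 := q 0 2
  have q2 := q 0 3
  have q3 := q 1 2
  have q4 := q 1 3
  simp [pl] at q0 q1 q2 q3 q4
  exact hc1 (by simp [bil, q0, q1, q2, q3, q4])

/-- A quadratic form vanishing on all `σ`-fixed vectors has a skew matrix. -/
theorem skew_of_forall_rational (σ : K →+* K) (T : Matrix (Fin 4) (Fin 4) K)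
    (h : ∀ u : Fin 4 → K, (∀ i, σ (u i) = u i) → u ⬝ᵥ (T *ᵥ u) = 0) : Tᵀ = - T := by
  have hd (i : Fin 4) : T i i = 0 := by
    have := h (Pi.single i 1) (fun j => by
      rcases eq_or_ne j i with rfl | hj
      · simp
      · simp [hj])
    simpa using this
  ext i j
  have := h (Pi.single i 1 + Pi.single j 1) (fun k => by
      simp only [Pi.add_apply, map_add, Pi.single_apply, apply_ite σ, map_one, map_zero])
  simp [Matrix.mulVec_add, hd] at this
  change T j i = - T i j
  linear_combination this

/-- An isotropic `w` orthogonal to `σ w` has `bil w (σ² w)` a square. The common points `z` of the lines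
`w` and `σ w` give `k · σ²k · σ (bil w (σ² w)) = det (z, σz, σ²z, σ³z) = - e · σe`, where
`z ∧ σz = k · σw` and `e = ω(z, σ²z)`. -/
theorem isSquare_core (h2 : (2 : K) ≠ 0) (σ : K →+* K) (hm1 : IsSquare (-1 : K))
    (hsq : ∀ e, IsSquare (e * σ e)) (hsq2 : ∀ e, IsSquare (e * σ (σ e)))
    (w : Fin 5 → K) (h0 : bil w w = 0) (h1 : bil w (σ ∘ w) = 0) :
    IsSquare (bil w (σ ∘ σ ∘ w)) := by
  have bσ (v v' : Fin 5 → K) : bil (σ ∘ v) (σ ∘ v') = σ (bil v v') := by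
    simp [bil, map_ofNat]
  by_cases hc : bil w (σ ∘ σ ∘ w) = 0
  · rw [hc]; exact IsSquare.zero
  have plσ (v : Fin 5 → K) : pl (σ ∘ v) = (pl v).map σ := by
    ext i j
    fin_cases i <;> fin_cases j <;> simp [pl]
  have pdσ (v : Fin 5 → K) : pd (σ ∘ v) = (pd v).map σ := by
    ext i j
    fin_cases i <;> fin_cases j <;> simp [pd]
  have h11 : bil (σ ∘ w) (σ ∘ w) = 0 := by rw [bσ, h0, map_zero]
  have h12 : bil (σ ∘ w) (σ ∘ σ ∘ w) = 0 := by rw [bσ, h1, map_zero]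
  have hc1 : bil (σ ∘ w) (σ ∘ σ ∘ σ ∘ w) = σ (bil w (σ ∘ σ ∘ w)) := bσ _ _
  -- a `σ`-fixed vector `u` at which the quadratic form `k` does not vanish: if there were none,
  -- its matrix would be skew
  obtain ⟨u, hu, hk⟩ : ∃ u : Fin 4 → K, (∀ i, σ (u i) = u i) ∧
      u ⬝ᵥ ((pd w * pl (σ ∘ w) * pd (σ ∘ σ ∘ w)) *ᵥ u) ≠ 0 := by
    by_contra! hcon
    have hT := skew_of_forall_rational σ _ hcon
    simp only [transpose_mul, pl_transpose, pd_transpose, mul_neg, neg_mul, neg_neg, neg_inj] at hT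
    rcases bil_eq_zero_of_skew h2 w (σ ∘ w) (σ ∘ σ ∘ w) (σ ∘ σ ∘ σ ∘ w) h0 h1 h12
      (by rw [← hT, mul_assoc]) with h | h
    · exact hc h
    · rw [hc1] at h
      exact hc ((map_eq_zero σ).1 h)
  have hufix : σ ∘ u = u := funext hu
  set k := u ⬝ᵥ ((pd w * pl (σ ∘ w) * pd (σ ∘ σ ∘ w)) *ᵥ u) with hkdef
  set z : Fin 4 → K := (pl w * pd (σ ∘ w)) *ᵥ u with hz
  have hz1 : σ ∘ z = (pl (σ ∘ w) * pd (σ ∘ σ ∘ w)) *ᵥ u := by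
    funext i
    rw [plσ w, pdσ (σ ∘ w), ← Matrix.map_mul, hz, Function.comp_apply, RingHom.map_mulVec, hufix]
  -- `z` is the common point of the lines `w` and `σ w`, so `z` and `σ z` span the line `σ w`
  have hw (i j : Fin 4) : z i * (σ ∘ z) j - z j * (σ ∘ z) i = k * pl (σ ∘ w) i j := by
    have hz0 : z = - (pl (σ ∘ w) *ᵥ (pd w *ᵥ u)) := by
      have h := pl_mul_pd w (σ ∘ w)
      rw [h1, neg_zero, zero_smul] at h
      rw [hz, eq_neg_of_add_eq_zero_left h, neg_mulVec, mulVec_mulVec]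
    have hq : (σ ∘ w) 0 * (σ ∘ w) 0 + (σ ∘ w) 1 * (σ ∘ w) 2 - (σ ∘ w) 3 * (σ ∘ w) 4 = 0 := by
      have := h11
      unfold bil at this
      have h3 : (2 : K) * ((σ ∘ w) 0 * (σ ∘ w) 0 + (σ ∘ w) 1 * (σ ∘ w) 2
        - (σ ∘ w) 3 * (σ ∘ w) 4) = 0 := by linear_combination -this
      exact (mul_eq_zero.1 h3).resolve_left h2
    have h := wedge_pl (σ ∘ w) hq (pd w *ᵥ u) (pd (σ ∘ σ ∘ w) *ᵥ u) i j
    have hk' : k = - ((pd w *ᵥ u) ⬝ᵥ (pl (σ ∘ w) *ᵥ (pd (σ ∘ σ ∘ w) *ᵥ u))) := by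
      rw [hkdef, mul_assoc, ← mulVec_mulVec, ← mulVec_mulVec, dotProduct_mulVec,
        ← mulVec_transpose, pd_transpose, neg_mulVec, neg_dotProduct]
    rw [hz1, hz0, ← mulVec_mulVec, hk']
    simp only [Pi.neg_apply]
    linear_combination -h
  have hw1 (i j : Fin 4) : (σ ∘ z) i * (σ ∘ σ ∘ z) j - (σ ∘ z) j * (σ ∘ σ ∘ z) i
      = σ k * pl (σ ∘ σ ∘ w) i j := by
    have h := congrArg σ (hw i j)
    rw [plσ (σ ∘ w)]
    simpa using h
  have hw2 (i j : Fin 4) : (σ ∘ σ ∘ z) i * (σ ∘ σ ∘ σ ∘ z) j - (σ ∘ σ ∘ z) j * (σ ∘ σ ∘ σ ∘ z) i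
      = σ (σ k) * pl (σ ∘ σ ∘ σ ∘ w) i j := by
    have h := congrArg σ (hw1 i j)
    rw [plσ (σ ∘ σ ∘ w)]
    simpa using h
  have hdet := det_pfaff z (σ ∘ z) (σ ∘ σ ∘ z) (σ ∘ σ ∘ σ ∘ z) _ rfl _ rfl
    (by simp only [hw]; simp [pl]) (by simp only [hw1]; simp [pl])
  simp only [hw, hw2] at hdet
  set e := z 0 * (σ ∘ σ ∘ z) 1 - z 1 * (σ ∘ σ ∘ z) 0
    + (z 2 * (σ ∘ σ ∘ z) 3 - z 3 * (σ ∘ σ ∘ z) 2) with he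
  have hfin : k * σ (σ k) * σ (bil w (σ ∘ σ ∘ w)) = -1 * (e * σ e) := by
    rw [← hc1]
    have : e * σ e = e * ((σ ∘ z) 0 * (σ ∘ σ ∘ σ ∘ z) 1 - (σ ∘ z) 1 * (σ ∘ σ ∘ σ ∘ z) 0
      + ((σ ∘ z) 2 * (σ ∘ σ ∘ σ ∘ z) 3 - (σ ∘ z) 3 * (σ ∘ σ ∘ σ ∘ z) 2)) := by
      simp [he]
    rw [this, neg_one_mul, ← hdet]
    simp [pl, bil]
    ring
  have hkk : k * σ (σ k) ≠ 0 := mul_ne_zero hk (by simpa using hk)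
  have hσc : IsSquare (σ (bil w (σ ∘ σ ∘ w))) := by
    rw [eq_div_of_mul_eq hkk ((mul_comm _ _).trans hfin)]
    exact (hm1.mul (hsq e)).div (hsq2 k)
  have hσ0 : σ (bil w (σ ∘ σ ∘ w)) ≠ 0 := by simpa using hc
  rw [← mul_div_cancel_right₀ (bil w (σ ∘ σ ∘ w)) hσ0]
  exact (hsq _).div hσc
end

/-! ### Quinary forms over finite fields -/

/-- A nondegenerate binary quadratic form over a finite field of odd order is universal. -/
theorem exists_two_squares {F : Type*} [Field F] [Fintype F] (h2 : (2 : F) ≠ 0) {d₁ d₂ : F}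
    (h₁ : d₁ ≠ 0) (h₂ : d₂ ≠ 0) (e : F) : ∃ x y : F, d₁ * x ^ 2 + d₂ * y ^ 2 = e := by
  have hodd : Fintype.card F % 2 = 1 := by
    exact FiniteField.odd_card_of_char_ne_two (fun h => h2 (by
      have := ringChar.Nat.cast_ringChar (R := F)
      rw [h] at this; exact_mod_cast this))
  obtain ⟨x, y, h⟩ := FiniteField.exists_root_sum_quadratic
    (f := Polynomial.C d₁ * Polynomial.X ^ 2)
    (g := Polynomial.C d₂ * Polynomial.X ^ 2 + Polynomial.C 0 * Polynomial.X + Polynomial.C (-e))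
    (Polynomial.degree_C_mul_X_pow 2 h₁) (Polynomial.degree_quadratic h₂) hodd
  refine ⟨x, y, ?_⟩
  simp at h
  linear_combination h

/-- Over a finite field of odd order the form `⟨d₁, d₂⟩` is equivalent to `⟨e, r⟩` for any prescribed
`e ≠ 0`. The change of variables is stated after extending scalars to `K`. -/
theorem exists_diag_change {F : Type*} [Field F] [Fintype F] (h2 : (2 : F) ≠ 0) {d₁ d₂ e : F}
    (h₁ : d₁ ≠ 0) (h₂ : d₂ ≠ 0) (he : e ≠ 0) (K : Type*) [Field K] [Algebra F K] :
    ∃ x y z t r : F, r ≠ 0 ∧ ∀ a b a' b' : K,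
      algebraMap F K d₁ * a * a' + algebraMap F K d₂ * b * b'
      = algebraMap F K e * (algebraMap F K x * a + algebraMap F K y * b) *
          (algebraMap F K x * a' + algebraMap F K y * b')
        + algebraMap F K r * (algebraMap F K z * a + algebraMap F K t * b) *
          (algebraMap F K z * a' + algebraMap F K t * b') := by
  obtain ⟨x, y, h⟩ := exists_two_squares h2 h₁ h₂ e
  refine ⟨d₁ * x / e, d₂ * y / e, -y, x, d₁ * d₂ / e, by positivity, fun a b a' b' => ?_⟩
  have h' := congrArg (algebraMap F K) h
  have he' : algebraMap F K e ≠ 0 := by simpa using he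
  simp only [map_add, map_mul, map_pow, map_div₀, map_neg] at h' ⊢
  generalize algebraMap F K e = E at *
  field_simp
  rw [← h']
  ring

/-- `isSquare_core` for an arbitrary nondegenerate diagonal form of dimension 5 over `F`: such a form
is a scalar multiple of `bil` after an `F`-rational change of coordinates. -/
theorem isSquare_diag {F K : Type*} [Field F] [Fintype F] [Field K] [Algebra F K]
    (h2 : (2 : F) ≠ 0) (hF : ∀ a : F, IsSquare (algebraMap F K a)) (σ : K →ₐ[F] K)
    (hsq : ∀ e, IsSquare (e * σ e)) (hsq2 : ∀ e, IsSquare (e * σ (σ e)))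
    (d : Fin 5 → F) (hd : ∀ k, d k ≠ 0) (v : Fin 5 → K)
    (h0 : ∑ k, algebraMap F K (d k) * v k * v k = 0)
    (h1 : ∑ k, algebraMap F K (d k) * v k * σ (v k) = 0) :
    IsSquare (∑ k, algebraMap F K (d k) * v k * σ (σ (v k))) := by
  obtain ⟨x, y, z, t, r, hr, H⟩ := exists_diag_change h2 (hd 0) (hd 1) (neg_ne_zero.2 (hd 2)) K
  obtain ⟨x', y', z', t', r', hr', H'⟩ :=
    exists_diag_change h2 hr (hd 3) (neg_ne_zero.2 (hd 4)) K
  have h2K : (2 : K) ≠ 0 := by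
    have : algebraMap F K 2 ≠ 0 := by simpa using h2
    simpa [map_ofNat] using this
  have hrK : algebraMap F K r' ≠ 0 := by simpa using hr'
  set U : K := algebraMap F K x * v 0 + algebraMap F K y * v 1 with hU
  set W : K := algebraMap F K z * v 0 + algebraMap F K t * v 1 with hW
  set U' : K := algebraMap F K x' * W + algebraMap F K y' * v 3 with hU'
  set W' : K := algebraMap F K z' * W + algebraMap F K t' * v 3 with hW'
  let w : Fin 5 → K := ![W', algebraMap F K (d 2 / r') * (v 2 - U), v 2 + U,
    algebraMap F K (- d 4 / r') * (v 4 - U'), v 4 + U']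
  have key (τ : K →ₐ[F] K) : ∑ k, algebraMap F K (d k) * v k * τ (v k)
      = algebraMap F K (- r' / 2) * bil w (τ ∘ w) := by
    have e1 := H (v 0) (v 1) (τ (v 0)) (τ (v 1))
    have e2 := H' W (v 3) (τ W) (τ (v 3))
    have tU : τ U = algebraMap F K x * τ (v 0) + algebraMap F K y * τ (v 1) := by simp [hU]
    have tW : τ W = algebraMap F K z * τ (v 0) + algebraMap F K t * τ (v 1) := by simp [hW]
    have tU' : τ U' = algebraMap F K x' * τ W + algebraMap F K y' * τ (v 3) := by simp [hU']
    have tW' : τ W' = algebraMap F K z' * τ W + algebraMap F K t' * τ (v 3) := by simp [hW']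
    rw [← tU, ← tW, ← hU, ← hW] at e1
    rw [← tU', ← tW', ← hU', ← hW'] at e2
    have hb : algebraMap F K (- r' / 2) * bil w (τ ∘ w) =
        algebraMap F K r' * W' * τ W' + algebraMap F K (d 2) * (v 2 * τ (v 2) - U * τ U)
        + algebraMap F K (d 4) * (v 4 * τ (v 4) - U' * τ U') := by
      simp [bil, w, map_ofNat]
      field_simp
      ring
    rw [hb, Fin.sum_univ_five]
    simp only [map_neg] at e1 e2
    linear_combination e1 + e2
  have hs : algebraMap F K (- r' / 2) ≠ 0 := by
    simp [hr', h2]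
  have k0 := key (AlgHom.id F K)
  have k1 := key σ
  have k2 := key (σ.comp σ)
  simp only [AlgHom.coe_id, id_eq, Function.id_comp, AlgHom.comp_apply, AlgHom.coe_comp] at k0 k1 k2
  rw [h0, eq_comm, mul_eq_zero, or_iff_right hs] at k0
  rw [h1, eq_comm, mul_eq_zero, or_iff_right hs] at k1
  rw [k2]
  refine (hF _).mul (isSquare_core h2K (σ : K →+* K) ?_ hsq hsq2 w k0 k1)
  simpa using hF (-1)

/-! ### Symmetric forms of small rank as Gram expressions -/

section
variable {F K : Type*} [Field F] [Field K] [Finite K] [Algebra F K]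

theorem algebraMap_trace_eq_sum_cyclic (hn : Module.finrank F K = 8) (σ : K ≃ₐ[F] K)
    (hσ : orderOf σ = 8) (x : K) :
    algebraMap F K (Algebra.trace F K x) = ∑ j : Fin 8, (σ ^ (j : ℕ)) x := by
  have := Finite.of_injective _ (FaithfulSMul.algebraMap_injective F K)
  have hfd : FiniteDimensional F K := Module.Finite.of_finite
  have hinj : Function.Injective fun j : Fin 8 => σ ^ (j : ℕ) := fun i j h => by
    have := pow_injOn_Iio_orderOf (x := σ) (by simp [hσ]) (by simp [hσ]) h
    exact Fin.ext this
  have hcard : Nat.card (K ≃ₐ[F] K) = 8 := (IsGalois.card_aut_eq_finrank F K).trans hn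
  have hbij : Function.Bijective fun j : Fin 8 => σ ^ (j : ℕ) :=
    hinj.bijective_of_nat_card_le (by rw [hcard, Nat.card_eq_fintype_card, Fintype.card_fin])
  rw [trace_eq_sum_automorphisms]
  exact (hbij.sum_comp (fun τ : K ≃ₐ[F] K => τ x)).symm

/-- Dedekind independence of the powers of `σ`. -/
theorem linearIndependent_cyclic {F K : Type*} [Field F] [Field K] [Algebra F K]
    (σ : K ≃ₐ[F] K) (hσ : orderOf σ = 8) (a : Fin 8 → K)
    (h : ∀ x, ∑ j : Fin 8, a j * (σ ^ (j : ℕ)) x = 0) (j : Fin 8) : a j = 0 := by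
  have hli := (linearIndependent_monoidHom K K).comp
    (fun j : Fin 8 => ((σ ^ (j : ℕ) : K ≃ₐ[F] K) : K →* K)) (fun i j hij => by
      have : σ ^ (i : ℕ) = σ ^ (j : ℕ) := AlgEquiv.ext fun x => DFunLike.congr_fun hij x
      have := pow_injOn_Iio_orderOf (x := σ) (by simp [hσ]) (by simp [hσ]) this
      exact Fin.ext this)
  refine Fintype.linearIndependent_iff.1 hli a ?_ j
  funext x
  simpa using h x

/-- If the symmetric form `trace (g x * y)` has radical of dimension at least 3, then diagonalizing it
writes the coefficients of `g`, as a polynomial in `σ`, as `a j = ∑ dₖ vₖ σ^j(vₖ)` with only five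
terms. The `vₖ` come from the trace-dual of an orthogonal basis; unused indices get `dₖ = 1` and
`vₖ = 0`. -/
theorem exists_gram [Fintype F] (h2 : (2 : F) ≠ 0) (hn : Module.finrank F K = 8) (σ : K ≃ₐ[F] K)
    (hσ : orderOf σ = 8) (g : K →ₗ[F] K) (a : Fin 8 → K)
    (hg : ∀ x, g x = ∑ j : Fin 8, a j * (σ ^ (j : ℕ)) x)
    (hsymm : ∀ x y, Algebra.trace F K (g x * y) = Algebra.trace F K (g y * x))
    (hker : Fintype.card F ^ 2 < Nat.card {x : K | g x = 0}) :
    ∃ (d : Fin 5 → F) (v : Fin 5 → K), (∀ k, d k ≠ 0) ∧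
      ∀ j : Fin 8, a j = ∑ k, algebraMap F K (d k) * v k * (σ ^ (j : ℕ)) (v k) := by
  classical
  have hfd : FiniteDimensional F K := Module.Finite.of_finite
  have : Invertible (2 : F) := invertibleOfNonzero h2
  let B : LinearMap.BilinForm F K := (Algebra.traceForm F K).comp g LinearMap.id
  have hB (x y : K) : B x y = Algebra.trace F K (g x * y) := rfl
  obtain ⟨e', he'⟩ := LinearMap.BilinForm.exists_orthogonal_basis (B := B)
    ⟨fun x y => by simp [hB, hsymm x y]⟩
  let e : Module.Basis (Fin 8) F K := e'.reindex (finCongr hn)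
  have he (i j : Fin 8) (hij : i ≠ j) : B (e i) (e j) = 0 := by
    simp only [e, Module.Basis.reindex_apply]
    exact he' (by simpa using hij)
  let d : Fin 8 → F := fun i => B (e i) (e i)
  let v := e.traceDual
  have hrepr (x : K) (i : Fin 8) : e.repr x i = Algebra.trace F K (v i * x) := by
    have := (e.traceDual).traceDual_repr_apply x i
    rw [Module.Basis.traceDual_traceDual] at this
    rw [this, Algebra.traceForm_apply, mul_comm]
  have hBe (x : K) (i : Fin 8) : B x (e i) = d i * e.repr x i := by
    conv_lhs => rw [← e.sum_repr x]
    rw [map_sum, LinearMap.sum_apply, Finset.sum_eq_single i]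
    · simp [d, mul_comm]
    · intro j _ hj
      simp [he j i hj]
    · simp
  have hgx (x : K) : g x = ∑ i, algebraMap F K (d i) * v i *
      algebraMap F K (Algebra.trace F K (v i * x)) := by
    conv_lhs => rw [← v.sum_repr (g x)]
    refine Finset.sum_congr rfl fun i _ => ?_
    have : v.repr (g x) i = d i * Algebra.trace F K (v i * x) := by
      rw [Module.Basis.traceDual_repr_apply, ← hrepr, ← hBe]; rfl
    rw [this, Algebra.smul_def, map_mul]
    ring
  have ha (j : Fin 8) : a j = ∑ i, algebraMap F K (d i) * v i * (σ ^ (j : ℕ)) (v i) := by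
    refine sub_eq_zero.1 (linearIndependent_cyclic σ hσ
      (fun j => a j - ∑ i, algebraMap F K (d i) * v i * (σ ^ (j : ℕ)) (v i)) (fun x => ?_) j)
    have h := hgx x
    rw [hg] at h
    simp only [algebraMap_trace_eq_sum_cyclic hn σ hσ, Finset.mul_sum] at h
    rw [Finset.sum_comm] at h
    simp only [sub_mul, Finset.sum_sub_distrib, Finset.sum_mul]
    rw [h, sub_eq_zero]
    refine Finset.sum_congr rfl fun j _ => Finset.sum_congr rfl fun i _ => ?_
    rw [map_mul]
    ring
  -- the kernel embeds into the coordinates at which `d` vanishes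
  have hZ : 3 ≤ Fintype.card {i // d i = 0} := by
    have hle : Nat.card {x : K | g x = 0} ≤ Nat.card ({i // d i = 0} → F) := by
      refine Nat.card_le_card_of_injective (fun x i => e.repr x.1 i.1) fun x y hxy => ?_
      have hzero (x : {x : K | g x = 0}) (i : Fin 8) (hi : d i ≠ 0) : e.repr x.1 i = 0 := by
        have h := hBe x.1 i
        rw [hB, show g x.1 = 0 from x.2, zero_mul, map_zero, eq_comm] at h
        exact (mul_eq_zero.1 h).resolve_left hi
      refine Subtype.ext (e.repr.injective (Finsupp.ext fun i => ?_))
      by_cases hi : d i = 0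
      · exact congrFun hxy ⟨i, hi⟩
      · rw [hzero x i hi, hzero y i hi]
    rw [Nat.card_fun, Nat.card_eq_fintype_card (α := F),
      Nat.card_eq_fintype_card (α := {i // d i = 0})] at hle
    exact (Nat.pow_lt_pow_iff_right Fintype.one_lt_card).1 (hker.trans_le hle)
  have hS : Fintype.card {i // d i ≠ 0} ≤ Fintype.card (Fin 5) := by
    have := Fintype.card_subtype_compl (fun i => d i = 0)
    simp only [Fintype.card_fin] at this ⊢
    simp only [ne_eq]
    omega
  obtain ⟨ι⟩ := Function.Embedding.nonempty_of_card_le hS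
  refine ⟨Function.extend ι (fun i => d i.1) 1, Function.extend ι (fun i => v i.1) 0, ?_, ?_⟩
  · intro k
    by_cases hk : ∃ i, ι i = k
    · obtain ⟨i, rfl⟩ := hk
      rw [ι.injective.extend_apply]
      exact i.2
    · rw [Function.extend_apply' _ _ _ hk]
      exact one_ne_zero
  · intro j
    rw [ha j]
    have h1 : ∑ i, algebraMap F K (d i) * v i * (σ ^ (j : ℕ)) (v i)
        = ∑ i : {i // d i ≠ 0}, algebraMap F K (d i) * v i * (σ ^ (j : ℕ)) (v i) := by
      refine (Fintype.sum_of_injective (Subtype.val) Subtype.val_injective _ _ ?_ ?_).symm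
      · intro i hi
        have : d i = 0 := by simpa using hi
        simp [this]
      · intro i; rfl
    rw [h1]
    refine Fintype.sum_of_injective ι ι.injective _ _ ?_ ?_
    · intro k hk
      have : Function.extend ι (fun i => v i.1) 0 k = 0 :=
        Function.extend_apply' _ _ _ (by simpa using hk)
      rw [this, mul_zero, zero_mul]
    · intro i
      simp only [ι.injective.extend_apply]

/-- The `6 × 6` matrix of pairings of `σ^i v` with `σ^(j+3) v` (`i, j < 6`) factors through dimension
5, hence is singular. If the pairings of `v` with `v`, `σ v`, `σ² v` vanish, it is triangular with
conjugates of the pairing of `v` with `σ³ v` on the diagonal. -/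
theorem gram_triangular {F K : Type*} [Field F] [Field K] [Algebra F K]
    (σ : K ≃ₐ[F] K) (d : Fin 5 → F) (v : Fin 5 → K)
    (h : ∀ n < 3, ∑ k, algebraMap F K (d k) * v k * (σ ^ n) (v k) = 0) :
    ∑ k, algebraMap F K (d k) * v k * (σ ^ 3) (v k) = 0 := by
  by_contra h3
  let X : Matrix (Fin 6) (Fin 5) K :=
    Matrix.of fun i k => algebraMap F K (d k) * (σ ^ (i : ℕ)) (v k)
  let Y : Matrix (Fin 5) (Fin 6) K := Matrix.of fun k j => (σ ^ ((j : ℕ) + 3)) (v k)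
  have hpair (i n : ℕ) : ∑ k, algebraMap F K (d k) * (σ ^ i) (v k) * (σ ^ (i + n)) (v k)
      = (σ ^ i) (∑ k, algebraMap F K (d k) * v k * (σ ^ n) (v k)) := by
    simp only [map_sum, map_mul, AlgEquiv.commutes, pow_add, AlgEquiv.mul_apply]
  have hXY (i j : Fin 6) : (X * Y) i j =
      ∑ k, algebraMap F K (d k) * (σ ^ (i : ℕ)) (v k) * (σ ^ ((j : ℕ) + 3)) (v k) := by
    simp [Matrix.mul_apply, X, Y]
  have htri : (X * Y).BlockTriangular id := by
    intro i j hij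
    have hij' : (j : ℕ) < i := hij
    rw [hXY]
    rcases le_or_gt (i : ℕ) (j + 3) with hle | hlt
    · obtain ⟨n, hn⟩ := Nat.exists_eq_add_of_le hle
      rw [hn, hpair, h n (by omega), map_zero]
    · obtain ⟨n, hn⟩ := Nat.exists_eq_add_of_le hlt.le
      have := hpair (j + 3) n
      rw [← hn, h n (by omega), map_zero] at this
      rw [← this]
      exact Finset.sum_congr rfl fun k _ => by ring
  have hdet : (X * Y).det ≠ 0 := by
    rw [Matrix.det_of_isUpperTriangular htri, Finset.prod_ne_zero_iff]
    intro i _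
    rw [hXY, hpair]
    exact (map_ne_zero_iff _ (σ ^ (i : ℕ)).injective).2 h3
  have hr := Matrix.rank_of_isUnit (X * Y) ((Matrix.isUnit_iff_isUnit_det _).2 hdet.isUnit)
  have h1 := Matrix.rank_mul_le_left X Y
  have h5 := Matrix.rank_le_width X
  simp at hr
  omega
end

/-! ### The kernel bound -/

/-- The kernel bound, for an abstract generator `σ` of the Galois group and with the facts on squares in
`K` as hypotheses. A kernel that is too large yields the five-term expressions of `exists_gram` with
`a 0 = a 1 = 0` and `a 2 = c`; then `c` is a square by `isSquare_diag`, so `c = 0`, and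
`gram_triangular` gives `b1 = 0`, which leaves the injective map `b0 · σ⁴`. -/
theorem ker_bound {F K : Type*} [Field F] [Field K] [Finite K] [Algebra F K] [Fintype F]
    (h2 : (2 : F) ≠ 0) (hn : Module.finrank F K = 8) (σ : K ≃ₐ[F] K)
    (hσ : orderOf σ = 8) (hF : ∀ a : F, IsSquare (algebraMap F K a))
    (hsq : ∀ e, IsSquare (e * σ e)) (hsq2 : ∀ e, IsSquare (e * σ (σ e)))
    (b0 b1 c : K) (hb0 : (σ ^ 4) b0 = b0) (hc : c = 0 ∨ ¬ IsSquare c)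
    (hne : ¬ (b0 = 0 ∧ b1 = 0 ∧ c = 0)) :
    Nat.card {x : K | b0 * (σ ^ 4) x + b1 * (σ ^ 3) x + (σ ^ 5) (b1 * x) + c * (σ ^ 2) x
      + (σ ^ 6) (c * x) = 0} ≤ Fintype.card F ^ 2 := by
  by_contra! hker
  let m (b : K) : K →ₗ[F] K := LinearMap.mulLeft F b
  let t (i : ℕ) : K →ₗ[F] K := (σ ^ i).toLinearMap
  let g : K →ₗ[F] K := m b0 ∘ₗ t 4 + m b1 ∘ₗ t 3 + t 5 ∘ₗ m b1 + m c ∘ₗ t 2 + t 6 ∘ₗ m c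
  have hgx (x : K) : g x = b0 * (σ ^ 4) x + b1 * (σ ^ 3) x + (σ ^ 5) (b1 * x) + c * (σ ^ 2) x
      + (σ ^ 6) (c * x) := rfl
  have h8 (i j : ℕ) (hij : i + j = 8) (x : K) : (σ ^ i) ((σ ^ j) x) = x := by
    rw [← AlgEquiv.mul_apply, ← pow_add, hij, ← hσ, pow_orderOf_eq_one, AlgEquiv.one_apply]
  have htr (i : ℕ) (z : K) : Algebra.trace F K ((σ ^ i) z) = Algebra.trace F K z :=
    Algebra.trace_eq_of_algEquiv (σ ^ i) z
  have hsymm (x y : K) : Algebra.trace F K (g x * y) = Algebra.trace F K (g y * x) := by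
    simp only [hgx, add_mul, map_add]
    have e4 : Algebra.trace F K (b0 * (σ ^ 4) x * y) = Algebra.trace F K (b0 * (σ ^ 4) y * x) := by
      rw [← htr 4 (b0 * (σ ^ 4) x * y), map_mul (σ ^ 4), map_mul (σ ^ 4), hb0, h8 4 4 rfl]
      ring_nf
    have e3 (x y : K) : Algebra.trace F K ((σ ^ 5) (b1 * x) * y)
        = Algebra.trace F K (b1 * (σ ^ 3) y * x) := by
      rw [← htr 3 ((σ ^ 5) (b1 * x) * y), map_mul, h8 3 5 rfl]
      ring_nf
    have e2 (x y : K) : Algebra.trace F K ((σ ^ 6) (c * x) * y)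
        = Algebra.trace F K (c * (σ ^ 2) y * x) := by
      rw [← htr 2 ((σ ^ 6) (c * x) * y), map_mul, h8 2 6 rfl]
      ring_nf
    rw [e4, e3, e3, e2, e2]
    ring
  obtain ⟨d, v, hd, ha⟩ := exists_gram h2 hn σ hσ g
    ![0, 0, c, b1, b0, (σ ^ 5) b1, (σ ^ 6) c, 0] (fun x => by
      rw [hgx, Fin.sum_univ_eight]
      simp only [map_mul]
      simp
      ring) hsymm hker
  have a0 := ha 0
  have a1 := ha 1
  have a2 := ha 2
  have a3 := ha 3
  have a4 := ha 4
  simp only [Fin.isValue, Fin.coe_ofNat_eq_mod] at a0 a1 a2 a3 a4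
  norm_num at a0 a1
  have a2' : c = ∑ k, algebraMap F K (d k) * v k * (σ ^ 2) (v k) := a2
  have a3' : b1 = ∑ k, algebraMap F K (d k) * v k * (σ ^ 3) (v k) := a3
  rcases hc with rfl | hc
  · have hb1 : b1 = 0 := by
      rw [a3']
      refine gram_triangular σ d v fun n hn => ?_
      interval_cases n
      · simpa using a0.symm
      · simpa using a1.symm
      · exact a2'.symm
    subst hb1
    have hb : b0 ≠ 0 := fun h => hne ⟨h, rfl, rfl⟩
    have hsub : {x : K | b0 * (σ ^ 4) x + 0 * (σ ^ 3) x + (σ ^ 5) (0 * x) + 0 * (σ ^ 2) x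
      + (σ ^ 6) (0 * x) = 0} = {0} := by
      ext x
      simp only [Set.mem_ofPred_eq, Set.mem_singleton_iff, zero_mul, map_zero, add_zero,
        mul_eq_zero, hb, false_or]
      exact map_eq_zero_iff _ (σ ^ 4).injective
    rw [hsub, Nat.card_unique] at hker
    exact absurd hker (not_lt.2 (Nat.one_le_pow _ _ Fintype.card_pos))
  · apply hc
    rw [a2']
    have := isSquare_diag h2 hF (σ : K →ₐ[F] K) hsq hsq2 d hd v (by simpa using a0.symm)
      (by simpa using a1.symm)
    simpa [pow_two] using this

end

/-! ### Subfields of a finite field -/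

theorem card_pow_eq_self {K : Type*} [Field K] [Fintype K] {q e n : ℕ} (hq : 1 < q)
    (hK : Fintype.card K = q ^ n) (he : e ∣ n) (he0 : e ≠ 0) :
    Nat.card {x : K | x ^ q ^ e = x} = q ^ e := by
  classical
  have hpos : 1 < q ^ e := Nat.one_lt_pow he0 hq
  have hset : {x : K | x ^ q ^ e = x}
      = insert 0 (Units.val '' ((powMonoidHom (q ^ e - 1) : Kˣ →* Kˣ).ker : Set Kˣ)) := by
    ext x
    simp only [Set.mem_ofPred_eq, Set.mem_insert_iff, Set.mem_image, SetLike.mem_coe,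
      MonoidHom.mem_ker, powMonoidHom_apply]
    constructor
    · intro h
      rcases eq_or_ne x 0 with rfl | hx
      · exact Or.inl rfl
      · refine Or.inr ⟨Units.mk0 x hx, Units.ext ?_, rfl⟩
        have : x * x ^ (q ^ e - 1) = x * 1 := by
          rw [mul_one, ← pow_succ', Nat.sub_add_cancel hpos.le, h]
        simpa using mul_left_cancel₀ hx this
    · rintro (rfl | ⟨u, hu, rfl⟩)
      · exact zero_pow (by omega)
      · have : u ^ q ^ e = u := by
          rw [← Nat.sub_add_cancel hpos.le, pow_succ, hu, one_mul]
        exact_mod_cast this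
  have hnot : (0 : K) ∉ Units.val '' ((powMonoidHom (q ^ e - 1) : Kˣ →* Kˣ).ker : Set Kˣ) := by
    rintro ⟨u, -, hu⟩
    exact u.ne_zero hu
  have hgcd : (Nat.card Kˣ).gcd (q ^ e - 1) = q ^ e - 1 := by
    rw [Nat.card_units, Nat.card_eq_fintype_card, hK]
    obtain ⟨f, rfl⟩ := he
    refine Nat.gcd_eq_right ?_
    rw [pow_mul]
    simpa using Nat.sub_dvd_pow_sub_pow (q ^ e) 1 f
  have hker := IsCyclic.card_powMonoidHom_ker Kˣ (q ^ e - 1)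
  rw [Nat.card_coe_set_eq, hset, Set.ncard_insert_of_notMem hnot (Set.toFinite _),
    Set.ncard_image_of_injective _ Units.val_injective, ← Nat.card_coe_set_eq]
  have h2 : Nat.card ((powMonoidHom (q ^ e - 1) : Kˣ →* Kˣ).ker : Set Kˣ) = q ^ e - 1 :=
    hker.trans hgcd
  rw [h2]
  omega

/-- Elements of `F_{q^4}` are squares in `F_{q^8}`. -/
theorem isSquare_of_pow_eq_self {K : Type*} [Field K] [Fintype K] {q : ℕ} (hq : Odd q)
    (hK : Fintype.card K = q ^ 8) {a : K} (ha : a ^ q ^ 4 = a) : IsSquare a := by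
  rcases eq_or_ne a 0 with rfl | h0
  · exact IsSquare.zero
  have hodd : Odd (Fintype.card K) := hK ▸ hq.pow
  have hchar : ringChar K ≠ 2 := fun h => by
    have := FiniteField.even_card_iff_char_two.1 h
    rw [Nat.odd_iff] at hodd
    omega
  rw [FiniteField.isSquare_iff hchar h0, hK]
  obtain ⟨k, hk⟩ := hq.pow (n := 4)
  have h1 : a ^ (2 * k) = 1 := by
    rw [hk, pow_succ] at ha
    exact mul_right_cancel₀ h0 (ha.trans (one_mul a).symm)
  have h8 : q ^ 8 / 2 = 2 * k * (k + 1) := by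
    have : q ^ 8 = 2 * (2 * k * (k + 1)) + 1 := by
      rw [show q ^ 8 = (q ^ 4) ^ 2 by ring, hk]; ring
    omega
  rw [h8, pow_mul, h1, one_pow]

/-! ### The code -/

/-- The family `T_{8,s,η}` of symmetric bilinear forms on `F_{q^8}` is a maximum
`F_q`-linear 6-code in `S_8(q)`: every nonzero `g` in the family has kernel of
`F_q`-dimension at most 2 (i.e. at most `q^2` elements), the code has size `q^16`,
is `F_q`-linear, and differences of distinct forms have radical of size at most `q^2`
(rank at least 6). -/
theorem stmt_2 (p m q : ℕ) (hp : p.Prime) (hpodd : Odd p) (hm : 0 < m) (hq : q = p ^ m)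
    (K : Type) [Field K] [Fintype K] (hK : Fintype.card K = q ^ 8)
    (s : ℕ) (hs0 : 0 < s) (hs8 : s < 8) (hgcd : Nat.gcd s 8 = 1)
    (η : K) (hη : ¬ ∃ z : K, z ^ 2 = η)
    (g : K → K → K → K → K)
    (hg : g = fun b0 b1 b2 x =>
      b0 * x ^ q ^ (4 * s % 8) + b1 * x ^ q ^ (3 * s % 8) + (b1 * x) ^ q ^ (5 * s % 8)
        + η * b2 * x ^ q ^ (2 * s % 8) + (η * b2 * x) ^ q ^ (6 * s % 8))
    (Tr : K → K) (hTr : Tr = fun z => ∑ i ∈ Finset.range 8, z ^ q ^ i)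
    (T : Set (K → K → K))
    (hT : T = {B | ∃ b0 b1 b2 : K, b0 ^ q ^ 4 = b0 ∧ b2 ^ q ^ 4 = b2 ∧
      B = fun x y => Tr (y * g b0 b1 b2 x)}) :
    (∀ b0 b1 b2 : K, b0 ^ q ^ 4 = b0 → b2 ^ q ^ 4 = b2 → ¬ (b0 = 0 ∧ b1 = 0 ∧ b2 = 0) →
      Nat.card {x : K | g b0 b1 b2 x = 0} ≤ q ^ 2) ∧
    Nat.card T = q ^ 16 ∧
    (∀ B1 ∈ T, ∀ B2 ∈ T, (fun x y => B1 x y + B2 x y) ∈ T) ∧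
    (∀ c : K, c ^ q = c → ∀ B ∈ T, (fun x y => c * B x y) ∈ T) ∧
    (∀ B1 ∈ T, ∀ B2 ∈ T, B1 ≠ B2 →
      Nat.card {x : K | ∀ y : K, B1 x y = B2 x y} ≤ q ^ 2) := by
  classical
  have hqodd : Odd q := hq ▸ hpodd.pow
  have hq1 : 1 < q := hq ▸ Nat.one_lt_pow hm.ne' hp.one_lt
  have : Fact p.Prime := ⟨hp⟩
  have : CharP K p := charP_of_card_eq_prime_pow (f := m * 8) (by
    rw [hK, hq, pow_mul])
  -- the subfield with `q` elements
  let F : Subfield K := RingHom.eqLocusField (iterateFrobenius K p m) (RingHom.id K)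
  have hFmem (x : K) : x ∈ F ↔ x ^ q = x := by
    rw [hq]; exact Iff.rfl
  have hFcard : Fintype.card F = q := by
    have h := card_pow_eq_self (e := 1) hq1 hK (one_dvd 8) one_ne_zero
    rw [pow_one] at h
    rw [← Nat.card_eq_fintype_card, ← h]
    exact Nat.card_congr (Equiv.subtypeEquivRight hFmem)
  have hn : Module.finrank F K = 8 := by
    have h := Module.card_eq_pow_finrank (K := F) (V := K)
    rw [hK, hFcard] at h
    exact (Nat.pow_right_injective hq1 h).symm
  have hMsq (a : K) (ha : a ^ q ^ 4 = a) : IsSquare a := isSquare_of_pow_eq_self hqodd hK ha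
  have hFpow (a : K) (ha : a ^ q = a) (i : ℕ) : a ^ q ^ i = a := by
    induction i with
    | zero => simp
    | succ i ih => rw [pow_succ, pow_mul, ih, ha]
  have h2 : (2 : F) ≠ 0 := by
    intro h
    have h' : (2 : K) = 0 := congrArg Subtype.val h
    have : p ∣ 2 := (CharP.cast_eq_zero_iff K p 2).1 (by exact_mod_cast h')
    have := (Nat.prime_dvd_prime_iff_eq hp Nat.prime_two).1 this
    subst this
    exact absurd hpodd (by decide)
  let φ : K ≃ₐ[F] K := FiniteField.frobeniusAlgEquivOfAlgebraic F K
  have hφ : orderOf φ = 8 := (FiniteField.orderOf_frobeniusAlgEquivOfAlgebraic F K).trans hn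
  have hφpow (i : ℕ) (x : K) : (φ ^ i) x = x ^ q ^ i := by
    rw [AlgEquiv.coe_pow, FiniteField.coe_frobeniusAlgEquivOfAlgebraic_iterate, hFcard]
  let σ : K ≃ₐ[F] K := φ ^ s
  have hσ : orderOf σ = 8 := by
    rw [orderOf_pow, hφ, Nat.gcd_comm, hgcd]
  have hσpow (j : ℕ) (x : K) : (σ ^ j) x = x ^ q ^ (j * s % 8) := by
    rw [← hφpow, ← pow_mul, mul_comm s j, ← pow_mod_orderOf, hφ]
  have hodd (e : K) (i : ℕ) : IsSquare (e * e ^ q ^ i) := by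
    rw [← pow_succ']
    exact (hqodd.pow.add_one).isSquare_pow e
  have hgσ (b0 b1 b2 x : K) : g b0 b1 b2 x = b0 * (σ ^ 4) x + b1 * (σ ^ 3) x + (σ ^ 5) (b1 * x)
      + η * b2 * (σ ^ 2) x + (σ ^ 6) (η * b2 * x) := by
    simp only [hg, hσpow]
  have hker (b0 b1 b2 : K) (hb0 : b0 ^ q ^ 4 = b0) (hb2 : b2 ^ q ^ 4 = b2)
      (hne : ¬ (b0 = 0 ∧ b1 = 0 ∧ b2 = 0)) : Nat.card {x : K | g b0 b1 b2 x = 0} ≤ q ^ 2 := by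
    have hη0 : η ≠ 0 := fun h => hη ⟨0, by simp [h]⟩
    have h := ker_bound h2 hn σ hσ (fun a => hMsq _ (hFpow _ ((hFmem _).1 a.2) 4))
      (fun e => by
        have := hσpow 1 e
        rw [pow_one] at this
        rw [this]
        exact hodd e _)
      (fun e => by
        have : σ (σ e) = (σ ^ 2) e := by rw [pow_two, AlgEquiv.mul_apply]
        rw [this, hσpow 2 e]
        exact hodd e _)
      b0 b1 (η * b2) (by
        rw [hσpow]
        -- `s` is odd, so `σ ^ 4` is the involution `x ↦ x ^ q ^ 4`
        have : 4 * s % 8 = 4 := by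
          interval_cases s <;> simp_all
        rw [this, hb0])
      (by
        rcases eq_or_ne b2 0 with rfl | hb
        · exact Or.inl (mul_zero η)
        · refine Or.inr fun hsq => hη ?_
          have h3 := hsq.div (hMsq b2 hb2)
          rw [mul_div_cancel_right₀ _ hb] at h3
          obtain ⟨z, hz⟩ := h3
          exact ⟨z, by rw [hz, pow_two]⟩)
      (by simpa [hη0] using hne)
    simp only [hgσ]
    rwa [hFcard] at h
  have hTradd (y z : K) : Tr (y + z) = Tr y + Tr z := by
    simp only [hTr, ← hφpow, map_add, Finset.sum_add_distrib]
  have hTrsmul (c : K) (hc : c ^ q = c) (z : K) : Tr (c * z) = c * Tr z := by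
    simp only [hTr, mul_pow, hFpow c hc, Finset.mul_sum]
  have hTrneg (y : K) : Tr (-y) = - Tr y := by
    simp only [hTr, ← hφpow, map_neg, Finset.sum_neg_distrib]
  have hnondeg (a : K) (ha : ∀ y, Tr (y * a) = 0) : a = 0 := by
    have h := linearIndependent_cyclic φ hφ (fun j => (φ ^ (j : ℕ)) a) (fun y => by
      rw [← ha y, hTr]
      beta_reduce
      rw [Finset.sum_range]
      refine Finset.sum_congr rfl fun j _ => ?_
      rw [← hφpow, map_mul, mul_comm]) 0
    simpa using h
  have hgadd (b0 b1 b2 b0' b1' b2' x : K) :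
      g (b0 + b0') (b1 + b1') (b2 + b2') x = g b0 b1 b2 x + g b0' b1' b2' x := by
    simp only [hgσ, mul_add, add_mul, map_add]
    ring
  have hgsub (b0 b1 b2 b0' b1' b2' x : K) :
      g (b0 - b0') (b1 - b1') (b2 - b2') x = g b0 b1 b2 x - g b0' b1' b2' x := by
    simp only [hgσ, mul_sub, sub_mul, map_sub]
    ring
  have hMadd (a b : K) (ha : a ^ q ^ 4 = a) (hb : b ^ q ^ 4 = b) : (a + b) ^ q ^ 4 = a + b := by
    rw [← hφpow] at *
    rw [map_add, ha, hb]
  have hMsub (a b : K) (ha : a ^ q ^ 4 = a) (hb : b ^ q ^ 4 = b) : (a - b) ^ q ^ 4 = a - b := by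
    rw [← hφpow] at *
    rw [map_sub, ha, hb]
  -- pointwise agreement of two forms at `x` means that `x` is killed by the difference
  have hrad (b0 b1 b2 b0' b1' b2' x : K)
      (h : ∀ y, Tr (y * g b0 b1 b2 x) = Tr (y * g b0' b1' b2' x)) :
      g (b0 - b0') (b1 - b1') (b2 - b2') x = 0 := by
    refine hnondeg _ fun y => ?_
    rw [hgsub, mul_sub, sub_eq_add_neg, hTradd, hTrneg, h y, add_neg_cancel]
  refine ⟨hker, ?_, ?_, ?_, ?_⟩
  · let M : Set K := {x | x ^ q ^ 4 = x}
    have hM : Nat.card M = q ^ 4 := card_pow_eq_self hq1 hK (by decide) (by decide)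
    let Φ : M × K × M → K → K → K := fun b x y => Tr (y * g b.1 b.2.1 b.2.2 x)
    have hrange : T = Set.range Φ := by
      rw [hT]
      ext B
      constructor
      · rintro ⟨b0, b1, b2, h0, h2', rfl⟩
        exact ⟨(⟨b0, h0⟩, b1, ⟨b2, h2'⟩), rfl⟩
      · rintro ⟨⟨b0, b1, b2⟩, rfl⟩
        exact ⟨b0, b1, b2, b0.2, b2.2, rfl⟩
    have hinj : Function.Injective Φ := by
      rintro ⟨b0, b1, b2⟩ ⟨b0', b1', b2'⟩ h
      by_contra hne
      have hle := hker (b0 - b0') (b1 - b1') (b2 - b2') (hMsub _ _ b0.2 b0'.2)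
        (hMsub _ _ b2.2 b2'.2) (by
          rintro ⟨h0, h1, h2'⟩
          exact hne (Prod.ext (Subtype.ext (sub_eq_zero.1 h0))
            (Prod.ext (sub_eq_zero.1 h1) (Subtype.ext (sub_eq_zero.1 h2')))))
      have huniv : {x : K | g (b0 - b0') (b1 - b1') (b2 - b2') x = 0} = Set.univ :=
        Set.eq_univ_of_forall fun x =>
          hrad _ _ _ _ _ _ x fun y => congrFun (congrFun h x) y
      rw [huniv, Nat.card_univ, Nat.card_eq_fintype_card, hK] at hle
      exact absurd hle (not_le.2 (Nat.pow_lt_pow_right hq1 (by decide)))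
    rw [hrange, Nat.card_range_of_injective hinj, Nat.card_prod, Nat.card_prod, hM,
      Nat.card_eq_fintype_card, hK]
    ring
  · intro B1 hB1 B2 hB2
    rw [hT] at *
    obtain ⟨b0, b1, b2, h0, h2', rfl⟩ := hB1
    obtain ⟨b0', b1', b2', h0', h2'', rfl⟩ := hB2
    refine ⟨b0 + b0', b1 + b1', b2 + b2', hMadd _ _ h0 h0', hMadd _ _ h2' h2'', ?_⟩
    funext x y
    rw [hgadd, mul_add, hTradd]
  · intro c hc B hB
    rw [hT] at *
    obtain ⟨b0, b1, b2, h0, h2', rfl⟩ := hB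
    refine ⟨c * b0, c * b1, c * b2, by rw [mul_pow, h0, hFpow c hc],
      by rw [mul_pow, h2', hFpow c hc], ?_⟩
    funext x y
    have : g (c * b0) (c * b1) (c * b2) x = c * g b0 b1 b2 x := by
      simp only [hg, mul_pow, hFpow c hc]
      ring
    rw [this, ← hTrsmul c hc]
    congr 1
    ring
  · intro B1 hB1 B2 hB2 hne
    rw [hT] at hB1 hB2
    obtain ⟨b0, b1, b2, h0, h2', rfl⟩ := hB1
    obtain ⟨b0', b1', b2', h0', h2'', rfl⟩ := hB2
    refine le_trans ?_ (hker (b0 - b0') (b1 - b1') (b2 - b2') (hMsub _ _ h0 h0')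
      (hMsub _ _ h2' h2'') ?_)
    · exact Nat.card_mono (Set.toFinite _) fun x hx => hrad _ _ _ _ _ _ x hx
    · rintro ⟨e0, e1, e2⟩
      rw [sub_eq_zero] at e0 e1 e2
      subst e0 e1 e2
      exact hne rfl
end

section
/- Let q be an odd prime power, k = 5, n = 10, and let s be an integer with 0 < s < 10 and gcd(s, 10) = 1. Let η be a nonsquare in F_{q^{10}}. Then for all b0, b2 in the subfield F_{q^5} of F_{q^{10}} and all b1 ∈ F_{q^{10}} with (b0, b1, b2) ≠ (0, 0, 0), the F_q-linear map g : F_{q^{10}} → F_{q^{10}} given by g(x) = b0·x^{q^{5s}} + b1·x^{q^{4s}} + (b1 x)^{q^{6s}} + η b2·x^{q^{3s}} + (η b2 x)^{q^{7s}} (exponents of q read modulo 10) has rank at least 8, i.e., its kernel has F_q-dimension at most 2. Consequently, the set T_{10,s,η} of symmetric bilinear forms (x, y) ↦ Tr(y·g(x)) on F_{q^{10}}, with b0, b2 ∈ F_{q^5} and b1 ∈ F_{q^{10}}, is a maximum F_q-linear 8-code in S_{10}(q) of size q^{20}. -/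
/-!
Write `σ x = x ^ (q ^ s)`, a generator of the Galois group of `K = F_{q^10}` over `F_q`, and let
`a = η b₂`, so that `g x = b₀ σ⁵x + b₁ σ⁴x + σ⁶(b₁x) + a σ³x + σ⁷(ax)`.

The operator `σ⁻⁵ g` is self-adjoint for the pairing `Tr (σ⁵(y) x)`. Hence it has a Lagrange
concomitant `[x, y]` (`bracket`) with `(σ - 1)[x, y] = σ⁵(y) σ⁵(g x) - x g(y)`. On the kernel `V`
of `g` the bracket therefore takes values in `F_q` (`bracket_fixed`), and there it is
alternating, because `[y, x] = -σ⁵[x, y]` and `q` is odd (`bracket_swap`).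

If `V` had more than `q ^ 2` elements, then for a nonzero `x ∈ V` the additive map `y ↦ [x, y]`
into `F_q` would kill some `y ∈ V` outside `F_q x`. The four values of the bracket on the pairs
from `x, y` all vanish, and contracting the resulting 2 × 2 matrix eliminates all terms but those
of `W = x σ(y) - y σ(x) ≠ 0`, giving that `σ(a) W σ⁴(W)` is fixed by `σ⁵` (`contraction`), that is,
lies in `F_{q^5}`. Elements of `F_{q^5}` are squares in `F_{q^10}`, as is
`W σ⁴(W) = W ^ (1 + q ^ (4 s))`, so `a = η b₂`, hence `η`, is a square if `b₂ ≠ 0`: a contradiction.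
If `b₂ = 0` and `b₁ ≠ 0`, a simpler contraction gives `W = 0` (`contraction_zero`).

The assertions about the code follow from this bound, from the nondegeneracy of the trace form
and from `|F_{q^5}| = q ^ 5`.
-/

/-! ### Root counts -/

lemma card_roots_le {K : Type} [Field K] [Fintype K] [DecidableEq K] (N : ℕ) (hN : 2 ≤ N)
    (c d : K) : (Finset.univ.filter fun x : K => x ^ N + c * x = d).card ≤ N := by
  open Polynomial in
  have hdeg : (X ^ N + (C c * X - C d) : K[X]).natDegree = N := by
    compute_degree!
    · split_ifs <;> simp_all
    all_goals omega
  have hne : (Polynomial.X ^ N + (Polynomial.C c * Polynomial.X - Polynomial.C d)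
      : Polynomial K) ≠ 0 := by
    intro h
    rw [h] at hdeg
    simp at hdeg
    omega
  calc _ ≤ _ := Polynomial.card_le_degree_of_subset_roots (p := _) (Z := _) ?_
    _ = N := hdeg
  intro x hx
  simp only [Finset.mem_val, Finset.mem_filter, Finset.mem_univ, true_and] at hx
  rw [Polynomial.mem_roots hne]
  simp [← hx]

/-- The trace polynomial `∑ X ^ (q ^ i)` has degree at most `q ^ 9 < q ^ 10`, so it does not vanish
on all of `K`. -/
lemma exists_trace_ne_zero {K : Type} [Field K] [Fintype K] (q : ℕ) (hq : 2 ≤ q)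
    (hK : Fintype.card K = q ^ 10) : ∃ w : K, ∑ i ∈ Finset.range 10, w ^ q ^ i ≠ 0 := by
  classical
  by_contra! h
  let P : Polynomial K := ∑ i ∈ Finset.range 10, Polynomial.X ^ q ^ i
  have hdeg : P.natDegree ≤ q ^ 9 := by
    apply Polynomial.natDegree_sum_le_of_forall_le
    intro i hi
    rw [Polynomial.natDegree_X_pow]
    exact Nat.pow_le_pow_right (by omega) (by have := Finset.mem_range.1 hi; omega)
  have hcoeff : P.coeff 1 = 1 := by
    simp only [P, Polynomial.finsetSum_coeff, Polynomial.coeff_X_pow]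
    rw [Finset.sum_eq_single 0]
    · simp
    · intro i _ hi
      rw [if_neg]
      exact (Nat.one_lt_pow hi (by omega)).ne
    · simp
  have hne : P ≠ 0 := by
    rintro h0
    simp [h0] at hcoeff
  have hle : (Finset.univ : Finset K).card ≤ P.natDegree := by
    apply Polynomial.card_le_degree_of_subset_roots
    intro x _
    rw [Polynomial.mem_roots hne]
    simpa [P, Polynomial.eval_finsetSum] using h x
  rw [Finset.card_univ, hK] at hle
  have : q ^ 9 < q ^ 10 := Nat.pow_lt_pow_right (by omega) (by norm_num)
  omega

/-! ### The concomitant of the self-adjoint operator -/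

/-- The operator `g` written with a field endomorphism `σ`; the coefficient `η b₂` is `a`. -/
def gmap {K : Type} [Field K] (σ : K →+* K) (b0 b a x : K) : K :=
  b0 * σ^[5] x + b * σ^[4] x + σ^[6] (b * x) + a * σ^[3] x + σ^[7] (a * x)

/-- The Lagrange concomitant of `gmap`, where `σ` has order dividing 10. The powers `σ⁻¹` and `σ⁻²`
appear as `σ⁹` and `σ⁸`. -/
def bracket {K : Type} [Field K] (σ : K →+* K) (a b x y : K) : K :=
  b * x * σ^[4] y - σ^[5] b * σ^[5] y * σ^[9] x + a * x * σ^[3] y - σ^[5] a * σ^[5] y * σ^[8] x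
    + σ a * σ x * σ^[4] y - σ^[6] a * σ^[6] y * σ^[9] x

/-- On the kernel of `gmap` the bracket takes values in the fixed field of `σ`, because
`σ[x, y] - [x, y] = σ⁵(y) σ⁵(g x) - x g(y)`. -/
lemma bracket_fixed {K : Type} [Field K] (σ : K →+* K) (hσ : ∀ x, σ^[10] x = x)
    (b0 a b x y : K) (hb0 : σ^[5] b0 = b0)
    (hx : gmap σ b0 b a x = 0) (hy : gmap σ b0 b a y = 0) :
    σ (bracket σ a b x y) = bracket σ a b x y := by
  have h := congrArg (σ^[5]) hx
  have ha := hσ a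
  have hb := hσ b
  have hx' := hσ x
  have hy' := hσ y
  simp only [gmap, bracket, Function.iterate_succ, Function.iterate_zero, Function.comp_apply, id,
    map_add, map_mul, map_sub, map_zero] at *
  simp only [hb0, ha, hb, hx', hy'] at *
  linear_combination (σ (σ (σ (σ (σ y))))) * h - x * hy

lemma bracket_swap {K : Type} [Field K] (σ : K →+* K) (hσ : ∀ x, σ^[10] x = x)
    (a b x y : K) : bracket σ a b y x = - σ^[5] (bracket σ a b x y) := by
  have ha := hσ a
  have hb := hσ b
  have hx' := hσ x
  have hy' := hσ y
  simp only [bracket, Function.iterate_succ, Function.iterate_zero, Function.comp_apply, id,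
    map_add, map_mul, map_sub] at *
  simp only [ha, hb, hx', hy'] at *
  ring

lemma bracket_sub {K : Type} [Field K] (σ : K →+* K) (a b x y z : K) :
    bracket σ a b x (y - z) = bracket σ a b x y - bracket σ a b x z := by
  simp only [bracket, Function.iterate_succ, Function.iterate_zero, Function.comp_apply, id,
    map_sub]
  ring

/-- Contracting the 2 × 2 matrix of the bracket on `x, y` with `(x, y)^⊥` on the left and
`σ⁵(x, y)^⊥` on the right leaves only the terms in `σ(a)` and its conjugate. -/
lemma contraction {K : Type} [Field K] (σ : K →+* K) (hσ : ∀ x, σ^[10] x = x)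
    (a b x y : K) (hxx : bracket σ a b x x = 0) (hxy : bracket σ a b x y = 0)
    (hyx : bracket σ a b y x = 0) (hyy : bracket σ a b y y = 0)
    (W : K) (hW : W = x * σ y - y * σ x) :
    σ^[5] (σ a * W * σ^[4] W) = σ a * W * σ^[4] W := by
  have hx' := hσ x
  have hy' := hσ y
  subst hW
  simp only [bracket, Function.iterate_succ, Function.iterate_zero, Function.comp_apply, id,
    map_mul, map_sub] at *
  simp only [hx', hy'] at *
  linear_combination x * (σ (σ (σ (σ (σ x))))) * hyy - x * (σ (σ (σ (σ (σ y))))) * hyx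
    - y * (σ (σ (σ (σ (σ x))))) * hxy + y * (σ (σ (σ (σ (σ y))))) * hxx

/-- When `a = 0`, contraction with `(x, y)^⊥` on the left alone shows that `W` vanishes. -/
lemma contraction_zero {K : Type} [Field K] (σ : K →+* K) (hσ : ∀ x, σ^[10] x = x)
    (b x y : K) (hxx : bracket σ 0 b x x = 0)
    (hyx : bracket σ 0 b y x = 0) (hx0 : x ≠ 0) (hb : b ≠ 0) :
    x * σ y - y * σ x = 0 := by
  have hx' := hσ x
  have hy' := hσ y
  have key : σ^[5] b * σ^[5] x * σ^[9] (x * σ y - y * σ x) = 0 := by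
    simp only [bracket, Function.iterate_succ, Function.iterate_zero, Function.comp_apply, id,
      map_mul, map_sub, map_zero] at *
    simp only [hx', hy'] at *
    linear_combination x * hyx - y * hxx
  generalize x * σ y - y * σ x = W at *
  simpa [hx0, hb, Function.iterate_succ] using key

/-! ### The kernel bound -/

/-- The bound on the kernel of `gmap`, for a field endomorphism `σ` with at most `q` fixed points.
The hypothesis `hA` is what the nonsquare condition on `η` provides. -/
lemma kernel_bound {K : Type} [Field K] [Fintype K] [DecidableEq K] (σ : K →+* K)
    (hσ : ∀ x, σ^[10] x = x) (q : ℕ) (hq : 1 ≤ q)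
    (hfix : (Finset.univ.filter fun c : K => σ c = c).card ≤ q)
    (h2 : (2 : K) ≠ 0) (b0 b a : K) (hb0 : σ^[5] b0 = b0)
    (hA : a ≠ 0 → ∀ W : K, W ≠ 0 → σ^[5] (σ a * W * σ^[4] W) ≠ σ a * W * σ^[4] W)
    (hne : ¬ (b0 = 0 ∧ b = 0 ∧ a = 0)) :
    (Finset.univ.filter fun x : K => gmap σ b0 b a x = 0).card ≤ q * q := by
  by_contra! hcard
  set V := Finset.univ.filter fun x : K => gmap σ b0 b a x = 0 with hV
  set F := Finset.univ.filter fun c : K => σ c = c with hF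
  have hmem : ∀ x, x ∈ V ↔ gmap σ b0 b a x = 0 := by simp [hV]
  have hbr : ∀ x ∈ V, ∀ y ∈ V, σ (bracket σ a b x y) = bracket σ a b x y := fun x hx y hy =>
    bracket_fixed σ hσ b0 a b x y hb0 ((hmem x).1 hx) ((hmem y).1 hy)
  have hswap : ∀ x ∈ V, ∀ y ∈ V, bracket σ a b y x = - bracket σ a b x y := by
    intro x hx y hy
    rw [bracket_swap σ hσ, Function.iterate_fixed (hbr x hx y hy)]
  have hself : ∀ x ∈ V, bracket σ a b x x = 0 := by
    intro x hx
    have h := hswap x hx x hx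
    have : (2 : K) * bracket σ a b x x = 0 := by linear_combination h
    simpa [h2] using this
  obtain ⟨x, hx, hx0⟩ : ∃ x ∈ V, x ≠ 0 := by
    apply Finset.exists_mem_ne
    nlinarith
  -- A fibre of `y ↦ [x, y]` with more than `q` elements does not fit into a coset of `F_q x`.
  obtain ⟨c, _, hc⟩ := Finset.exists_lt_card_fiber_of_mul_lt_card_of_maps_to
    (s := V) (t := F) (f := fun y => bracket σ a b x y) (n := q)
    (fun y hy => by simpa [hF] using hbr x hx y hy)
    (lt_of_le_of_lt (Nat.mul_le_mul_right q hfix) hcard)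
  set Z := V.filter fun y => bracket σ a b x y = c with hZ
  obtain ⟨y0, hy0⟩ : Z.Nonempty := Finset.card_pos.1 (by omega)
  obtain ⟨y1, hy1, hy1'⟩ : ∃ y1 ∈ Z, y1 ∉ F.image fun d => y0 + d * x := by
    apply Finset.exists_mem_notMem_of_card_lt_card
    exact lt_of_le_of_lt (Finset.card_image_le.trans hfix) hc
  simp only [hZ, Finset.mem_filter] at hy0 hy1
  obtain ⟨y, hy⟩ : ∃ y, y = y1 - y0 := ⟨_, rfl⟩
  have hyV : y ∈ V := by
    have h1 := (hmem _).1 hy1.1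
    have h0 := (hmem _).1 hy0.1
    rw [hmem, hy]
    simp only [gmap, Function.iterate_succ, Function.iterate_zero, Function.comp_apply, id,
      map_sub, map_mul] at *
    linear_combination h1 - h0
  have hxy : bracket σ a b x y = 0 := by rw [hy, bracket_sub, hy1.2, hy0.2, sub_self]
  have hyx : bracket σ a b y x = 0 := by rw [hswap x hx y hyV, hxy, neg_zero]
  have hW : x * σ y - y * σ x ≠ 0 := by
    intro hW
    apply hy1'
    rw [Finset.mem_image]
    refine ⟨y / x, ?_, ?_⟩
    · have hσx : σ x ≠ 0 := by simpa using hx0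
      simp only [hF, Finset.mem_filter, Finset.mem_univ, true_and, map_div₀]
      rw [div_eq_div_iff hσx hx0]
      linear_combination hW
    · rw [div_mul_cancel₀ _ hx0, hy]
      ring
  by_cases ha : a = 0
  · by_cases hb : b = 0
    · have h := (hmem x).1 hx
      subst ha hb
      have hb0' : b0 ≠ 0 := by simpa using hne
      simp [gmap, hb0', hx0] at h
    · subst ha
      exact hW (contraction_zero σ hσ b x y (hself x hx) hyx hx0 hb)
  · exact hA ha _ hW (contraction σ hσ a b x y (hself x hx) hxy hyx (hself y hyV) _ rfl)

/-! ### Squares and the subfield of index two -/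

/-- Elements of `F_{q^5}` are squares in `F_{q^10}`. -/
lemma isSquare_of_subfield {K : Type} [Field K] [Fintype K] (q : ℕ) (hqo : Odd q)
    (hK : Fintype.card K = q ^ 10) (hchar : ringChar K ≠ 2) (e : K) (he : e ^ q ^ 5 = e) :
    IsSquare e := by
  by_cases h0 : e = 0
  · simp [h0]
  rw [FiniteField.isSquare_iff hchar h0, hK]
  obtain ⟨t, ht⟩ := hqo.pow (n := 5)
  have h1 : e ^ (2 * t) = 1 := by
    have : e ^ (2 * t) * e = 1 * e := by rw [← pow_succ, ← ht, he, one_mul]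
    exact mul_right_cancel₀ h0 this
  have h2 : q ^ 10 / 2 = 2 * t * (t + 1) := by
    have : q ^ 10 = 2 * (2 * t * (t + 1)) + 1 := by
      rw [show q ^ 10 = q ^ 5 * q ^ 5 by ring, ht]
      ring
    omega
  rw [h2, pow_mul, h1, one_pow]

/-- The subfield `F_{q^5}` has at least `q ^ 5` elements because it contains the image of
`z ↦ z + z ^ (q ^ 5)`, whose fibres have at most `q ^ 5` elements. -/
lemma card_subfield {K : Type} [Field K] [Fintype K] [DecidableEq K] (q : ℕ) (hq : 2 ≤ q)
    (hK : Fintype.card K = q ^ 10)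
    (hadd : ∀ (i : ℕ) (x y : K), (x + y) ^ q ^ i = x ^ q ^ i + y ^ q ^ i) :
    (Finset.univ.filter fun x : K => x ^ q ^ 5 = x).card = q ^ 5 := by
  have h2 : 2 ≤ q ^ 5 := hq.trans (Nat.le_self_pow (by norm_num) q)
  apply le_antisymm
  · refine le_trans (Finset.card_le_card ?_) (card_roots_le (K := K) (q ^ 5) h2 (-1) 0)
    intro x hx
    simp only [Finset.mem_filter, Finset.mem_univ, true_and] at hx ⊢
    rw [hx]
    ring
  · have h := Finset.card_le_mul_card_image (f := fun z : K => z ^ q ^ 5 + 1 * z) Finset.univ (q ^ 5)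
      (fun b _ => card_roots_le (q ^ 5) h2 1 b)
    have hsub : (Finset.univ.image fun z : K => z ^ q ^ 5 + 1 * z)
        ⊆ Finset.univ.filter fun x : K => x ^ q ^ 5 = x := by
      intro x hx
      obtain ⟨z, -, rfl⟩ := Finset.mem_image.1 hx
      have hz : (z ^ q ^ 5) ^ q ^ 5 = z := by
        rw [← pow_mul, ← pow_add, ← hK, FiniteField.pow_card]
      simp only [Finset.mem_filter, Finset.mem_univ, true_and, one_mul]
      rw [hadd, hz, add_comm]
    have h' := h.trans (Nat.mul_le_mul_left _ (Finset.card_le_card hsub))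
    rw [Finset.card_univ, hK, show q ^ 10 = q ^ 5 * q ^ 5 by ring] at h'
    exact Nat.le_of_mul_le_mul_left h' (by omega)

set_option maxHeartbeats 1000000 in
/-- The family `T_{10,s,η}` of symmetric bilinear forms on `F_{q^10}` is a maximum
`F_q`-linear 8-code in `S_10(q)`: every nonzero `g` in the family has kernel of
`F_q`-dimension at most 2 (i.e. at most `q^2` elements), the code has size `q^20`,
is `F_q`-linear, and differences of distinct forms have radical of size at most `q^2`
(rank at least 8). -/
theorem stmt_3 (p m q : ℕ) (hp : p.Prime) (hpodd : Odd p) (hm : 0 < m) (hq : q = p ^ m)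
    (K : Type) [Field K] [Fintype K] (hK : Fintype.card K = q ^ 10)
    (s : ℕ) (hs0 : 0 < s) (hs10 : s < 10) (hgcd : Nat.gcd s 10 = 1)
    (η : K) (hη : ¬ ∃ z : K, z ^ 2 = η)
    (g : K → K → K → K → K)
    (hg : g = fun b0 b1 b2 x =>
      b0 * x ^ q ^ (5 * s % 10) + b1 * x ^ q ^ (4 * s % 10) + (b1 * x) ^ q ^ (6 * s % 10)
        + η * b2 * x ^ q ^ (3 * s % 10) + (η * b2 * x) ^ q ^ (7 * s % 10))
    (Tr : K → K) (hTr : Tr = fun z => ∑ i ∈ Finset.range 10, z ^ q ^ i)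
    (T : Set (K → K → K))
    (hT : T = {B | ∃ b0 b1 b2 : K, b0 ^ q ^ 5 = b0 ∧ b2 ^ q ^ 5 = b2 ∧
      B = fun x y => Tr (y * g b0 b1 b2 x)}) :
    (∀ b0 b1 b2 : K, b0 ^ q ^ 5 = b0 → b2 ^ q ^ 5 = b2 → ¬ (b0 = 0 ∧ b1 = 0 ∧ b2 = 0) →
      Nat.card {x : K | g b0 b1 b2 x = 0} ≤ q ^ 2) ∧
    Nat.card T = q ^ 20 ∧
    (∀ B1 ∈ T, ∀ B2 ∈ T, (fun x y => B1 x y + B2 x y) ∈ T) ∧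
    (∀ c : K, c ^ q = c → ∀ B ∈ T, (fun x y => c * B x y) ∈ T) ∧
    (∀ B1 ∈ T, ∀ B2 ∈ T, B1 ≠ B2 →
      Nat.card {x : K | ∀ y : K, B1 x y = B2 x y} ≤ q ^ 2) := by
  classical
  have : Fact p.Prime := ⟨hp⟩
  have hcard : Fintype.card K = p ^ (m * 10) := by rw [hK, hq, ← pow_mul]
  have hchar : CharP K p := charP_of_card_eq_prime_pow hcard
  have hp2 : p ≠ 2 := by rintro rfl; exact absurd hpodd (by decide)
  have hrc : ringChar K ≠ 2 := by rwa [ringChar.eq K p]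
  have h2 : (2 : K) ≠ 0 := Ring.two_ne_zero hrc
  have hqo : Odd q := hq ▸ hpodd.pow
  have hq2 : 2 ≤ q := by
    rw [hq]
    exact hp.two_le.trans (Nat.le_self_pow (by omega) p)
  have hadd : ∀ (i : ℕ) (x y : K), (x + y) ^ q ^ i = x ^ q ^ i + y ^ q ^ i := by
    intro i x y
    rw [hq, ← pow_mul, add_pow_char_pow]
  have hmod : ∀ (k : ℕ) (x : K), x ^ q ^ k = x ^ q ^ (k % 10) := by
    intro k x
    conv_lhs => rw [← Nat.div_add_mod k 10, pow_add, pow_mul, pow_mul, ← hK,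
      FiniteField.pow_card_pow]
  let σ : K →+* K := iterateFrobenius K p (m * s)
  have hσ1 : ∀ x, σ x = x ^ q ^ s := by
    intro x
    simp only [σ, iterateFrobenius_def, hq, pow_mul]
  have hiter0 : ∀ (k : ℕ) (x : K), σ^[k] x = x ^ q ^ (k * s) := by
    intro k x
    induction k with
    | zero => simp
    | succ k ih => rw [Function.iterate_succ_apply', ih, hσ1, ← pow_mul, ← pow_add, Nat.succ_mul]
  have hiter : ∀ (k : ℕ) (x : K), σ^[k] x = x ^ q ^ (k * s % 10) := by
    intro k x
    rw [hiter0, hmod]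
  have hσ : ∀ x, σ^[10] x = x := by
    intro x
    rw [hiter]
    simp
  have h5s : 5 * s % 10 = 5 := by interval_cases s <;> simp_all
  have h5 : ∀ x, σ^[5] x = x ^ q ^ 5 := by
    intro x
    rw [hiter, h5s]
  have hfix : (Finset.univ.filter fun c : K => σ c = c).card ≤ q := by
    refine le_trans (Finset.card_le_card ?_) (card_roots_le (K := K) q hq2 (-1) 0)
    intro c hc
    simp only [Finset.mem_filter, Finset.mem_univ, true_and] at hc ⊢
    -- `s ^ 3` inverts `s` modulo 10, since the unit group has order 4.
    have h1 : s ^ 3 * s % 10 = 1 := by interval_cases s <;> simp_all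
    have h := hiter (s ^ 3) c
    rw [Function.iterate_fixed hc, h1, pow_one] at h
    rw [← h]
    ring
  have hgm : ∀ b0 b1 b2 x, g b0 b1 b2 x = gmap σ b0 b1 (η * b2) x := by
    intro b0 b1 b2 x
    simp only [hg, gmap, hiter]
  have hη0 : η ≠ 0 := by
    rintro rfl
    exact hη ⟨0, by simp⟩
  have hker : ∀ b0 b1 b2 : K, b0 ^ q ^ 5 = b0 → b2 ^ q ^ 5 = b2 →
      ¬ (b0 = 0 ∧ b1 = 0 ∧ b2 = 0) → Nat.card {x : K | g b0 b1 b2 x = 0} ≤ q ^ 2 := by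
    intro b0 b1 b2 hb0 hb2 hne
    have hmain := kernel_bound σ hσ q (by omega) hfix h2 b0 b1 (η * b2) (by rw [h5, hb0]) ?_
      (by simpa [hη0] using hne)
    · rw [pow_two]
      refine le_trans (le_of_eq ?_) hmain
      rw [Nat.card_eq_fintype_card, Fintype.card_subtype]
      simp [hgm]
    · intro ha W hW he
      rw [h5] at he
      have hsq := isSquare_of_subfield q hqo hK hrc _ he
      have hb20 : b2 ≠ 0 := right_ne_zero_of_mul ha
      obtain ⟨t, ht⟩ := hqo.pow (n := s)
      obtain ⟨u, hu⟩ := hqo.pow (n := 4 * s)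
      obtain ⟨r, hr⟩ := hsq
      obtain ⟨v, hv⟩ := isSquare_of_subfield q hqo hK hrc _ hb2
      rw [hσ1, hiter0, ht, hu] at hr
      have hv0 : v ≠ 0 := by
        rintro rfl
        simp [hv] at hb20
      have hD : (η * b2) ^ t * W ^ (u + 1) * v ≠ 0 :=
        mul_ne_zero (mul_ne_zero (pow_ne_zero _ ha) (pow_ne_zero _ hW)) hv0
      apply hη
      refine ⟨r / ((η * b2) ^ t * W ^ (u + 1) * v), ?_⟩
      rw [div_pow, div_eq_iff (pow_ne_zero 2 hD), pow_two r, ← hr]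
      generalize hA : (η * b2) ^ t = A
      have e1 : (η * b2) ^ (2 * t + 1) = A ^ 2 * (η * (v * v)) := by
        rw [pow_succ, mul_comm 2 t, pow_mul, hA, ← hv]
      rw [e1]
      ring
  have hTradd : ∀ x y, Tr (x + y) = Tr x + Tr y := by
    intro x y
    simp only [hTr, hadd, Finset.sum_add_distrib]
  have hnondeg : ∀ z, (∀ y, Tr (y * z) = 0) → z = 0 := by
    intro z hz
    by_contra hz0
    obtain ⟨w, hw⟩ := exists_trace_ne_zero (K := K) q hq2 hK
    apply hw
    have := hz (w / z)
    rwa [div_mul_cancel₀ _ hz0, hTr] at this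
  have hgadd : ∀ b0 b1 b2 c0 c1 c2 x,
      g (b0 + c0) (b1 + c1) (b2 + c2) x = g b0 b1 b2 x + g c0 c1 c2 x := by
    intro b0 b1 b2 c0 c1 c2 x
    simp only [hgm, gmap, Function.iterate_succ, Function.iterate_zero, Function.comp_apply, id,
      map_add, map_mul]
    ring
  -- The forms of two parameter triples agree at `x` only if `g` of the difference kills `x`.
  have hdiff : ∀ b0 b1 b2 c0 c1 c2 x,
      (∀ y, Tr (y * g b0 b1 b2 x) = Tr (y * g c0 c1 c2 x)) →
      g (b0 - c0) (b1 - c1) (b2 - c2) x = 0 := by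
    intro b0 b1 b2 c0 c1 c2 x h
    apply hnondeg
    intro y
    have h1 := hgadd (b0 - c0) (b1 - c1) (b2 - c2) c0 c1 c2 x
    simp only [sub_add_cancel] at h1
    have h2 := h y
    rw [h1, mul_add, hTradd] at h2
    simpa using h2
  have hMsub : ∀ x y : K, x ^ q ^ 5 = x → y ^ q ^ 5 = y → (x - y) ^ q ^ 5 = x - y := by
    intro x y hx hy
    rw [← h5] at *
    have h := hadd 5 (x - y) y
    rw [sub_add_cancel, ← h5, ← h5 y, ← h5 (x - y)] at h
    linear_combination hx - hy - h
  refine ⟨hker, ?_, ?_, ?_, ?_⟩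
  · let M := {x : K // x ^ q ^ 5 = x}
    let f : M × K × M → (K → K → K) := fun b x y => Tr (y * g b.1 b.2.1 b.2.2 x)
    have hf : Function.Injective f := by
      rintro ⟨⟨b0, hb0⟩, b1, ⟨b2, hb2⟩⟩ ⟨⟨c0, hc0⟩, c1, ⟨c2, hc2⟩⟩ h
      by_contra hne
      have hk := hker (b0 - c0) (b1 - c1) (b2 - c2) (hMsub _ _ hb0 hc0) (hMsub _ _ hb2 hc2) (by
        rintro ⟨h0, h1, h2⟩
        apply hne
        rw [sub_eq_zero] at h0 h1 h2
        subst h0 h1 h2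
        rfl)
      have huniv : {x : K | g (b0 - c0) (b1 - c1) (b2 - c2) x = 0} = Set.univ := by
        ext x
        simp only [Set.mem_ofPred_eq, Set.mem_univ, iff_true]
        exact hdiff _ _ _ _ _ _ _ fun y => congrFun (congrFun h x) y
      rw [huniv, Nat.card_congr (Equiv.Set.univ K), Nat.card_eq_fintype_card, hK] at hk
      have hlt : q ^ 2 < q ^ 10 := Nat.pow_lt_pow_right (by omega) (by norm_num)
      exact absurd hk hlt.not_ge
    have hTf : T = Set.range f := by
      rw [hT]
      ext B
      constructor
      · rintro ⟨b0, b1, b2, hb0, hb2, rfl⟩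
        exact ⟨(⟨b0, hb0⟩, b1, ⟨b2, hb2⟩), rfl⟩
      · rintro ⟨⟨⟨b0, hb0⟩, b1, ⟨b2, hb2⟩⟩, rfl⟩
        exact ⟨b0, b1, b2, hb0, hb2, rfl⟩
    have hMcard : Nat.card M = q ^ 5 := by
      rw [Nat.card_eq_fintype_card, Fintype.card_subtype]
      exact card_subfield q hq2 hK hadd
    rw [hTf, ← Nat.card_congr (Equiv.ofInjective f hf), Nat.card_prod, Nat.card_prod, hMcard,
      Nat.card_eq_fintype_card, hK]
    ring
  · rw [hT]
    rintro _ ⟨b0, b1, b2, hb0, hb2, rfl⟩ _ ⟨c0, c1, c2, hc0, hc2, rfl⟩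
    refine ⟨b0 + c0, b1 + c1, b2 + c2, by rw [hadd, hb0, hc0], by rw [hadd, hb2, hc2], ?_⟩
    funext x y
    rw [hgadd, mul_add, hTradd]
  · rw [hT]
    rintro c hc _ ⟨b0, b1, b2, hb0, hb2, rfl⟩
    have hci : ∀ i, c ^ q ^ i = c := by
      intro i
      induction i with
      | zero => simp
      | succ i ih => rw [pow_succ, pow_mul, ih, hc]
    refine ⟨c * b0, c * b1, c * b2, by rw [mul_pow, hb0, hci], by rw [mul_pow, hb2, hci], ?_⟩
    funext x y
    have h1 : g (c * b0) (c * b1) (c * b2) x = c * g b0 b1 b2 x := by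
      simp only [hg, mul_pow, hci]
      ring
    rw [h1, show y * (c * g b0 b1 b2 x) = c * (y * g b0 b1 b2 x) by ring]
    simp only [hTr, mul_pow c, hci, Finset.mul_sum]
  · rw [hT]
    rintro _ ⟨b0, b1, b2, hb0, hb2, rfl⟩ _ ⟨c0, c1, c2, hc0, hc2, rfl⟩ hne
    refine le_trans (Nat.card_mono (Set.toFinite _) ?_)
      (hker (b0 - c0) (b1 - c1) (b2 - c2) (hMsub _ _ hb0 hc0) (hMsub _ _ hb2 hc2) ?_)
    · intro x hx
      exact hdiff _ _ _ _ _ _ _ hx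
    · rintro ⟨h0, h1, h2⟩
      apply hne
      rw [sub_eq_zero] at h0 h1 h2
      rw [h0, h1, h2]
end

section
/- Let L be a cyclic Galois extension of a field F of degree n, and suppose σ generates the Galois group of L over F. Let k be an integer with 1 ≤ k ≤ n, and let a_0, a_1, …, a_k be elements of L, not all zero. Then the F-linear transformation f of L defined by f(x) = a_0 x + a_1 σ(x) + … + a_k σ^k(x) has kernel of F-dimension at most k. -/
/-!
Induction on `k`, factoring out a right factor `σ - 1`.  If `u ≠ 0` lies in the kernel of
`f = ∑ i ≤ k + 1, a i σ ^ i`, then `y ↦ f (u y) = ∑ b i σ ^ i y` with `b i = a i σ ^ i u` kills `1`,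
i.e. `∑ b i = 0`, so summation by parts gives `f (u y) = -g (σ y - y)`, where `g = ∑ i ≤ k, B i σ ^ i`
has the partial sums `B i` of `b` as coefficients.  These are not all zero.  Hence
`x ↦ σ (x / u) - x / u` maps `ker f` into `ker g`, of dimension at most `k` by induction, and its
kernel is `F u`, because the elements fixed by the generator `σ` are those of `F`.
-/

/-- Abel summation. -/
lemma sum_by_parts_aux {L : Type*} [CommRing L] (b s : ℕ → L) (m : ℕ) :
    ∑ i ∈ Finset.range (m + 1), b i * s i =
      (∑ j ∈ Finset.range (m + 1), b j) * s m -
        ∑ i ∈ Finset.range m, (∑ j ∈ Finset.range (i + 1), b j) * (s (i + 1) - s i) := by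
  induction m with
  | zero => simp
  | succ m ih =>
    rw [Finset.sum_range_succ, ih, Finset.sum_range_succ b (m + 1),
      Finset.sum_range_succ (fun i => (∑ j ∈ Finset.range (i + 1), b j) * (s (i + 1) - s i)) m]
    ring

lemma mem_range_of_generator_fixed {F L : Type*} [Field F] [Field L] [Algebra F L]
    [FiniteDimensional F L] [IsGalois F L] (σ : L ≃ₐ[F] L)
    (hσ : ∀ τ : L ≃ₐ[F] L, τ ∈ Subgroup.zpowers σ) (x : L) (hx : σ x = x) :
    ∃ c : F, algebraMap F L c = x := by
  have h : ∀ τ : L ≃ₐ[F] L, τ x = x := by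
    have hle : Subgroup.zpowers σ ≤ MulAction.stabilizer (L ≃ₐ[F] L) x := by
      rw [Subgroup.zpowers_le]
      exact hx
    exact fun τ => hle (hσ τ)
  have := (IsGalois.mem_bot_iff_fixed (F := F) x).2 h
  exact IntermediateField.mem_bot.1 this

/-- The dimension bound for an arbitrary subspace `W` of the kernel, with the coefficients given by
a sequence and no upper bound on `k`; this is the form in which the induction runs. -/
lemma finrank_le_of_skew_poly_vanish {F L : Type*} [Field F] [Field L] [Algebra F L]
    [FiniteDimensional F L] [IsGalois F L] (σ : L ≃ₐ[F] L)
    (hσ : ∀ τ : L ≃ₐ[F] L, τ ∈ Subgroup.zpowers σ) (k : ℕ) :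
    ∀ (a : ℕ → L) (_ : ∃ i ≤ k, a i ≠ 0) (W : Submodule F L)
      (_ : ∀ x ∈ W, ∑ i ∈ Finset.range (k + 1), a i * (σ ^ i) x = 0),
      Module.finrank F W ≤ k := by
  induction k with
  | zero =>
    rintro a ⟨i, hi, hai⟩ W hW
    obtain rfl : i = 0 := by omega
    have : W = ⊥ := by
      rw [Submodule.eq_bot_iff]
      intro x hx
      simpa [hai] using hW x hx
    rw [this, finrank_bot]
  | succ k ih =>
    rintro a ⟨i, hi, hai⟩ W hW
    by_cases hbot : W = ⊥
    · rw [hbot, finrank_bot]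
      exact Nat.zero_le _
    obtain ⟨u, huW, hu⟩ := Submodule.exists_mem_ne_zero_of_ne_bot hbot
    set b : ℕ → L := fun j => a j * (σ ^ j) u with hb
    set B : ℕ → L := fun j => ∑ l ∈ Finset.range (j + 1), b l with hB
    have hBtop : B (k + 1) = 0 := hW u huW
    have hBne : ∃ j ≤ k, B j ≠ 0 := by
      by_contra! hall
      have hall' : ∀ j ≤ k + 1, B j = 0 := fun j hj => by
        rcases Nat.lt_or_ge k j with h | h
        · obtain rfl : j = k + 1 := by omega
          exact hBtop
        · exact hall j h
      have hbi : b i = 0 := by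
        cases i with
        | zero => simpa [hB] using hall' 0 hi
        | succ m =>
          have h1 : B (m + 1) = B m + b (m + 1) := Finset.sum_range_succ _ _
          rw [hall' _ hi, hall' m (by omega)] at h1
          simpa using h1.symm
      have : (σ ^ i) u ≠ 0 := (map_ne_zero_iff _ (σ ^ i).injective).2 hu
      exact mul_ne_zero hai this hbi
    -- `D x = σ (x / u) - x / u`
    let D : L →ₗ[F] L :=
      (σ.toLinearMap - LinearMap.id) ∘ₗ LinearMap.mulLeft F u⁻¹
    have hD : ∀ x, D x = σ (u⁻¹ * x) - u⁻¹ * x := fun x => rfl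
    have hW' := ih B hBne (W.map D) (by
      rintro _ ⟨x, hx, rfl⟩
      have h0 := sum_by_parts_aux b (fun j => (σ ^ j) (u⁻¹ * x)) (k + 1)
      have h1 : ∑ j ∈ Finset.range (k + 1 + 1), b j * (σ ^ j) (u⁻¹ * x) = 0 := by
        rw [← hW x hx]
        refine Finset.sum_congr rfl fun j _ => ?_
        rw [hb, mul_assoc, ← map_mul, mul_inv_cancel_left₀ hu]
      have h2 : ∑ l ∈ Finset.range (k + 1 + 1), b l = 0 := hBtop
      rw [h1, h2, zero_mul, zero_sub, eq_comm, neg_eq_zero] at h0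
      rw [← h0]
      refine Finset.sum_congr rfl fun j _ => ?_
      rw [hD, map_sub, pow_succ, AlgEquiv.mul_apply])
    have hrn := LinearMap.finrank_range_add_finrank_ker (D.domRestrict W)
    rw [LinearMap.range_domRestrict] at hrn
    have hker : Module.finrank F (LinearMap.ker (D.domRestrict W)) ≤ 1 := by
      refine finrank_le_one (⟨⟨u, huW⟩, ?_⟩ : LinearMap.ker (D.domRestrict W)) ?_
      · simp [hD, hu]
      · rintro ⟨⟨x, hx⟩, hxk⟩
        have hx0 : D x = 0 := hxk
        rw [hD, sub_eq_zero] at hx0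
        obtain ⟨c, hc⟩ := mem_range_of_generator_fixed σ hσ _ hx0
        refine ⟨c, Subtype.ext (Subtype.ext ?_)⟩
        change c • u = x
        rw [Algebra.smul_def, hc]
        field_simp
    omega

/-- Gow–Quinlan: in a cyclic Galois extension `L/F` of degree `n` with Galois group
generated by `σ`, an `F`-linear map `x ↦ a₀x + a₁σ(x) + ⋯ + a_k σ^k(x)` with not all
coefficients zero has kernel of `F`-dimension at most `k`. -/
theorem stmt_4 (F L : Type) [Field F] [Field L] [Algebra F L]
    [FiniteDimensional F L] [IsGalois F L] (n : ℕ) (hn : Module.finrank F L = n)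
    (σ : L ≃ₐ[F] L) (hσ : ∀ τ : L ≃ₐ[F] L, τ ∈ Subgroup.zpowers σ)
    (k : ℕ) (hk1 : 1 ≤ k) (hkn : k ≤ n)
    (a : Fin (k + 1) → L) (ha : ∃ i, a i ≠ 0)
    (f : L →ₗ[F] L) (hf : ∀ x, f x = ∑ i : Fin (k + 1), a i * (σ ^ (i : ℕ)) x) :
    Module.finrank F (LinearMap.ker f) ≤ k := by
  obtain ⟨i, hi⟩ := ha
  refine finrank_le_of_skew_poly_vanish σ hσ k
    (fun j => if h : j < k + 1 then a ⟨j, h⟩ else 0) ⟨i, by omega, by simpa only [i.isLt, dite_true] using hi⟩ _ ?_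
  intro x hx
  have hx0 := LinearMap.mem_ker.1 hx
  rw [hf] at hx0
  rw [Finset.sum_range]
  simpa only [Fin.is_lt, dite_true] using hx0
end
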